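/- arXiv:math-ph/0702051 — 6 statements merged into one kernel-verified Lean document; each statement's English description precedes it below -/
import Mathlib

section
/- (Theorem 2, case of vanishing diffusion with nonvanishing drift at the zeros.) Let p and q be π-periodic real trigonometric polynomials of degree at most 4, with p ≥ 0, p not identically zero, and suppose that q(θ̂) ≠ 0 for every θ̂ ∈ ℝ/πℤ with p(θ̂) = 0 (note p, being a nonnegative trigonometric polynomial of degree 4, has at most two zeros on ℝ/πℤ, each of even order). Then there exists exactly one pair (ρ, C), where C ∈ ℝ and ρ : ℝ/πℤ → [0,∞) is continuous with ∫_0^π ρ(θ) dθ = 1, such that ρ is continuously differentiable on the complement of the zero set of p and satisfies p ρ′ + (p′ − q) ρ = C there; moreover this ρ is C^∞ on all of ℝ/πℤ. -/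
/-!
Existence. For `ε > 0` the diffusion `p + ε` is strictly positive and the equation, written for the
flux variable `v = (p + ε) ρ` as `v' = q v / (p + ε) + C`, is solved explicitly (`regular_exists`).
Because `p' - q` does not vanish at the zeros of `p`, looking at the maximum of `ρ` bounds `ρ`, `v`
and `C` uniformly in `ε` (`approx_exists`), so Arzelà–Ascoli yields a limit `w` with
`w' = q w / p + c` off the zeros of `p` and `∫ w / p = 1` (`limit_exists`).

Regularity. At a zero of `p` where `a ≠ 0`, every continuous solution of `u' = a u / p + s`
satisfies `u / p → -s / a`, by L'Hôpital's rule applied to `(u e^{-A}) / (p e^{-A})` with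
`A' = a / p` (`tendsto_div_weight`). Hence `w / p` extends continuously to a groundstate, and by
induction on the order every continuous solution of `p y' = a y + f` with `a ≠ 0` at the zeros of
`p` is as smooth as `f` (`contDiff_of_ode`); so all groundstates are smooth and solve the equation
everywhere.

Uniqueness. The difference `w` of two groundstates has mean zero and solves the equation with some
constant `D`. If `D > 0`, `w` can cross zero only upwards, which contradicts periodicity and mean
zero; by symmetry `D = 0` (`const_nonpos`). If `D = 0` and `w ≠ 0`, then `w` takes both signs, and
every maximal interval on which `w` has one sign runs from a zero of `p` with `q > 0` to a zero of
`p` with `q < 0`. Two disjoint such intervals need at least three zeros of `p` per period, but `p`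
has at most two (`IsTrigPoly4.not_three_zeros`).
-/

/- Statement 7 (Theorem 2, vanishing diffusion with nonvanishing drift at the zeros):
for π-periodic trigonometric polynomial coefficients p ≥ 0 (not identically zero) and
q with q ≠ 0 at every zero of p, the once-integrated Fokker-Planck equation has a
unique continuous nonnegative normalized groundstate (ρ, C), which is moreover C^∞. -/

open MeasureTheory Real Set

namespace FokkerPlanck7

/-- A real trigonometric polynomial of degree at most 4 on `S¹_π = ℝ/πℤ`. -/
def IsTrigPoly4 (p : ℝ → ℝ) : Prop :=
  ∃ c : Fin 5 → ℝ, ∀ θ : ℝ,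
    p θ = c 0 + c 1 * Real.cos (2 * θ) + c 2 * Real.sin (2 * θ) +
      c 3 * Real.cos (4 * θ) + c 4 * Real.sin (4 * θ)

/-- The (weak) groundstate property: `ρ` is continuous, nonnegative, `π`-periodic and
normalized, is continuously differentiable away from the zero set of `p`, and solves
the once-integrated Fokker-Planck equation `p ρ' + (p' - q) ρ = C` there. -/
def IsGroundstateW (p q : ℝ → ℝ) (ρ : ℝ → ℝ) (C : ℝ) : Prop :=
  Continuous ρ ∧ Function.Periodic ρ π ∧ (∀ θ, 0 ≤ ρ θ) ∧
    (∫ θ in (0:ℝ)..π, ρ θ) = 1 ∧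
    ContDiffOn ℝ 1 ρ {θ | p θ ≠ 0} ∧
    ∀ θ, p θ ≠ 0 → p θ * deriv ρ θ + (deriv p θ - q θ) * ρ θ = C

section Auxiliary

open Filter Topology

/-! ### Degenerate first-order equations -/

/-- A smooth nonnegative function on the line whose zeros are isolated. -/
structure IsWeight (p : ℝ → ℝ) : Prop where
  smooth : ContDiff ℝ (⊤ : ℕ∞) p
  nonneg : ∀ x, 0 ≤ p x
  isolated : ∀ x, p x = 0 → ∀ᶠ y in 𝓝[≠] x, p y ≠ 0

lemma IsWeight.deriv_eq_zero {p : ℝ → ℝ} (hp : IsWeight p) {x : ℝ} (hx : p x = 0) :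
    deriv p x = 0 :=
  IsLocalMin.deriv_eq_zero (Eventually.of_forall fun y => by rw [hx]; exact hp.nonneg y)

lemma IsWeight.differentiable {p : ℝ → ℝ} (hp : IsWeight p) : Differentiable ℝ p :=
  hp.smooth.differentiable (by simp)

lemma IsWeight.continuous {p : ℝ → ℝ} (hp : IsWeight p) : Continuous p :=
  hp.smooth.continuous

lemma IsWeight.contDiff_deriv {p : ℝ → ℝ} (hp : IsWeight p) :
    ContDiff ℝ (⊤ : ℕ∞) (deriv p) :=
  (contDiff_infty_iff_deriv.1 hp.smooth).2

lemma IsWeight.pos {p : ℝ → ℝ} (hp : IsWeight p) {x : ℝ} (hx : p x ≠ 0) : 0 < p x :=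
  lt_of_le_of_ne (hp.nonneg x) (Ne.symm hx)

lemma IsWeight.comp_neg {p : ℝ → ℝ} (hp : IsWeight p) : IsWeight (fun x => p (-x)) where
  smooth := hp.smooth.comp contDiff_neg
  nonneg x := hp.nonneg _
  isolated x hx := by
    have h := hp.isolated (-x) hx
    have ht : Tendsto (fun y : ℝ => -y) (𝓝[≠] x) (𝓝[≠] (-x)) := by
      refine tendsto_nhdsWithin_iff.2 ⟨?_, ?_⟩
      · exact (continuous_neg.tendsto x).mono_left nhdsWithin_le_nhds
      · filter_upwards [self_mem_nhdsWithin] with y hy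
        simpa using hy
    exact ht.eventually h

/-- Since a weight grows at most linearly away from a zero, a function whose derivative is at
least a positive multiple of `1 / p` diverges logarithmically (or faster) there. -/
lemma tendsto_atBot_of_deriv {p b B : ℝ → ℝ} {x₀ c : ℝ} (hp : IsWeight p) (hx₀ : p x₀ = 0)
    (hc : 0 < c) (hB : ∀ᶠ x in 𝓝[>] x₀, HasDerivAt B (b x / p x) x)
    (hb : ∀ᶠ x in 𝓝[>] x₀, c ≤ b x) : Tendsto B (𝓝[>] x₀) atBot := by
  have hlin : ∀ᶠ x in 𝓝[>] x₀, p x ≤ 1 * (x - x₀) := by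
    have h1 := (hp.differentiable x₀).hasDerivAt
    rw [hp.deriv_eq_zero hx₀] at h1
    have h2 := h1.hasFDerivAt.isLittleO.def (zero_lt_one)
    filter_upwards [nhdsWithin_le_nhds h2, self_mem_nhdsWithin] with x hx hx'
    have hx'' : 0 < x - x₀ := sub_pos.2 hx'
    simp only [hx₀, sub_zero, Real.norm_eq_abs, abs_of_pos hx''] at hx
    simp at hx
    linarith [le_abs_self (p x)]
  have hpos : ∀ᶠ x in 𝓝[>] x₀, 0 < p x := by
    filter_upwards [(hp.isolated x₀ hx₀).filter_mono
      (nhdsWithin_mono _ fun y hy => ne_of_gt hy)] with x hx using hp.pos hx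
  obtain ⟨y, hy, hsub⟩ := mem_nhdsGT_iff_exists_Ioc_subset.1
    (hB.and (hb.and (hlin.and hpos)))
  have hy : x₀ < y := hy
  have hd : ∀ x ∈ Ioc x₀ y, HasDerivAt (fun x => B x - c * Real.log (x - x₀))
      (b x / p x - c * (1 / (x - x₀))) x := by
    intro x hx
    have := (hasDerivAt_id x).sub_const x₀
    have h3 := this.log (ne_of_gt (sub_pos.2 hx.1))
    exact (hsub hx).1.sub (h3.const_mul c)
  have hmono : MonotoneOn (fun x => B x - c * Real.log (x - x₀)) (Ioc x₀ y) := by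
    apply monotoneOn_of_deriv_nonneg (convex_Ioc _ _)
    · exact fun x hx => (hd x hx).continuousAt.continuousWithinAt
    · exact fun x hx => (hd x (interior_subset hx)).differentiableAt.differentiableWithinAt
    · intro x hx
      have hx := interior_subset hx
      rw [(hd x hx).deriv]
      obtain ⟨-, h1, h2, h3⟩ := hsub hx
      have hx'' : 0 < x - x₀ := sub_pos.2 hx.1
      have : c * (1 / (x - x₀)) ≤ b x / p x := by
        rw [mul_one_div]
        apply div_le_div₀ (by linarith) h1 h3 (by linarith)
      linarith
  have hlog : Tendsto (fun x => B y - c * Real.log (y - x₀) + c * Real.log (x - x₀))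
      (𝓝[>] x₀) atBot := by
    apply tendsto_atBot_add_const_left
    apply Tendsto.const_mul_atBot hc
    apply Real.tendsto_log_nhdsGT_zero.comp
    refine tendsto_nhdsWithin_iff.2 ⟨?_, ?_⟩
    · have : Tendsto (fun x : ℝ => x - x₀) (𝓝 x₀) (𝓝 (x₀ - x₀)) :=
        (continuous_id.sub continuous_const).tendsto x₀
      rw [sub_self] at this
      exact this.mono_left nhdsWithin_le_nhds
    · filter_upwards [self_mem_nhdsWithin] with x hx
      exact sub_pos.2 (mem_Ioi.1 hx)
  refine tendsto_atBot_mono' _ ?_ hlog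
  filter_upwards [Ioc_mem_nhdsGT hy] with x hx
  have := hmono hx ⟨hy, le_rfl⟩ hx.2
  simp only at this
  linarith

/-- L'Hôpital's rule at a one-sided limit when the denominator tends to `∞`; nothing is required of
the numerator. -/
lemma lhopital_atTop_nhdsGT {f g f' g' : ℝ → ℝ} {a L : ℝ}
    (hf : ∀ᶠ x in 𝓝[>] a, HasDerivAt f (f' x) x)
    (hg : ∀ᶠ x in 𝓝[>] a, HasDerivAt g (g' x) x)
    (hg' : ∀ᶠ x in 𝓝[>] a, g' x < 0) (hgt : Tendsto g (𝓝[>] a) atTop)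
    (hdiv : Tendsto (fun x => f' x / g' x) (𝓝[>] a) (𝓝 L)) :
    Tendsto (fun x => f x / g x) (𝓝[>] a) (𝓝 L) := by
  rw [Metric.tendsto_nhds]
  intro ε hε
  have hq : ∀ᶠ x in 𝓝[>] a, |f' x - L * g' x| ≤ ε / 2 * (- g' x) := by
    filter_upwards [Metric.tendsto_nhds.1 hdiv (ε / 2) (by positivity), hg'] with x hx hx'
    rw [Real.dist_eq] at hx
    have : f' x - L * g' x = (f' x / g' x - L) * g' x := by
      rw [sub_mul, div_mul_cancel₀ _ hx'.ne]
    rw [this, abs_mul, abs_of_neg hx']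
    exact mul_le_mul_of_nonneg_right hx.le (by linarith)
  obtain ⟨y, hy, hsub⟩ := mem_nhdsGT_iff_exists_Ioc_subset.1 (hf.and (hg.and hq))
  have hy : a < y := hy
  have hd : ∀ k : ℝ, ∀ x ∈ Ioc a y, HasDerivAt (fun x => f x - k * g x) (f' x - k * g' x) x :=
    fun k x hx => (hsub hx).1.sub ((hsub hx).2.1.const_mul k)
  have hmono : MonotoneOn (fun x => f x - (L + ε / 2) * g x) (Ioc a y) := by
    apply monotoneOn_of_deriv_nonneg (convex_Ioc _ _)
    · exact fun x hx => (hd _ x hx).continuousAt.continuousWithinAt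
    · exact fun x hx => (hd _ x (interior_subset hx)).differentiableAt.differentiableWithinAt
    · intro x hx
      have hx := interior_subset hx
      rw [(hd _ x hx).deriv]
      have := abs_le.1 (hsub hx).2.2
      linarith
  have hanti : AntitoneOn (fun x => f x - (L - ε / 2) * g x) (Ioc a y) := by
    apply antitoneOn_of_deriv_nonpos (convex_Ioc _ _)
    · exact fun x hx => (hd _ x hx).continuousAt.continuousWithinAt
    · exact fun x hx => (hd _ x (interior_subset hx)).differentiableAt.differentiableWithinAt
    · intro x hx
      have hx := interior_subset hx
      rw [(hd _ x hx).deriv]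
      have := abs_le.1 (hsub hx).2.2
      linarith
  set M₁ := f y - (L + ε / 2) * g y
  set M₂ := f y - (L - ε / 2) * g y
  filter_upwards [Ioc_mem_nhdsGT hy, hgt.eventually_gt_atTop 0,
    hgt.eventually_gt_atTop (2 * |M₁| / ε), hgt.eventually_gt_atTop (2 * |M₂| / ε)]
    with x hx h0 h1 h2
  have e1 := hmono hx ⟨hy, le_rfl⟩ hx.2
  have e2 := hanti hx ⟨hy, le_rfl⟩ hx.2
  simp only at e1 e2
  rw [div_lt_iff₀ hε] at h1 h2
  have := le_abs_self M₁
  have := neg_abs_le M₂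
  rw [Real.dist_eq, abs_lt]
  have : f x / g x - L = (f x - L * g x) / g x := by field_simp
  rw [this]
  constructor
  · rw [lt_div_iff₀ h0]; simp only [M₂] at *; linarith
  · rw [div_lt_iff₀ h0]; simp only [M₁] at *; linarith

/-- One-sided version of `tendsto_div_weight`. With `A' = a / p`, it is L'Hôpital's rule applied
to `(u e^{-A}) / (p e^{-A})`; the quotient of derivatives is `s / (p' - a)`. The sign of `a x₀`
decides whether the form is `0 / 0` or has a denominator tending to `∞`. -/
lemma tendsto_div_weight_right {p a s u : ℝ → ℝ} {x₀ : ℝ} (hp : IsWeight p) (hx₀ : p x₀ = 0)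
    (ha : Continuous a) (ha₀ : a x₀ ≠ 0) (hs : Continuous s) (hu : Continuous u)
    (hode : ∀ x, p x ≠ 0 → HasDerivAt u (a x * u x / p x + s x) x) :
    Tendsto (fun x => u x / p x) (𝓝[>] x₀) (𝓝 (-(s x₀) / a x₀)) := by
  have hpos : ∀ᶠ x in 𝓝[>] x₀, 0 < p x := by
    filter_upwards [(hp.isolated x₀ hx₀).filter_mono
      (nhdsWithin_mono _ fun y hy => ne_of_gt hy)] with x hx using hp.pos hx
  obtain ⟨y, hy, hsub⟩ := mem_nhdsGT_iff_exists_Ioo_subset.1 hpos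
  have hy : x₀ < y := hy
  set A : ℝ → ℝ := fun x => ∫ t in ((x₀ + y) / 2)..x, a t / p t with hA
  have hm : (x₀ + y) / 2 ∈ Ioo x₀ y := ⟨by linarith, by linarith⟩
  have hcont : ContinuousOn (fun t => a t / p t) (Ioo x₀ y) :=
    ha.continuousOn.div hp.continuous.continuousOn fun x hx => ne_of_gt (hsub hx)
  have hAd : ∀ x ∈ Ioo x₀ y, HasDerivAt A (a x / p x) x := by
    intro x hx
    apply intervalIntegral.integral_hasDerivAt_right
    · apply ContinuousOn.intervalIntegrable
      exact hcont.mono ((ordConnected_Ioo.uIcc_subset hm hx))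
    · exact hcont.stronglyMeasurableAtFilter isOpen_Ioo x hx
    · exact hcont.continuousAt (isOpen_Ioo.mem_nhds hx)
  have hAev : ∀ᶠ x in 𝓝[>] x₀, HasDerivAt A (a x / p x) x := by
    filter_upwards [Ioo_mem_nhdsGT hy] with x hx using hAd x hx
  have hpd : ∀ x, HasDerivAt p (deriv p x) x := fun x => (hp.differentiable x).hasDerivAt
  have hdp : Continuous (deriv p) := hp.contDiff_deriv.continuous
  have hF : ∀ᶠ x in 𝓝[>] x₀,
      HasDerivAt (fun x => u x * Real.exp (-A x)) (Real.exp (-A x) * s x) x := by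
    filter_upwards [hAev, hpos] with x h1 h2
    refine HasDerivAt.congr_deriv ((hode x h2.ne').mul h1.neg.exp) ?_
    simp only [Pi.neg_apply]
    field_simp
    ring
  have hG : ∀ᶠ x in 𝓝[>] x₀, HasDerivAt (fun x => p x * Real.exp (-A x))
      (Real.exp (-A x) * (deriv p x - a x)) x := by
    filter_upwards [hAev, hpos] with x h1 h2
    refine HasDerivAt.congr_deriv ((hpd x).mul h1.neg.exp) ?_
    simp only [Pi.neg_apply]
    field_simp
    ring
  have hlim : Tendsto (fun x => deriv p x - a x) (𝓝[>] x₀) (𝓝 (-a x₀)) := by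
    have : Tendsto (fun x => deriv p x - a x) (𝓝 x₀) (𝓝 (deriv p x₀ - a x₀)) :=
      (hdp.sub ha).tendsto x₀
    rw [hp.deriv_eq_zero hx₀, zero_sub] at this
    exact this.mono_left nhdsWithin_le_nhds
  have hdiv : Tendsto (fun x => (Real.exp (-A x) * s x) / (Real.exp (-A x) * (deriv p x - a x)))
      (𝓝[>] x₀) (𝓝 (-(s x₀) / a x₀)) := by
    have h1 : Tendsto (fun x => s x / (deriv p x - a x)) (𝓝[>] x₀) (𝓝 (s x₀ / (-a x₀))) :=
      ((hs.tendsto x₀).mono_left nhdsWithin_le_nhds).div hlim (neg_ne_zero.2 ha₀)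
    rw [div_neg, ← neg_div] at h1
    refine h1.congr fun x => ?_
    rw [mul_div_mul_left _ _ (Real.exp_pos _).ne']
  have hfin : Tendsto (fun x => (u x * Real.exp (-A x)) / (p x * Real.exp (-A x)))
      (𝓝[>] x₀) (𝓝 (-(s x₀) / a x₀)) := by
    have hat : Tendsto a (𝓝[>] x₀) (𝓝 (a x₀)) := (ha.tendsto x₀).mono_left nhdsWithin_le_nhds
    rcases lt_or_gt_of_ne ha₀ with hneg | hpos'
    · have hAtop : Tendsto (fun x => -A x) (𝓝[>] x₀) atBot := by
        refine tendsto_atBot_of_deriv (b := fun x => -a x) (c := -a x₀ / 2) hp hx₀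
          (by linarith) ?_ ?_
        · filter_upwards [hAev] with x hx
          refine HasDerivAt.congr_deriv (hx.neg) ?_
          ring
        · filter_upwards [hat.eventually_lt_const (show a x₀ < a x₀ / 2 by linarith)] with x hx
          linarith
      have hexp : Tendsto (fun x => Real.exp (-A x)) (𝓝[>] x₀) (𝓝 0) :=
        Real.tendsto_exp_atBot.comp hAtop
      refine HasDerivAt.lhopital_zero_nhdsGT hF hG ?_ ?_ ?_ hdiv
      · filter_upwards [hlim.eventually_ne (neg_ne_zero.2 ha₀)] with x hx
        exact mul_ne_zero (Real.exp_pos _).ne' hx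
      · simpa using ((hu.tendsto x₀).mono_left nhdsWithin_le_nhds).mul hexp
      · simpa using ((hp.continuous.tendsto x₀).mono_left nhdsWithin_le_nhds).mul hexp
    · refine lhopital_atTop_nhdsGT hF hG ?_ ?_ hdiv
      · filter_upwards [hlim.eventually_lt_const (show -a x₀ < 0 by linarith)] with x hx
        exact mul_neg_of_pos_of_neg (Real.exp_pos _) hx
      -- the logarithm of the denominator `p e^{-A}` has derivative `(p' - a) / p`
      · have hB : Tendsto (fun x => -(Real.log (p x) - A x)) (𝓝[>] x₀) atBot := by
          refine tendsto_atBot_of_deriv (b := fun x => a x - deriv p x) (c := a x₀ / 2) hp hx₀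
            (by linarith) ?_ ?_
          · filter_upwards [hAev, hpos] with x hx hx'
            refine HasDerivAt.congr_deriv ((((hpd x).log hx'.ne').sub hx).neg) ?_
            field_simp
            ring
          · filter_upwards [hlim.eventually_lt_const (show -a x₀ < -(a x₀ / 2) by linarith)]
              with x hx
            linarith
        have h2 := Real.tendsto_exp_atTop.comp (tendsto_neg_atBot_atTop.comp hB)
        refine h2.congr' ?_
        filter_upwards [hpos] with x hx
        simp only [Function.comp, neg_neg]
        rw [sub_eq_add_neg, Real.exp_add, Real.exp_log hx]
  refine hfin.congr fun x => ?_
  rw [mul_div_mul_right _ _ (Real.exp_pos _).ne']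

/-- At a zero of the weight `p` where the coefficient `a` does not vanish, any continuous solution of
`p u' = a u + p s` satisfies `u / p → -s / a`. -/
lemma tendsto_div_weight {p a s u : ℝ → ℝ} {x₀ : ℝ} (hp : IsWeight p) (hx₀ : p x₀ = 0)
    (ha : Continuous a) (ha₀ : a x₀ ≠ 0) (hs : Continuous s) (hu : Continuous u)
    (hode : ∀ x, p x ≠ 0 → HasDerivAt u (a x * u x / p x + s x) x) :
    Tendsto (fun x => u x / p x) (𝓝[≠] x₀) (𝓝 (-(s x₀) / a x₀)) := by
  rw [← nhdsLT_sup_nhdsGT, tendsto_sup]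
  refine ⟨?_, tendsto_div_weight_right hp hx₀ ha ha₀ hs hu hode⟩
  have h := tendsto_div_weight_right (x₀ := -x₀) (a := fun x => -a (-x)) (s := fun x => -s (-x))
    (u := fun x => u (-x)) hp.comp_neg (by simpa using hx₀) (by fun_prop) (by simpa using ha₀)
    (by fun_prop) (by fun_prop) (by
      intro x hx
      have h1 : HasDerivAt (fun x => u (-x)) _ x :=
        (hode (-x) hx).comp x (hasDerivAt_neg x)
      refine HasDerivAt.congr_deriv (h1) ?_
      ring)
  have ht : Tendsto (fun y : ℝ => -y) (𝓝[<] x₀) (𝓝[>] (-x₀)) := tendsto_neg_nhdsLT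
  have := h.comp ht
  simpa [Function.comp_def, neg_div, div_neg] using this

/-- A continuous solution of `p y' = a y + f`, with `a` nonzero at the zeros of the weight `p`,
is as regular as the source `f`. In the induction step the derivative `z = y'` solves
`p z' = (a - p') z + (a' y + f')`, and `tendsto_div_weight` for `u = a y + f = p y'` makes it
continuous across the zeros of `p`. -/
lemma contDiff_of_ode {p : ℝ → ℝ} (hp : IsWeight p) (n : ℕ) :
    ∀ a f y : ℝ → ℝ, ContDiff ℝ (⊤ : ℕ∞) a → (∀ x, p x = 0 → a x ≠ 0) → ContDiff ℝ n f →
      Continuous y → (∀ x, p x ≠ 0 → HasDerivAt y ((a x * y x + f x) / p x) x) →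
      ContDiff ℝ n y := by
  induction n with
  | zero =>
    intro a f y _ _ _ hy _
    exact contDiff_zero.2 hy
  | succ n ih =>
    intro a f y ha ha₀ hf hy hode
    have hf1 := contDiff_succ_iff_deriv.1 (show ContDiff ℝ ((n : WithTop ℕ∞) + 1) f by
      exact_mod_cast hf)
    have hfd : ∀ x, HasDerivAt f (deriv f x) x := fun x => (hf1.1 x).hasDerivAt
    have had : ∀ x, HasDerivAt a (deriv a x) x := fun x =>
      (ha.differentiable (by simp) x).hasDerivAt
    have hda : ContDiff ℝ (⊤ : ℕ∞) (deriv a) := (contDiff_infty_iff_deriv.1 ha).2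
    have hyn : ContDiff ℝ n y := ih a f y ha ha₀
      (hf.of_le (by exact_mod_cast Nat.le_succ n)) hy hode
    set s : ℝ → ℝ := fun x => deriv a x * y x + deriv f x with hs
    have hsn : ContDiff ℝ n s :=
      ((hda.of_le (by exact_mod_cast le_top)).mul hyn).add hf1.2.2
    set u : ℝ → ℝ := fun x => a x * y x + f x with hu
    have huc : Continuous u := (ha.continuous.mul hy).add hf.continuous
    have hud : ∀ x, p x ≠ 0 → HasDerivAt u (a x * u x / p x + s x) x := by
      intro x hx
      refine HasDerivAt.congr_deriv (((had x).mul (hode x hx)).add (hfd x)) ?_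
      simp only [hs, hu]
      ring
    have hlim : ∀ x, p x = 0 →
        Tendsto (fun t => u t / p t) (𝓝[≠] x) (𝓝 (-(s x) / a x)) := fun x hx =>
      tendsto_div_weight hp hx ha.continuous (ha₀ x hx) hsn.continuous huc hud
    set z : ℝ → ℝ := fun x => if p x = 0 then -(s x) / a x else u x / p x with hz
    have hzne : ∀ x, p x ≠ 0 → z =ᶠ[𝓝 x] fun t => u t / p t := by
      intro x hx
      filter_upwards [hp.continuous.continuousAt.eventually_ne hx] with t ht
      simp [hz, ht]
    have hz0 : ∀ x, p x = 0 → Tendsto z (𝓝[≠] x) (𝓝 (z x)) := by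
      intro x hx
      have : z x = -(s x) / a x := by simp [hz, hx]
      rw [this]
      refine (hlim x hx).congr' ?_
      filter_upwards [hp.isolated x hx] with t ht
      simp [hz, ht]
    have hzc : Continuous z := by
      rw [continuous_iff_continuousAt]
      intro x
      by_cases hx : p x = 0
      · exact continuousAt_iff_punctured_nhds.2 (hz0 x hx)
      · exact (huc.continuousAt.div hp.continuous.continuousAt hx).congr (hzne x hx).symm
    have hyz : ∀ x, HasDerivAt y (z x) x := by
      intro x
      by_cases hx : p x = 0
      · have hev : ∀ᶠ t in 𝓝[≠] x, HasDerivAt y (z t) t := by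
          filter_upwards [hp.isolated x hx] with t ht
          simpa [hz, ht] using hode t ht
        have hder : Tendsto (fun t => deriv y t) (𝓝[≠] x) (𝓝 (z x)) := by
          refine (hz0 x hx).congr' ?_
          filter_upwards [hev] with t ht using ht.deriv.symm
        have hgt : 𝓝[>] x ≤ 𝓝[≠] x := nhdsWithin_mono _ fun t ht => ne_of_gt ht
        have hlt : 𝓝[<] x ≤ 𝓝[≠] x := nhdsWithin_mono _ fun t ht => ne_of_lt ht
        have hR : HasDerivWithinAt y (z x) (Ici x) x :=
          hasDerivWithinAt_Ici_of_tendsto_deriv (s := {t | HasDerivAt y (z t) t})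
            (fun t ht => HasDerivAt.differentiableAt ht |>.differentiableWithinAt)
            hy.continuousWithinAt (hgt hev) (hder.mono_left hgt)
        have hL : HasDerivWithinAt y (z x) (Iic x) x :=
          hasDerivWithinAt_Iic_of_tendsto_deriv (s := {t | HasDerivAt y (z t) t})
            (fun t ht => HasDerivAt.differentiableAt ht |>.differentiableWithinAt)
            hy.continuousWithinAt (hlt hev) (hder.mono_left hlt)
        simpa using hL.union hR
      · simpa [hz, hx] using hode x hx
    have hzn : ContDiff ℝ n z := by
      refine ih (fun x => a x - deriv p x) s z (ha.sub hp.contDiff_deriv) ?_ hsn hzc ?_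
      · intro x hx
        simpa [hp.deriv_eq_zero hx] using ha₀ x hx
      · intro x hx
        have h1 := (hud x hx).div (hp.differentiable x).hasDerivAt hx
        refine HasDerivAt.congr_of_eventuallyEq ?_ (hzne x hx)
        refine HasDerivAt.congr_deriv (h1) ?_
        simp only [hz, hx, if_false]
        field_simp
        ring
    have hdy : deriv y = z := funext fun x => (hyz x).deriv
    have : ContDiff ℝ ((n : WithTop ℕ∞) + 1) y := by
      rw [contDiff_succ_iff_deriv]
      refine ⟨fun x => (hyz x).differentiableAt, by simp, ?_⟩
      rw [hdy]
      exact hzn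
    exact_mod_cast this

/-! ### Trigonometric polynomials -/

lemma IsTrigPoly4.analytic {p : ℝ → ℝ} (hp : IsTrigPoly4 p) : AnalyticOnNhd ℝ p univ := by
  obtain ⟨c, hc⟩ := hp
  rw [show p = _ from funext hc]
  intro x _
  fun_prop

lemma IsTrigPoly4.contDiff {p : ℝ → ℝ} (hp : IsTrigPoly4 p) : ContDiff ℝ (⊤ : ℕ∞) p := by
  obtain ⟨c, hc⟩ := hp
  rw [show p = _ from funext hc]
  fun_prop

lemma IsTrigPoly4.periodic {p : ℝ → ℝ} (hp : IsTrigPoly4 p) : Function.Periodic p π := by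
  obtain ⟨c, hc⟩ := hp
  intro x
  have h2 : 2 * (x + π) = 2 * x + 2 * π := by ring
  have h4 : 4 * (x + π) = 4 * x + 2 * π + 2 * π := by ring
  simp only [hc, h2, h4, Real.cos_add_two_pi, Real.sin_add_two_pi]

lemma IsTrigPoly4.isWeight {p : ℝ → ℝ} (hp : IsTrigPoly4 p) (h0 : ∀ x, 0 ≤ p x)
    (hne : ∃ x, p x ≠ 0) : IsWeight p where
  smooth := hp.contDiff
  nonneg := h0
  isolated x _ := by
    by_contra hcon
    have hfreq : ∃ᶠ y in 𝓝[≠] x, p y = 0 :=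
      (Filter.not_eventually.1 hcon).mono fun y hy => not_not.1 hy
    obtain ⟨y, hy⟩ := hne
    exact hy (hp.analytic.eqOn_zero_of_preconnected_of_frequently_eq_zero isPreconnected_univ
      (mem_univ x) hfreq (mem_univ y))

lemma IsTrigPoly4.ae_ne_zero {p : ℝ → ℝ} (hp : IsTrigPoly4 p) (hne : ∃ x, p x ≠ 0) :
    ∀ᵐ x : ℝ, p x ≠ 0 := by
  obtain ⟨y, hy⟩ := hne
  have h := hp.analytic.preimage_zero_mem_codiscrete hy
  have h2 := ae_restrict_le_codiscreteWithin (μ := (volume : Measure ℝ)) MeasurableSet.univ h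
  rw [Measure.restrict_univ] at h2
  filter_upwards [h2] with x hx
  simpa using hx

lemma IsTrigPoly4.shift {p : ℝ → ℝ} (hp : IsTrigPoly4 p) (β : ℝ) :
    IsTrigPoly4 (fun t => p (β + t)) := by
  obtain ⟨c, hc⟩ := hp
  refine ⟨![c 0, c 1 * Real.cos (2 * β) + c 2 * Real.sin (2 * β),
    c 2 * Real.cos (2 * β) - c 1 * Real.sin (2 * β),
    c 3 * Real.cos (4 * β) + c 4 * Real.sin (4 * β),
    c 4 * Real.cos (4 * β) - c 3 * Real.sin (4 * β)], fun t => ?_⟩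
  simp only [hc, mul_add, Real.cos_add, Real.sin_add]
  simp
  ring

/-- A nonnegative trigonometric polynomial with a zero at the origin is `sin² t` times a
quadratic form in `(cos t, sin t)`. -/
lemma IsTrigPoly4.factor {p : ℝ → ℝ} (hp : IsTrigPoly4 p) (h0 : ∀ x, 0 ≤ p x) (hz : p 0 = 0) :
    ∃ A B E : ℝ, ∀ t, p t = Real.sin t ^ 2 *
      (A * Real.cos t ^ 2 + B * (Real.cos t * Real.sin t) + E * Real.sin t ^ 2) := by
  obtain ⟨c, hc⟩ := hp
  have hd : deriv p 0 = 0 :=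
    IsLocalMin.deriv_eq_zero (Eventually.of_forall fun y => by rw [hz]; exact h0 y)
  have hd2 : HasDerivAt p (2 * c 2 + 4 * c 4) 0 := by
    rw [show p = _ from funext hc]
    have e2 : HasDerivAt (fun x : ℝ => 2 * x) 2 0 := by simpa using (hasDerivAt_id (0:ℝ)).const_mul 2
    have e4 : HasDerivAt (fun x : ℝ => 4 * x) 4 0 := by simpa using (hasDerivAt_id (0:ℝ)).const_mul 4
    refine HasDerivAt.congr_deriv (((((e2.cos.const_mul (c 1)).const_add (c 0)).add
      (e2.sin.const_mul (c 2))).add (e4.cos.const_mul (c 3))).add (e4.sin.const_mul (c 4))) ?_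
    simp
    ring
  have k1 : 2 * c 2 + 4 * c 4 = 0 := by rw [← hd2.deriv, hd]
  have k0 : c 0 + c 1 + c 3 = 0 := by
    have := hc 0
    simp [hz] at this
    linarith
  refine ⟨-2 * c 1 - 8 * c 3, -8 * c 4, -2 * c 1, fun t => ?_⟩
  have e0 : c 0 = - c 1 - c 3 := by linarith
  have e2 : c 2 = -2 * c 4 := by linarith
  have h4 : (4 : ℝ) * t = 2 * (2 * t) := by ring
  rw [hc, e0, e2, h4, Real.sin_two_mul (2 * t), Real.cos_two_mul (2 * t), Real.sin_two_mul t,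
    Real.cos_two_mul t]
  linear_combination (c 1 * (2 + 2 * Real.sin t ^ 2) + 8 * c 3 * Real.cos t ^ 2 +
    8 * c 4 * Real.sin t * Real.cos t) * Real.sin_sq_add_cos_sq t

/-- A nonzero nonnegative `p` has at most two zeros on the circle `ℝ / πℤ`: after dividing out
`sin² (θ - β)`, a nonnegative quadratic form remains, and it vanishes on at most one line. -/
lemma IsTrigPoly4.not_three_zeros {p : ℝ → ℝ} (hp : IsTrigPoly4 p) (h0 : ∀ x, 0 ≤ p x)
    (hne : ∃ x, p x ≠ 0) {β γ δ : ℝ} (hβγ : β < γ) (hγδ : γ < δ) (hδβ : δ < β + π)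
    (hβ : p β = 0) (hγ : p γ = 0) (hδ : p δ = 0) : False := by
  obtain ⟨A, B, E, hf⟩ := (hp.shift β).factor (fun x => h0 _) (by simpa using hβ)
  have hform : ∀ t, 0 < t → t < π → p (β + t) = Real.sin t ^ 4 *
      (A * (Real.cos t / Real.sin t) ^ 2 + B * (Real.cos t / Real.sin t) + E) := by
    intro t h1 h2
    have := Real.sin_pos_of_pos_of_lt_pi h1 h2
    rw [hf]
    field_simp
  have hnn : ∀ k : ℝ, 0 ≤ A * k ^ 2 + B * k + E := by
    intro k
    have hb1 := Real.neg_pi_div_two_lt_arctan k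
    have hb2 := Real.arctan_lt_pi_div_two k
    have h1 : 0 < π / 2 - Real.arctan k := by linarith
    have h2 : π / 2 - Real.arctan k < π := by linarith
    have h3 := hform _ h1 h2
    have h4 := h0 (β + (π / 2 - Real.arctan k))
    rw [h3, Real.cos_pi_div_two_sub, Real.sin_pi_div_two_sub, ← Real.tan_eq_sin_div_cos,
      Real.tan_arctan] at h4
    exact nonneg_of_mul_nonneg_right h4 (by have := Real.cos_arctan_pos k; positivity)
  have hzero : ∀ θ, β < θ → θ < β + π → p θ = 0 →
      A * (Real.cos (θ - β) / Real.sin (θ - β)) ^ 2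
        + B * (Real.cos (θ - β) / Real.sin (θ - β)) + E = 0 := by
    intro θ h1 h2 h3
    have h4 := hform (θ - β) (by linarith) (by linarith)
    have := Real.sin_pos_of_pos_of_lt_pi (x := θ - β) (by linarith) (by linarith)
    rw [add_sub_cancel, h3] at h4
    rcases mul_eq_zero.1 h4.symm with h5 | h5
    · exact absurd h5 (by positivity)
    · exact h5
  have z1 := hzero γ hβγ (by linarith) hγ
  have z2 := hzero δ (by linarith) hδβ hδ
  have s1 := Real.sin_pos_of_pos_of_lt_pi (x := γ - β) (by linarith) (by linarith)
  have s2 := Real.sin_pos_of_pos_of_lt_pi (x := δ - β) (by linarith) (by linarith)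
  -- the cotangent separates the two zeros
  have hk : Real.cos (γ - β) / Real.sin (γ - β) ≠ Real.cos (δ - β) / Real.sin (δ - β) := by
    intro h
    rw [div_eq_div_iff s1.ne' s2.ne'] at h
    have h5 : Real.sin ((δ - β) - (γ - β)) = 0 := by
      rw [Real.sin_sub]
      linarith
    have := Real.sin_pos_of_pos_of_lt_pi (x := (δ - β) - (γ - β)) (by linarith) (by linarith)
    linarith
  set k₁ := Real.cos (γ - β) / Real.sin (γ - β)
  set k₂ := Real.cos (δ - β) / Real.sin (δ - β)
  have hsum : A * (k₁ + k₂) + B = 0 := by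
    have : (k₁ - k₂) * (A * (k₁ + k₂) + B) = 0 := by linear_combination z1 - z2
    exact (mul_eq_zero.1 this).resolve_left (sub_ne_zero.2 hk)
  have hA1 : A ≤ 0 := by
    have h6 := hnn ((k₁ + k₂) / 2)
    have h7 : A * ((k₁ + k₂) / 2) ^ 2 + B * ((k₁ + k₂) / 2) + E = -(A * ((k₁ - k₂) ^ 2 / 4)) := by
      linear_combination (z1 + z2) / 2
    rw [h7] at h6
    have : 0 < (k₁ - k₂) ^ 2 / 4 := by have := sub_ne_zero.2 hk; positivity
    nlinarith
  have hA2 : 0 ≤ A := by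
    have h6 := hnn (2 * k₁ - k₂)
    have h7 : A * (2 * k₁ - k₂) ^ 2 + B * (2 * k₁ - k₂) + E = A * (2 * (k₁ - k₂) ^ 2) := by
      linear_combination 2 * z1 - z2
    rw [h7] at h6
    have : 0 < 2 * (k₁ - k₂) ^ 2 := by have := sub_ne_zero.2 hk; positivity
    nlinarith
  have hA : A = 0 := le_antisymm hA1 hA2
  have hB : B = 0 := by simpa [hA] using hsum
  have hE : E = 0 := by simpa [hA, hB] using z1
  obtain ⟨x, hx⟩ := hne
  apply hx
  have := hf (x - β)
  simpa [hA, hB, hE] using this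

/-! ### Smoothness and uniqueness -/

/-- A groundstate is smooth, and by continuity it solves the equation at the zeros of `p` too. -/
lemma IsGroundstateW.smooth {p q ρ : ℝ → ℝ} {C : ℝ} (hp : IsWeight p)
    (hq : ContDiff ℝ (⊤ : ℕ∞) q) (hq0 : ∀ x, p x = 0 → q x ≠ 0) (h : IsGroundstateW p q ρ C) :
    ContDiff ℝ (⊤ : ℕ∞) ρ ∧ ∀ x, p x * deriv ρ x + (deriv p x - q x) * ρ x = C := by
  obtain ⟨hc, -, -, -, hd, heq⟩ := h
  have hopen : IsOpen {θ | p θ ≠ 0} := isOpen_ne_fun hp.continuous continuous_const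
  have hsm : ContDiff ℝ (⊤ : ℕ∞) ρ := by
    refine contDiff_infty.2 fun n => ?_
    refine contDiff_of_ode hp n (fun x => q x - deriv p x) (fun _ => C) ρ
      (hq.sub hp.contDiff_deriv) ?_ contDiff_const hc ?_
    · intro x hx
      simpa [hp.deriv_eq_zero hx] using hq0 x hx
    · intro x hx
      have hdx : DifferentiableAt ℝ ρ x :=
        (hd.differentiableOn (by simp)).differentiableAt (hopen.mem_nhds hx)
      refine hdx.hasDerivAt.congr_deriv ?_
      rw [eq_div_iff hx, ← heq x hx]
      ring
  refine ⟨hsm, fun x => ?_⟩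
  by_cases hx : p x = 0
  · have hcont : Continuous fun x => p x * deriv ρ x + (deriv p x - q x) * ρ x :=
      (hp.continuous.mul (contDiff_infty_iff_deriv.1 hsm).2.continuous).add
        ((hp.contDiff_deriv.continuous.sub hq.continuous).mul hc)
    have h1 := (hcont.tendsto x).mono_left (nhdsWithin_le_nhds (s := {x}ᶜ))
    refine tendsto_nhds_unique h1 (tendsto_const_nhds.congr' ?_)
    filter_upwards [hp.isolated x hx] with t ht using (heq t ht).symm
  · exact heq x hx

lemma eq_zero_of_nonneg_on_period {w : ℝ → ℝ} (hw : Continuous w) (hper : Function.Periodic w π)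
    (hint : ∫ θ in (0 : ℝ)..π, w θ = 0) {x : ℝ} (hnn : ∀ t ∈ Icc x (x + π), 0 ≤ w t) (t : ℝ) :
    w t = 0 := by
  have hall : ∀ t, 0 ≤ w t := by
    intro t
    obtain ⟨y, hy, hty⟩ := hper.exists_mem_Ico Real.pi_pos t x
    rw [hty]
    exact hnn y ⟨hy.1, hy.2.le⟩
  by_contra hne
  have hpos : 0 < ∫ θ in t..(t + π), w θ :=
    intervalIntegral.integral_pos (by linarith [Real.pi_pos]) hw.continuousOn
      (fun y _ => hall y) ⟨t, ⟨le_rfl, by linarith [Real.pi_pos]⟩, lt_of_le_of_ne (hall t) (Ne.symm hne)⟩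
  have := hper.intervalIntegral_add_eq t 0
  rw [zero_add] at this
  linarith

/-- The left end of a positivity interval of a solution of `(p w)' = q w` is a zero of `p`, by
uniqueness for the regular equation, and there `q > 0`: otherwise `p w` would decrease from `0`. -/
lemma exists_left_zero {p q w : ℝ → ℝ} (hp : IsWeight p) (hq : Continuous q)
    (hq0 : ∀ x, p x = 0 → q x ≠ 0) (hw : Differentiable ℝ w)
    (heq : ∀ x, p x * deriv w x + (deriv p x - q x) * w x = 0) {x z : ℝ} (hzx : z < x)
    (hz : w z = 0) (hx : 0 < w x) :
    ∃ α < x, w α = 0 ∧ p α = 0 ∧ 0 < q α ∧ ∀ t ∈ Ioc α x, 0 < w t := by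
  have hwc : Continuous w := hw.continuous
  have hK : IsCompact (Icc z x ∩ {t | w t = 0}) :=
    isCompact_Icc.inter_right (isClosed_eq hwc continuous_const)
  obtain ⟨α, ⟨⟨hzα, hαx⟩, hα0⟩, hαmax⟩ := hK.exists_isGreatest ⟨z, ⟨le_rfl, hzx.le⟩, hz⟩
  have hα0 : w α = 0 := hα0
  have hαx : α < x := lt_of_le_of_ne hαx fun h => by rw [h] at hα0; linarith
  have hpos : ∀ t ∈ Ioc α x, 0 < w t := by
    intro t ht
    by_contra hneg
    obtain ⟨r, hr, hr0⟩ := intermediate_value_Icc ht.2 hwc.continuousOn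
      (show (0 : ℝ) ∈ Icc (w t) (w x) from ⟨not_lt.1 hneg, hx.le⟩)
    have := hαmax ⟨⟨by linarith [ht.1, hr.1], hr.2⟩, hr0⟩
    linarith [ht.1, hr.1]
  have hpα : p α = 0 := by
    by_contra hpne
    have hbc : ContinuousAt (fun t => (q t - deriv p t) / p t) α :=
      (hq.sub hp.contDiff_deriv.continuous).continuousAt.div hp.continuous.continuousAt hpne
    set K := |(q α - deriv p α) / p α| + 1 with hKdef
    have hev : ∀ᶠ t in 𝓝 α, |(q t - deriv p t) / p t| < K ∧ p t ≠ 0 :=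
      (hbc.abs.eventually_lt_const (by simp [hKdef])).and
        (hp.continuous.continuousAt.eventually_ne hpne)
    obtain ⟨y, hy, hsub⟩ := mem_nhdsGE_iff_exists_Ico_subset.1
      (nhdsWithin_le_nhds hev : {t | |(q t - deriv p t) / p t| < K ∧ p t ≠ 0} ∈ 𝓝[≥] α)
    have hy : α < y := hy
    have hzero := eq_zero_of_abs_deriv_le_mul_abs_self_of_eq_zero_right (f := w) (f' := deriv w)
      (K := K) (a := α) (b := y) hwc.continuousOn
      (fun t _ => (hw t).hasDerivAt.hasDerivWithinAt) hα0 (by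
        intro t ht
        obtain ⟨h1, h2⟩ := hsub ht
        have h3 : deriv w t = (q t - deriv p t) / p t * w t := by
          field_simp
          linear_combination heq t
        rw [h3, norm_mul]
        exact mul_le_mul_of_nonneg_right h1.le (norm_nonneg _))
    have h1 := hzero (min x y) ⟨le_min hαx.le hy.le, min_le_right _ _⟩
    have h2 := hpos (min x y) ⟨lt_min hαx hy, min_le_left _ _⟩
    linarith
  refine ⟨α, hαx, hα0, hpα, ?_, hpos⟩
  by_contra hqneg
  have hqneg : q α < 0 := lt_of_le_of_ne (not_lt.1 hqneg) (hq0 α hpα)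
  have hev : ∀ᶠ t in 𝓝[>] α, q t < 0 ∧ p t ≠ 0 :=
    ((hq.continuousAt.eventually_lt_const hqneg).filter_mono nhdsWithin_le_nhds).and
      ((hp.isolated α hpα).filter_mono (nhdsWithin_mono _ fun y hy => ne_of_gt hy))
  obtain ⟨y, hy, hsub⟩ := mem_nhdsGT_iff_exists_Ioc_subset.1 hev
  have hy : α < y := hy
  have hvd : ∀ t, HasDerivAt (fun t => p t * w t) (q t * w t) t := by
    intro t
    refine HasDerivAt.congr_deriv ((hp.differentiable t).hasDerivAt.mul (hw t).hasDerivAt) ?_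
    linear_combination heq t
  have hmin : α < min x y := lt_min hαx hy
  have hanti : AntitoneOn (fun t => p t * w t) (Icc α (min x y)) := by
    apply antitoneOn_of_deriv_nonpos (convex_Icc _ _)
    · exact fun t _ => (hvd t).continuousAt.continuousWithinAt
    · exact fun t _ => (hvd t).differentiableAt.differentiableWithinAt
    · intro t ht
      rw [interior_Icc] at ht
      rw [(hvd t).deriv]
      have h1 := (hsub ⟨ht.1, ht.2.le.trans (min_le_right _ _)⟩).1
      have h2 := hpos t ⟨ht.1, ht.2.le.trans (min_le_left _ _)⟩
      nlinarith
  have h1 := hanti ⟨le_rfl, hmin.le⟩ ⟨hmin.le, le_rfl⟩ hmin.le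
  simp only [hpα, zero_mul] at h1
  have h2 := hpos (min x y) ⟨hmin, min_le_left _ _⟩
  have h3 := hp.pos (hsub ⟨hmin, min_le_right _ _⟩).2
  nlinarith

lemma exists_right_zero {p q w : ℝ → ℝ} (hp : IsWeight p) (hq : Continuous q)
    (hq0 : ∀ x, p x = 0 → q x ≠ 0) (hw : Differentiable ℝ w)
    (heq : ∀ x, p x * deriv w x + (deriv p x - q x) * w x = 0) {x z : ℝ} (hxz : x < z)
    (hz : w z = 0) (hx : 0 < w x) :
    ∃ β > x, w β = 0 ∧ p β = 0 ∧ q β < 0 ∧ ∀ t ∈ Ico x β, 0 < w t := by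
  obtain ⟨α, h1, h2, h3, h4, h5⟩ := exists_left_zero (q := fun x => -q (-x))
    (w := fun x => w (-x)) (x := -x) (z := -z) hp.comp_neg (by fun_prop)
    (fun t ht => neg_ne_zero.2 (hq0 _ ht)) (by fun_prop)
    (by
      intro t
      rw [deriv_comp_neg, deriv_comp_neg]
      linear_combination -heq (-t))
    (by linarith) (by simpa using hz) (by simpa using hx)
  refine ⟨-α, by linarith, h2, h3, by simpa using h4, fun t ht => ?_⟩
  simpa using h5 (-t) ⟨by linarith [ht.2], by linarith [ht.1]⟩

/-- The constant of a solution of mean zero cannot be positive: at a zero of `w` one would have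
`p w' = D > 0`, so `w` could only cross zero upwards and would keep one sign over a period. -/
lemma const_nonpos {p q w : ℝ → ℝ} {D : ℝ} (hp : IsWeight p) (hw : Differentiable ℝ w)
    (heq : ∀ x, p x * deriv w x + (deriv p x - q x) * w x = D) (hper : Function.Periodic w π)
    (hint : ∫ θ in (0 : ℝ)..π, w θ = 0) : D ≤ 0 := by
  by_contra hD
  have hD : 0 < D := not_le.1 hD
  have hnz : ¬ ∀ t, w t = 0 := by
    intro h
    have h0 : w = fun _ => 0 := funext h
    have := heq 0
    rw [h0] at this
    simp at this
    linarith
  have hex : ∃ x, 0 ≤ w x := by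
    by_contra hneg
    push Not at hneg
    apply hnz
    intro t
    have := eq_zero_of_nonneg_on_period (w := fun t => -w t) (x := 0) (by have := hw.continuous; fun_prop)
      (fun t => by simp [hper t]) (by simp [hint]) (fun t _ => by linarith [hneg t]) t
    linarith
  obtain ⟨x, hx⟩ := hex
  refine hnz (eq_zero_of_nonneg_on_period (x := x) hw.continuous hper hint ?_)
  refine image_le_of_deriv_right_lt_deriv_boundary (f := fun _ => 0) (f' := fun _ => 0)
    continuousOn_const (fun t _ => hasDerivWithinAt_const _ _ _) hx
    (fun t => (hw t).hasDerivAt) ?_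
  intro t _ ht
  have h1 := heq t
  rw [← ht, mul_zero, add_zero] at h1
  by_contra h2
  nlinarith [hp.nonneg t, not_lt.1 h2]

/-- A solution of mean zero with vanishing constant is zero. A positive and a negative value on
one period would each sit between a zero of `p` with `q > 0` on the left and one with `q < 0` on
the right, producing at least three zeros of `p` per period. -/
lemma eq_zero_of_homogeneous {p q w : ℝ → ℝ} (hpt : IsTrigPoly4 p) (hne : ∃ x, p x ≠ 0)
    (hp : IsWeight p) (hq : Continuous q)
    (hq0 : ∀ x, p x = 0 → q x ≠ 0) (hw : Differentiable ℝ w)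
    (heq : ∀ x, p x * deriv w x + (deriv p x - q x) * w x = 0) (hper : Function.Periodic w π)
    (hint : ∫ θ in (0 : ℝ)..π, w θ = 0) (t : ℝ) : w t = 0 := by
  by_contra hnz
  have hwc := hw.continuous
  have hpos : ∃ x, 0 < w x := by
    by_contra hcon
    push Not at hcon
    have := eq_zero_of_nonneg_on_period (w := fun t => -w t) (x := 0) (by fun_prop)
      (fun t => by simp [hper t]) (by simp [hint]) (fun t _ => by linarith [hcon t]) t
    exact hnz (by linarith)
  have hneg : ∃ x, w x < 0 := by
    by_contra hcon
    push Not at hcon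
    exact hnz (eq_zero_of_nonneg_on_period (x := 0) hwc hper hint (fun t _ => hcon t) t)
  obtain ⟨x, hx⟩ := hpos
  obtain ⟨y₀, hy₀⟩ := hneg
  obtain ⟨y, hyI, hyw⟩ := hper.exists_mem_Ico Real.pi_pos y₀ x
  have hy : w y < 0 := by rwa [← hyw]
  have hxy : x < y := lt_of_le_of_ne hyI.1 fun h => by rw [← h] at hy; linarith
  have hxπ : 0 < w (x + π) := by rwa [hper x]
  obtain ⟨z, hzI, hz⟩ := intermediate_value_Icc' hxy.le hwc.continuousOn
    (show (0 : ℝ) ∈ Icc (w y) (w x) from ⟨hy.le, hx.le⟩)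
  have hxz : x < z := lt_of_le_of_ne hzI.1 fun h => by rw [← h] at hz; linarith
  have hzy : z < y := lt_of_le_of_ne hzI.2 fun h => by rw [h] at hz; linarith
  have heq' : ∀ x, p x * deriv (fun t => -w t) x + (deriv p x - q x) * (-w x) = 0 := by
    intro x
    rw [deriv.fun_neg]
    linear_combination -heq x
  obtain ⟨β, hβx, hβ0, hpβ, hqβ, hβpos⟩ := exists_right_zero hp hq hq0 hw heq hxz hz hx
  obtain ⟨γ, hγy, hγ0, hpγ, hqγ, hγneg⟩ := exists_left_zero (w := fun t => -w t) hp hq hq0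
    hw.neg heq' hzy (by simp [hz]) (by linarith)
  obtain ⟨δ, hδy, hδ0, hpδ, hqδ, hδneg⟩ := exists_right_zero (w := fun t => -w t) (x := y)
    (z := z + π) hp hq hq0 hw.neg heq' (by linarith [hyI.2]) (by simp [hper z, hz]) (by linarith)
  have hxγ : x ≤ γ := by
    by_contra hcon
    have := hγneg x ⟨not_le.1 hcon, hxy.le⟩
    linarith
  have hβγ : β ≤ γ := by
    by_contra hcon
    have := hβpos γ ⟨hxγ, not_le.1 hcon⟩
    linarith
  have hβγ' : β < γ := lt_of_le_of_ne hβγ fun h => by rw [h] at hqβ; linarith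
  have hδ : δ ≤ x + π := by
    by_contra hcon
    have := hδneg (x + π) ⟨hyI.2.le, not_le.1 hcon⟩
    linarith
  exact hpt.not_three_zeros hp.nonneg hne hβγ' (hγy.trans hδy) (by linarith) hpβ hpγ hpδ

lemma groundstate_unique {p q ρ₁ ρ₂ : ℝ → ℝ} {C₁ C₂ : ℝ} (hpt : IsTrigPoly4 p)
    (hne : ∃ x, p x ≠ 0) (hp : IsWeight p) (hq : ContDiff ℝ (⊤ : ℕ∞) q)
    (hq0 : ∀ x, p x = 0 → q x ≠ 0) (h₁ : IsGroundstateW p q ρ₁ C₁)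
    (h₂ : IsGroundstateW p q ρ₂ C₂) : ρ₁ = ρ₂ ∧ C₁ = C₂ := by
  obtain ⟨hs₁, he₁⟩ := h₁.smooth hp hq hq0
  obtain ⟨hs₂, he₂⟩ := h₂.smooth hp hq hq0
  obtain ⟨hc₁, hper₁, -, hi₁, -, -⟩ := h₁
  obtain ⟨hc₂, hper₂, -, hi₂, -, -⟩ := h₂
  have hd₁ : Differentiable ℝ ρ₁ := hs₁.differentiable (by simp)
  have hd₂ : Differentiable ℝ ρ₂ := hs₂.differentiable (by simp)
  have key : ∀ {f g : ℝ → ℝ} {A B : ℝ}, Differentiable ℝ f → Differentiable ℝ g →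
      Function.Periodic f π → Function.Periodic g π → (∫ θ in (0 : ℝ)..π, f θ) = 1 →
      (∫ θ in (0 : ℝ)..π, g θ) = 1 →
      (∀ x, p x * deriv f x + (deriv p x - q x) * f x = A) →
      (∀ x, p x * deriv g x + (deriv p x - q x) * g x = B) →
      (∀ x, p x * deriv (fun t => f t - g t) x + (deriv p x - q x) * (f x - g x) = A - B) ∧
      (∫ θ in (0 : ℝ)..π, (f θ - g θ)) = 0 ∧ A - B ≤ 0 := by
    intro f g A B hf hg hpf hpg hif hig hef heg
    have e : ∀ x, p x * deriv (fun t => f t - g t) x + (deriv p x - q x) * (f x - g x)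
        = A - B := by
      intro x
      rw [deriv_fun_sub (hf x) (hg x)]
      linear_combination hef x - heg x
    have i : (∫ θ in (0 : ℝ)..π, (f θ - g θ)) = 0 := by
      rw [intervalIntegral.integral_sub (hf.continuous.intervalIntegrable _ _)
        (hg.continuous.intervalIntegrable _ _), hif, hig, sub_self]
    exact ⟨e, i, const_nonpos (w := fun t => f t - g t) hp (hf.sub hg) e (hpf.sub hpg) i⟩
  obtain ⟨he, hi, hle⟩ := key hd₁ hd₂ hper₁ hper₂ hi₁ hi₂ he₁ he₂
  obtain ⟨-, -, hge⟩ := key hd₂ hd₁ hper₂ hper₁ hi₂ hi₁ he₂ he₁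
  have hC : C₁ = C₂ := by linarith
  refine ⟨funext fun t => ?_, hC⟩
  rw [hC, sub_self] at he
  have := eq_zero_of_homogeneous (w := fun t => ρ₁ t - ρ₂ t) hpt hne hp hq.continuous hq0
    (hd₁.sub hd₂) he (hper₁.sub hper₂) hi t
  linarith

/-! ### Existence -/

lemma exists_max_of_periodic {f : ℝ → ℝ} (hf : Continuous f) (hper : Function.Periodic f π) :
    ∃ x, ∀ y, f y ≤ f x := by
  obtain ⟨x, -, hx⟩ := isCompact_Icc.exists_isMaxOn (s := Icc (0 : ℝ) π)
    ⟨0, le_rfl, Real.pi_pos.le⟩ hf.continuousOn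
  refine ⟨x, fun y => ?_⟩
  obtain ⟨z, hz, hyz⟩ := hper.exists_mem_Ico Real.pi_pos y 0
  rw [hyz]
  exact hx ⟨hz.1, by linarith [hz.2]⟩

/-- Existence for a strictly positive diffusion `P`, in terms of `v = P ρ`, which solves
`v' = (q / P) v + C`. With `Q' = q / P` and `J' = e^{-Q}`, the constants in the general solution
`e^Q (v(0) + C J)` are chosen to make it periodic. -/
lemma regular_exists {P q : ℝ → ℝ} (hP : Continuous P) (hpos : ∀ x, 0 < P x)
    (hPper : Function.Periodic P π) (hq : Continuous q) (hqper : Function.Periodic q π) :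
    ∃ (v : ℝ → ℝ) (C : ℝ), (∀ x, HasDerivAt v (q x * (v x / P x) + C) x) ∧
      Function.Periodic v π ∧ (∀ x, 0 ≤ v x) ∧ (∫ θ in (0 : ℝ)..π, v θ / P θ) = 1 := by
  have hr : Continuous fun x => q x / P x := hq.div hP fun x => (hpos x).ne'
  have hrper : Function.Periodic (fun x => q x / P x) π := hqper.div hPper
  set Q : ℝ → ℝ := fun x => ∫ t in (0 : ℝ)..x, q t / P t with hQ
  have hQd : ∀ x, HasDerivAt Q (q x / P x) x := fun x =>
    intervalIntegral.integral_hasDerivAt_right (hr.intervalIntegrable _ _)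
      (hr.stronglyMeasurableAtFilter _ _) hr.continuousAt
  have hQc : Continuous Q := continuous_iff_continuousAt.2 fun x => (hQd x).continuousAt
  have hQper : ∀ x, Q (x + π) = Q x + Q π := by
    intro x
    have h1 := hrper.intervalIntegral_add_eq x 0
    rw [zero_add] at h1
    simp only [hQ]
    rw [← h1, intervalIntegral.integral_add_adjacent_intervals (hr.intervalIntegrable _ _)
      (hr.intervalIntegrable _ _)]
  have hec : Continuous fun x => Real.exp (-Q x) := by fun_prop
  set J : ℝ → ℝ := fun x => ∫ t in (0 : ℝ)..x, Real.exp (-Q t) with hJ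
  have hJd : ∀ x, HasDerivAt J (Real.exp (-Q x)) x := fun x =>
    intervalIntegral.integral_hasDerivAt_right (hec.intervalIntegrable _ _)
      (hec.stronglyMeasurableAtFilter _ _) hec.continuousAt
  have hJper : ∀ x, J (x + π) = J π + Real.exp (-Q π) * J x := by
    intro x
    have h1 : ∫ t in (0 : ℝ)..x, Real.exp (-Q (t + π)) = ∫ t in (0 + π)..(x + π), Real.exp (-Q t) :=
      intervalIntegral.integral_comp_add_right (fun t => Real.exp (-Q t)) π
    have h2 : ∫ t in (0 : ℝ)..x, Real.exp (-Q (t + π)) = Real.exp (-Q π) * J x := by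
      simp only [hJ]
      rw [← intervalIntegral.integral_const_mul]
      congr 1
      funext t
      rw [hQper, neg_add, Real.exp_add, mul_comm]
    rw [← h2, h1, zero_add]
    simp only [hJ]
    rw [intervalIntegral.integral_add_adjacent_intervals (hec.intervalIntegrable _ _)
      (hec.intervalIntegrable _ _)]
  have hJmono : Monotone J := monotone_of_hasDerivAt_nonneg hJd fun x => (Real.exp_pos _).le
  have hJ0 : J 0 = 0 := by simp [hJ]
  have hQ0 : Q 0 = 0 := by simp [hQ]
  have hJπ : 0 < J π := intervalIntegral.intervalIntegral_pos_of_pos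
    (hec.intervalIntegrable _ _) (fun x => Real.exp_pos _) Real.pi_pos
  set e := Real.exp (Q π) with he
  have hepos : 0 < e := Real.exp_pos _
  set v : ℝ → ℝ := fun x => Real.exp (Q x) * (J π * e + (1 - e) * J x) with hv
  have hvd : ∀ x, HasDerivAt v (q x * (v x / P x) + (1 - e)) x := by
    intro x
    refine HasDerivAt.congr_deriv ((hQd x).exp.mul (((hJd x).const_mul (1 - e)).const_add _)) ?_
    have : Real.exp (Q x) * Real.exp (-Q x) = 1 := by rw [← Real.exp_add]; simp
    simp only [hv]
    linear_combination (1 - e) * this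
  have hvper : Function.Periodic v π := by
    intro x
    have h1 : e * Real.exp (-Q π) = 1 := by rw [he, ← Real.exp_add]; simp
    simp only [hv, hQper, hJper, Real.exp_add]
    linear_combination Real.exp (Q x) * (1 - e) * J x * h1
  have hvnn : ∀ x, 0 ≤ v x := by
    intro x
    obtain ⟨y, hy, hxy⟩ := hvper.exists_mem_Ico Real.pi_pos x 0
    rw [hxy]
    have h1 : 0 ≤ J y := by rw [← hJ0]; exact hJmono hy.1
    have h2 : J y ≤ J π := hJmono (by linarith [hy.2])
    have h3 : 0 ≤ e * (J π - J y) + J y := by nlinarith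
    have h4 : v y = Real.exp (Q y) * (e * (J π - J y) + J y) := by simp only [hv]; ring
    rw [h4]
    positivity
  have hvc : Continuous v := continuous_iff_continuousAt.2 fun x => (hvd x).continuousAt
  have hvPc : Continuous fun x => v x / P x := hvc.div hP fun x => (hpos x).ne'
  have hI : 0 < ∫ θ in (0 : ℝ)..π, v θ / P θ := by
    refine intervalIntegral.integral_pos Real.pi_pos hvPc.continuousOn
      (fun y _ => div_nonneg (hvnn y) (hpos y).le) ⟨0, ⟨le_rfl, Real.pi_pos.le⟩, ?_⟩
    refine div_pos ?_ (hpos 0)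
    simp only [hv, hQ0, hJ0, Real.exp_zero]
    simp
    positivity
  set I := ∫ θ in (0 : ℝ)..π, v θ / P θ with hIdef
  refine ⟨fun x => I⁻¹ * v x, I⁻¹ * (1 - e), ?_, ?_, ?_, ?_⟩
  · intro x
    refine ((hvd x).const_mul I⁻¹).congr_deriv ?_
    ring
  · intro x
    simp [hvper x]
  · intro x
    exact mul_nonneg (inv_nonneg.2 hI.le) (hvnn x)
  · simp only [mul_div_assoc]
    rw [intervalIntegral.integral_const_mul, ← hIdef, inv_mul_cancel₀ hI.ne']

/-- Groundstates of the regularized diffusions `p + ε` are bounded uniformly in `ε`. At a maximum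
of `ρ = v / (p + ε)` one has `(p' - q) ρ = C`, which bounds `ρ` where `p' - q` is bounded away
from zero; elsewhere `p` is bounded below and a bound on `v` suffices. -/
lemma approx_exists {p q : ℝ → ℝ} (hp : IsWeight p) (hpper : Function.Periodic p π)
    (hq : Continuous q) (hqper : Function.Periodic q π) (hq0 : ∀ x, p x = 0 → q x ≠ 0) :
    ∃ M : ℝ, ∀ ε : ℝ, 0 < ε → ε ≤ 1 → ∃ (v : ℝ → ℝ) (C : ℝ),
      (∀ x, HasDerivAt v (q x * (v x / (p x + ε)) + C) x) ∧ Function.Periodic v π ∧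
      (∀ x, 0 ≤ v x) ∧ (∫ θ in (0 : ℝ)..π, v θ / (p θ + ε)) = 1 ∧ |C| ≤ M ∧ (∀ x, v x ≤ M) ∧
      ∀ x, v x / (p x + ε) ≤ M := by
  have hπ1 : (1 : ℝ) < π := by linarith [Real.pi_gt_three]
  have hdper : Function.Periodic (deriv p) π := by
    intro x
    rw [← deriv_comp_add_const, show (fun x => p (x + π)) = p from funext hpper]
  have hdc : Continuous (deriv p) := hp.contDiff_deriv.continuous
  obtain ⟨xq, hxq⟩ := exists_max_of_periodic (f := fun x => |q x|) hq.abs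
    (fun x => by simp only [hqper x])
  obtain ⟨xp, hxp⟩ := exists_max_of_periodic hp.continuous hpper
  obtain ⟨xm, hxm⟩ := exists_max_of_periodic (f := fun x => -(p x + |deriv p x - q x|))
    (hp.continuous.add (hdc.sub hq).abs).neg (fun x => by simp only [hqper x, hpper x, hdper x])
  set K := |q xq| with hK
  set m := p xm + |deriv p xm - q xm| with hm
  set V := p xp + 1 + K * (1 + π) with hV
  have hK0 : 0 ≤ K := abs_nonneg _
  have hV0 : 0 ≤ V := by have := hp.nonneg xp; positivity
  have hmle : ∀ x, m ≤ p x + |deriv p x - q x| := fun x => by have := hxm x; linarith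
  have hmpos : 0 < m := by
    by_cases h0 : p xm = 0
    · have : 0 < |deriv p xm - q xm| := by
        rw [hp.deriv_eq_zero h0, zero_sub, abs_neg]
        exact abs_pos.2 (hq0 _ h0)
      simpa [hm, h0] using this
    · have := hp.pos h0
      positivity
  refine ⟨K + V + 2 * (K + V) / m, fun ε hε hε1 => ?_⟩
  have hPpos : ∀ x, 0 < p x + ε := fun x => by linarith [hp.nonneg x]
  have hPc : Continuous fun x => p x + ε := by have := hp.continuous; fun_prop
  obtain ⟨v, C, hvd, hvper, hvnn, hvint⟩ := regular_exists hPc hPpos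
    (fun x => by simp only [hpper x]) hq hqper
  set ρ : ℝ → ℝ := fun x => v x / (p x + ε) with hρ
  have hvc : Continuous v := continuous_iff_continuousAt.2 fun x => (hvd x).continuousAt
  have hρc : Continuous ρ := hvc.div hPc fun x => (hPpos x).ne'
  have hρper : Function.Periodic ρ π := fun x => by simp only [hρ, hvper x, hpper x]
  have hρnn : ∀ x, 0 ≤ ρ x := fun x => div_nonneg (hvnn x) (hPpos x).le
  have hρint : ∀ x, ∫ t in x..(x + π), ρ t = 1 := by
    intro x
    rw [hρper.intervalIntegral_add_eq x 0, zero_add]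
    exact hvint
  have hCbound : |C| ≤ K := by
    have h1 : ∫ t in (0 : ℝ)..π, (q t * ρ t + C) = v π - v 0 :=
      intervalIntegral.integral_eq_sub_of_hasDerivAt (fun t _ => hvd t)
        ((by fun_prop : Continuous fun t => q t * ρ t + C).intervalIntegrable _ _)
    have h2 : v π = v 0 := by simpa using hvper 0
    have hqρ : Continuous fun t => q t * ρ t := hq.mul hρc
    rw [h2, sub_self, intervalIntegral.integral_add (hqρ.intervalIntegrable _ _)
      (by simp), intervalIntegral.integral_const, sub_zero, smul_eq_mul] at h1
    have h3 : |∫ t in (0 : ℝ)..π, q t * ρ t| ≤ K := by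
      have h4 : ‖∫ t in (0 : ℝ)..π, q t * ρ t‖ ≤ ∫ t in (0 : ℝ)..π, K * ρ t := by
        refine intervalIntegral.norm_integral_le_of_norm_le Real.pi_pos.le
          (Eventually.of_forall fun t _ => ?_)
          ((continuous_const.mul hρc).intervalIntegrable _ _)
        rw [norm_mul, Real.norm_eq_abs, Real.norm_of_nonneg (hρnn t)]
        exact mul_le_mul_of_nonneg_right (hxq t) (hρnn t)
      rwa [intervalIntegral.integral_const_mul, hvint, mul_one, Real.norm_eq_abs] at h4
    have h5 : π * |C| ≤ K := by
      rw [show ∫ t in (0 : ℝ)..π, q t * ρ t = -(π * C) by linarith, abs_neg, abs_mul,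
        abs_of_pos Real.pi_pos] at h3
      exact h3
    nlinarith [abs_nonneg C]
  have hvbound : ∀ x, v x ≤ V := by
    intro x
    -- the mean of `ρ` is `1 / π < 1`, so `ρ < 1` somewhere in every period
    have hex : ∃ y, ρ y < 1 := by
      by_contra hcon
      push Not at hcon
      have h1 : ∫ t in (0 : ℝ)..π, (1 : ℝ) ≤ ∫ t in (0 : ℝ)..π, ρ t :=
        intervalIntegral.integral_mono_on Real.pi_pos.le (by simp)
          (hρc.intervalIntegrable _ _) fun t _ => hcon t
      rw [intervalIntegral.integral_const, hvint] at h1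
      simp at h1
      linarith
    obtain ⟨y₀, hy₀⟩ := hex
    obtain ⟨y, hyI, hyy⟩ := hρper.exists_mem_Ico Real.pi_pos y₀ (x - π)
    rw [sub_add_cancel] at hyI
    have hy : ρ y < 1 := by rwa [← hyy]
    have hvy : v y ≤ p xp + 1 := by
      rw [hρ] at hy
      simp only [div_lt_one (hPpos y)] at hy
      linarith [hxp y]
    set R : ℝ → ℝ := fun x => ∫ t in (0 : ℝ)..x, ρ t with hR
    have hRd : ∀ x, HasDerivAt R (ρ x) x := fun x =>
      intervalIntegral.integral_hasDerivAt_right (hρc.intervalIntegrable _ _)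
        (hρc.stronglyMeasurableAtFilter _ _) hρc.continuousAt
    have hRmono : Monotone R := monotone_of_hasDerivAt_nonneg hRd hρnn
    have hR1 : R x - R y ≤ 1 := by
      have h1 := hρint (x - π)
      rw [sub_add_cancel] at h1
      have h2 : R x - R (x - π) = 1 := by
        rw [← h1]
        exact intervalIntegral.integral_interval_sub_left (hρc.intervalIntegrable _ _)
          (hρc.intervalIntegrable _ _)
      linarith [hRmono hyI.1]
    -- `v' = q ρ + C ≤ K ρ + K`, and `ρ` has mass at most `1` between `y` and `x`
    have hanti : Antitone fun t => v t - K * R t - K * t := by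
      refine antitone_of_hasDerivAt_nonpos (f' := fun t => q t * ρ t + C - K * ρ t - K * 1)
        (fun t => ((hvd t).sub ((hRd t).const_mul K)).sub ((hasDerivAt_id t).const_mul K)) ?_
      intro t
      have h1 : q t ≤ K := (le_abs_self _).trans (hxq t)
      have h2 : C ≤ K := (le_abs_self _).trans hCbound
      have := mul_le_mul_of_nonneg_right h1 (hρnn t)
      simp only [Pi.zero_apply]
      linarith
    have h1 := hanti hyI.2.le
    simp only at h1
    have h2 : K * (R x - R y) ≤ K * 1 := mul_le_mul_of_nonneg_left hR1 hK0
    have h3 : K * (x - y) ≤ K * π := mul_le_mul_of_nonneg_left (by linarith [hyI.1]) hK0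
    simp only [hV]
    linarith
  have hρbound : ∀ x, ρ x ≤ 2 * (K + V) / m := by
    obtain ⟨x, hx⟩ := exists_max_of_periodic hρc hρper
    intro y
    refine (hx y).trans ?_
    have hder : HasDerivAt ρ
        (((q x * ρ x + C) * (p x + ε) - v x * deriv p x) / (p x + ε) ^ 2) x :=
      (hvd x).div ((hp.differentiable x).hasDerivAt.add_const ε) (hPpos x).ne'
    have hcrit := (show IsLocalMax ρ x from Eventually.of_forall hx).hasDerivAt_eq_zero hder
    have hvρ : v x = ρ x * (p x + ε) := by
      simp only [hρ]
      rw [div_mul_cancel₀ _ (hPpos x).ne']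
    have hC : (deriv p x - q x) * ρ x = C := by
      rw [div_eq_zero_iff] at hcrit
      rcases hcrit with h | h
      · rw [hvρ] at h
        have : (p x + ε) * (C - (deriv p x - q x) * ρ x) = 0 := by linear_combination h
        rcases mul_eq_zero.1 this with h' | h'
        · exact absurd h' (hPpos x).ne'
        · linarith
      · exact absurd h (pow_ne_zero 2 (hPpos x).ne')
    rw [le_div_iff₀ hmpos]
    rcases le_total (m / 2) (p x) with h | h
    · have h1 := hvbound x
      rw [hvρ] at h1
      nlinarith [hρnn x]
    · have h1 : m / 2 ≤ |deriv p x - q x| := by linarith [hmle x]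
      have h2 : |deriv p x - q x| * ρ x ≤ K := by
        rw [← abs_of_nonneg (hρnn x), ← abs_mul, hC]
        exact hCbound
      nlinarith [hρnn x]
  have hB : 0 ≤ 2 * (K + V) / m := by positivity
  exact ⟨v, C, hvd, hvper, hvnn, hvint, by linarith, fun x => by linarith [hvbound x],
    fun x => by linarith [hρbound x]⟩

/-- Sequential form of the Arzelà–Ascoli theorem for uniformly bounded, uniformly Lipschitz
functions on the line, carrying along a bounded sequence of constants. -/
lemma exists_subseq_tendsto {v : ℕ → ℝ → ℝ} {C : ℕ → ℝ} {M : ℝ} {L : NNReal}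
    (hv : ∀ n x, |v n x| ≤ M) (hL : ∀ n, LipschitzWith L (v n)) (hC : ∀ n, |C n| ≤ M) :
    ∃ (φ : ℕ → ℕ) (w : ℝ → ℝ) (c : ℝ), StrictMono φ ∧ Continuous w ∧
      (∀ x, Tendsto (fun n => v (φ n) x) atTop (𝓝 (w x))) ∧
      Tendsto (fun n => C (φ n)) atTop (𝓝 c) := by
  set S : Set C(ℝ, ℝ) := {f | (∀ x, |f x| ≤ M) ∧ LipschitzWith L f} with hS
  have hcomp : IsCompact S := by
    apply ArzelaAscoli.isCompact_of_equicontinuous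
    · have himg : ContinuousMap.toFun '' S =
          (univ.pi fun _ : ℝ => Icc (-M) M) ∩ {f | LipschitzWith L f} := by
        ext f
        constructor
        · rintro ⟨g, hg, rfl⟩
          exact ⟨fun x _ => abs_le.1 (hg.1 x), hg.2⟩
        · rintro ⟨h1, h2⟩
          exact ⟨⟨f, LipschitzWith.continuous h2⟩, ⟨fun x => abs_le.2 (h1 x (mem_univ x)), h2⟩, rfl⟩
      rw [himg]
      refine (isCompact_univ_pi fun _ => isCompact_Icc).inter_right ?_
      exact isClosed_setOfPred_lipschitzWith L
    · exact (LipschitzWith.uniformEquicontinuous _ L fun f : S => f.2.2).equicontinuous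
  obtain ⟨a, -, φ, hφ, hlim⟩ := (hcomp.prod (isCompact_Icc (a := -M) (b := M))).tendsto_subseq
    (x := fun n => ((⟨v n, (hL n).continuous⟩ : C(ℝ, ℝ)), C n))
    (fun n => ⟨⟨hv n, hL n⟩, abs_le.1 (hC n)⟩)
  refine ⟨φ, a.1, a.2, hφ, a.1.continuous, fun x => ?_, ?_⟩
  · have h1 := (continuous_fst.tendsto a).comp hlim
    exact ((continuous_eval_const x).tendsto a.1).comp h1
  · exact (continuous_snd.tendsto a).comp hlim

/-- The limit of the approximate fluxes: a continuous `w` with `w' = q w / p + c` off the zeros of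
`p`, such that `w / p` is normalized. The values `w x / p x = 0` at the zeros of `p` are junk but
only matter on a null set. -/
lemma limit_exists {p q : ℝ → ℝ} (hp : IsWeight p) (hpper : Function.Periodic p π)
    (hae : ∀ᵐ x : ℝ, p x ≠ 0)
    (hq : Continuous q) (hqper : Function.Periodic q π) (hq0 : ∀ x, p x = 0 → q x ≠ 0) :
    ∃ (w : ℝ → ℝ) (c : ℝ), Continuous w ∧ Function.Periodic w π ∧ (∀ x, 0 ≤ w x) ∧
      (∫ θ in (0 : ℝ)..π, w θ / p θ) = 1 ∧
      ∀ x, p x ≠ 0 → HasDerivAt w (q x * w x / p x + c) x := by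
  obtain ⟨M, hM⟩ := approx_exists hp hpper hq hqper hq0
  obtain ⟨xq, hxq⟩ := exists_max_of_periodic (f := fun x => |q x|) hq.abs
    (fun x => by simp only [hqper x])
  set K := |q xq| with hK
  have hxq : ∀ x, |q x| ≤ K := hxq
  have hK0 : 0 ≤ K := abs_nonneg _
  set ε : ℕ → ℝ := fun n => 1 / ((n : ℝ) + 1) with hε
  have hεpos : ∀ n, 0 < ε n := fun n => Nat.one_div_pos_of_nat
  have hεle : ∀ n, ε n ≤ 1 := fun n => by
    rw [hε]
    exact div_le_one_of_le₀ (by linarith [(Nat.cast_nonneg n : (0 : ℝ) ≤ n)]) (by positivity)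
  have hεlim : Tendsto ε atTop (𝓝 0) := tendsto_one_div_add_atTop_nhds_zero_nat
  choose v C hvd hvper hvnn hvint hCM hvM hrM using fun n => hM (ε n) (hεpos n) (hεle n)
  have hM0 : 0 ≤ M := (abs_nonneg _).trans (hCM 0)
  have hppos : ∀ n x, 0 < p x + ε n := fun n x => add_pos_of_nonneg_of_pos (hp.nonneg x) (hεpos n)
  have hrabs : ∀ n x, |v n x / (p x + ε n)| ≤ M := fun n x => by
    rw [abs_of_nonneg (div_nonneg (hvnn n x) (hppos n x).le)]
    exact hrM n x
  have hdb : ∀ n x, |q x * (v n x / (p x + ε n)) + C n| ≤ K * M + M := fun n x => by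
    refine (abs_add_le _ _).trans (add_le_add ?_ (hCM n))
    rw [abs_mul]
    exact mul_le_mul (hxq x) (hrabs n x) (abs_nonneg _) hK0
  have hL : ∀ n, LipschitzWith (Real.toNNReal (K * M + M)) (v n) := fun n => by
    refine lipschitzWith_of_nnnorm_deriv_le (fun x => (hvd n x).differentiableAt) fun x => ?_
    rw [← NNReal.coe_le_coe, coe_nnnorm, (hvd n x).deriv, Real.coe_toNNReal _ (by positivity)]
    exact hdb n x
  obtain ⟨φ, w, c, hφ, hw, hvw, hCc⟩ := exists_subseq_tendsto
    (fun n x => by rw [abs_of_nonneg (hvnn n x)]; exact hvM n x) hL hCM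
  have hεφ : Tendsto (fun n => ε (φ n)) atTop (𝓝 0) := hεlim.comp hφ.tendsto_atTop
  have hwper : Function.Periodic w π := fun x =>
    tendsto_nhds_unique (hvw (x + π)) ((hvw x).congr fun n => (hvper (φ n) x).symm)
  have hwnn : ∀ x, 0 ≤ w x := fun x => ge_of_tendsto' (hvw x) fun n => hvnn _ x
  have hrlim : ∀ x, p x ≠ 0 →
      Tendsto (fun n => v (φ n) x / (p x + ε (φ n))) atTop (𝓝 (w x / p x)) := fun x hx => by
    refine (hvw x).div ?_ hx
    simpa using (tendsto_const_nhds (x := p x)).add hεφ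
  have hvc : ∀ n, Continuous (v n) := fun n => (hL n).continuous
  have hrc : ∀ n, Continuous fun x => v n x / (p x + ε n) := fun n =>
    (hvc n).div (hp.continuous.add continuous_const) fun x => (hppos n x).ne'
  have hrb : ∀ x, |w x / p x| ≤ M := fun x => by
    by_cases hx : p x = 0
    · simpa [hx] using hM0
    · exact le_of_tendsto' (hrlim x hx).abs fun n => hrabs _ x
  have hmeas : Measurable fun x => q x * (w x / p x) + c :=
    (hq.measurable.mul (hw.measurable.div hp.continuous.measurable)).add_const c
  have hint : ∀ a b, IntervalIntegrable (fun x => q x * (w x / p x) + c) volume a b := fun a b => by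
    refine (intervalIntegrable_const (c := K * M + |c|)).mono_fun hmeas.aestronglyMeasurable
      (Eventually.of_forall fun x => ?_)
    change abs (q x * (w x / p x) + c) ≤ abs (K * M + abs c)
    refine le_trans ((abs_add_le _ _).trans (add_le_add ?_ le_rfl)) (le_abs_self _)
    rw [abs_mul]
    exact mul_le_mul (hxq x) (hrb x) (abs_nonneg _) hK0
  have hftc : ∀ x, w x = w 0 + ∫ t in (0 : ℝ)..x, (q t * (w t / p t) + c) := fun x => by
    have h1 : Tendsto (fun n => ∫ t in (0 : ℝ)..x, (q t * (v (φ n) t / (p t + ε (φ n))) + C (φ n)))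
        atTop (𝓝 (∫ t in (0 : ℝ)..x, (q t * (w t / p t) + c))) := by
      refine intervalIntegral.tendsto_integral_filter_of_dominated_convergence
        (fun _ => K * M + M) (Eventually.of_forall fun n => ?_)
        (Eventually.of_forall fun n => Eventually.of_forall fun t _ => hdb _ t)
        intervalIntegrable_const ?_
      · exact ((hq.mul (hrc _)).add continuous_const).aestronglyMeasurable
      · filter_upwards [hae] with t ht _
        exact (tendsto_const_nhds.mul (hrlim t ht)).add hCc
    have h2 : Tendsto (fun n => v (φ n) x - v (φ n) 0) atTop (𝓝 (w x - w 0)) :=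
      (hvw x).sub (hvw 0)
    have h3 := tendsto_nhds_unique h2 (h1.congr fun n =>
      intervalIntegral.integral_eq_sub_of_hasDerivAt (fun t _ => hvd (φ n) t)
        (((hq.mul (hrc _)).add continuous_const).intervalIntegrable _ _))
    linarith
  refine ⟨w, c, hw, hwper, hwnn, ?_, fun x hx => ?_⟩
  · have h1 : Tendsto (fun n => ∫ t in (0 : ℝ)..π, v (φ n) t / (p t + ε (φ n)))
        atTop (𝓝 (∫ t in (0 : ℝ)..π, w t / p t)) := by
      refine intervalIntegral.tendsto_integral_filter_of_dominated_convergence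
        (fun _ => M) (Eventually.of_forall fun n => (hrc _).aestronglyMeasurable)
        (Eventually.of_forall fun n => Eventually.of_forall fun t _ => hrabs _ t)
        intervalIntegrable_const ?_
      filter_upwards [hae] with t ht _ using hrlim t ht
    refine tendsto_nhds_unique h1 ?_
    simp only [hvint]
    exact tendsto_const_nhds
  · have hca : ContinuousAt (fun x => q x * (w x / p x) + c) x :=
      (hq.continuousAt.mul (hw.continuousAt.div hp.continuous.continuousAt hx)).add
        continuousAt_const
    have h1 := (intervalIntegral.integral_hasDerivAt_right (hint 0 x)
      hmeas.stronglyMeasurable.stronglyMeasurableAtFilter hca).const_add (w 0)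
    rw [show (fun x => w 0 + ∫ t in (0 : ℝ)..x, (q t * (w t / p t) + c)) = w from
      funext fun x => (hftc x).symm] at h1
    rw [mul_div_assoc]
    exact h1

/-- The quotient `w / p` extends continuously to the zeros of `p` by `-c / q`, which gives a
groundstate. -/
lemma groundstate_exists {p q : ℝ → ℝ} (hp : IsWeight p) (hpper : Function.Periodic p π)
    (hae : ∀ᵐ x : ℝ, p x ≠ 0) (hq : ContDiff ℝ (⊤ : ℕ∞) q) (hqper : Function.Periodic q π)
    (hq0 : ∀ x, p x = 0 → q x ≠ 0) : ∃ (ρ : ℝ → ℝ) (C : ℝ), IsGroundstateW p q ρ C := by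
  obtain ⟨w, c, hw, hwper, hwnn, hwint, hwd⟩ :=
    limit_exists hp hpper hae hq.continuous hqper hq0
  classical
  set ρ : ℝ → ℝ := fun x => if p x = 0 then -c / q x else w x / p x with hρ
  have hρ1 : ∀ x, p x ≠ 0 → ρ x = w x / p x := fun x hx => if_neg hx
  have hρ0 : ∀ x, p x = 0 → ρ x = -c / q x := fun x hx => if_pos hx
  have hopen : IsOpen {θ | p θ ≠ 0} := isOpen_ne_fun hp.continuous continuous_const
  have hloc : ∀ x, p x ≠ 0 → ρ =ᶠ[𝓝 x] fun x => w x / p x := fun x hx => by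
    filter_upwards [hopen.mem_nhds hx] with t ht using hρ1 t ht
  have hlim : ∀ x, p x = 0 → Tendsto ρ (𝓝[≠] x) (𝓝 (ρ x)) := fun x hx => by
    rw [hρ0 x hx]
    refine (tendsto_div_weight (s := fun _ => c) hp hx hq.continuous (hq0 x hx) continuous_const hw
      hwd).congr' ?_
    filter_upwards [hp.isolated x hx] with t ht using (hρ1 t ht).symm
  have hnn1 : ∀ x, p x ≠ 0 → 0 ≤ ρ x := fun x hx => by
    rw [hρ1 x hx]
    exact div_nonneg (hwnn x) (hp.nonneg x)
  have hcont : Continuous ρ := continuous_iff_continuousAt.2 fun x => by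
    by_cases hx : p x = 0
    · exact continuousAt_iff_punctured_nhds.2 (hlim x hx)
    · exact (hw.continuousAt.div hp.continuous.continuousAt hx).congr (hloc x hx).symm
  have hd : ∀ x, p x ≠ 0 → HasDerivAt ρ (((q x - deriv p x) * ρ x + c) / p x) x := fun x hx => by
    have h1 := ((hwd x hx).div (hp.differentiable x).hasDerivAt hx).congr_of_eventuallyEq (hloc x hx)
    refine h1.congr_deriv ?_
    rw [hρ1 x hx]
    field_simp
    ring
  refine ⟨ρ, c, hcont, fun x => ?_, fun x => ?_, ?_, ?_, fun x hx => ?_⟩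
  · simp only [hρ, hpper x, hqper x, hwper x]
  · by_cases hx : p x = 0
    · refine ge_of_tendsto (hlim x hx) ?_
      filter_upwards [hp.isolated x hx] with t ht using hnn1 t ht
    · exact hnn1 x hx
  · rw [← hwint]
    refine intervalIntegral.integral_congr_ae ?_
    filter_upwards [hae] with t ht _ using hρ1 t ht
  · have h := contDiff_of_ode hp 1 (fun x => q x - deriv p x) (fun _ => c) ρ
      (hq.sub hp.contDiff_deriv)
      (fun x hx => by simpa [hp.deriv_eq_zero hx] using hq0 x hx) contDiff_const hcont hd
    exact_mod_cast h.contDiffOn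
  · rw [(hd x hx).deriv]
    field_simp
    ring

end Auxiliary

/-- **Theorem 2 (vanishing diffusion, nonvanishing drift at the zeros).**
If `p, q` are `π`-periodic trigonometric polynomials of degree `≤ 4`, `p ≥ 0` is not
identically zero, and `q(θ̂) ≠ 0` at every zero `θ̂` of `p`, then there is exactly one
pair `(ρ, C)` with `ρ` continuous, nonnegative, normalized, `C¹` off the zero set of
`p` and solving `p ρ' + (p'-q)ρ = C` there; moreover this `ρ` is `C^∞` on all of `ℝ`. -/
theorem groundstate_degenerate (p q : ℝ → ℝ)
    (hp : IsTrigPoly4 p) (hq : IsTrigPoly4 q)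
    (hppos : ∀ θ, 0 ≤ p θ) (hpne : ∃ θ, p θ ≠ 0)
    (hq0 : ∀ θ, p θ = 0 → q θ ≠ 0) :
    (∃! z : (ℝ → ℝ) × ℝ, IsGroundstateW p q z.1 z.2) ∧
    (∀ ρ C, IsGroundstateW p q ρ C → ContDiff ℝ (⊤ : ℕ∞) ρ) := by
  have hw : IsWeight p := hp.isWeight hppos hpne
  refine ⟨?_, fun ρ C h => (h.smooth hw hq.contDiff hq0).1⟩
  obtain ⟨ρ, C, h⟩ := groundstate_exists hw hp.periodic (hp.ae_ne_zero hpne) hq.contDiff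
    hq.periodic hq0
  refine ⟨(ρ, C), h, fun z hz => ?_⟩
  obtain ⟨h1, h2⟩ := groundstate_unique hp hpne hw hq.contDiff hq0 hz h
  exact Prod.ext h1 h2

end FokkerPlanck7
end

section
/- (Lemma 1, part 1: perturbative expansion of the logarithmic norm growth.) With the expansion M T_{λ,σ} M^{−1} = ± exp(Σ_k λ^{η_k} P_{η_k,σ}) and the coefficients α_{η,σ}, β_{η,σ}, γ_{η,σ}, δ_{η_1,η_2,σ} defined in the context: (a) p_{k,σ}(θ) = Im(α_{η_k,σ} − β_{η_k,σ} e^{2iθ}); and (b) uniformly in θ ∈ S¹_π and σ ∈ Σ, log‖M T_{λ,σ} M^{−1} e_θ‖ = Re Σ_{k≥1} ( λ^{η_k} β_{η_k,σ} e^{2iθ} + (λ^{2η_k}/2)( |β_{η_k,σ}|² + γ_{η_k,σ} e^{2iθ} − β_{η_k,σ}² e^{4iθ} ) ) + Re Σ_{k_1<k_2} λ^{η_{k_1}+η_{k_2}} ( β_{η_{k_1},σ} \overline{β_{η_{k_2},σ}} + δ_{η_{k_1},η_{k_2},σ} e^{2iθ} − β_{η_{k_1},σ} β_{η_{k_2},σ}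 e^{4iθ} ) + O(λ^{3η_1}), where the sums run over the (finitely many) exponents with η_k < 3η_1, respectively η_{k_1}+η_{k_2} < 3η_1. -/
/-!
Part (a) is a direct computation with explicit matrix entries.

For part (b), write the exponent as `Q + R`, with `Q` the traceless matrix `∑ λ^{η_k} P_k` and `R`
of order `λ^{3 η_1}`. Since `Q` is of order `λ^{η_1}`, third-order terms in `Q` and the whole of `R`
are absorbed in the error (`matExp_rem_entry`), so that `exp (Q + R) e_θ` may be replaced by
`(1 + Q + Q² / 2) e_θ`. In the orthonormal basis formed by `e_θ` and `e_θ^⊥`, let `Q` have entries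
`u`, `t'`, `t`, `-u`. As `Q² = (u² + t t')·1`, expanding the logarithm of the squared norm gives
`u + t (t + t') / 2 + O(λ^{3 η_1})` (`core`, `log_vnorm_expand`).

Here `u = Re (β e^{2iθ})` and `t (t + t') / 2 = w y` with `w = Im (β e^{2iθ})` and
`y = w + (Q₀₁ - Q₁₀) / 2`. All of `u`, `w`, `y` are linear in `Q`, so the product `w y` decomposes
into diagonal and mixed contributions of the `P_k` (`sum_sq_split`), which are exactly the
coefficients built from `β`, `γ`, `δ` (`diag_term`, `cross_term`). The terms omitted from the
truncated sums carry a power of `λ` that is at least `3 η_1`.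
-/

/- Statement 10 (Lemma 1, part 1): perturbative expansion of the logarithmic norm
growth log‖M T_{λ,σ} M⁻¹ e_θ‖ at an anomaly, with uniform error O(λ^{3η_1}). -/

open MeasureTheory Filter Real Set

namespace Anomaly10

/-- The exponential of a 2×2 real matrix, `exp A = Σ_n A^n / n!`. -/
noncomputable def matExp (A : Matrix (Fin 2) (Fin 2) ℝ) : Matrix (Fin 2) (Fin 2) ℝ :=
  ∑' n : ℕ, ((n.factorial : ℝ)⁻¹) • A ^ n

/-- Complexification of a real 2×2 matrix. -/
noncomputable def toC (P : Matrix (Fin 2) (Fin 2) ℝ) : Matrix (Fin 2) (Fin 2) ℂ :=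
  P.map (fun x => (x : ℂ))

/-- The vector `v = (1, -i)ᵀ/√2`. -/
noncomputable def vplus : Fin 2 → ℂ := ![1 / Real.sqrt 2, -Complex.I / Real.sqrt 2]

/-- The vector `v̄ = (1, i)ᵀ/√2`. -/
noncomputable def vminus : Fin 2 → ℂ := ![1 / Real.sqrt 2, Complex.I / Real.sqrt 2]

/-- The complex inner product `⟨u|w⟩` on `ℂ²` (conjugate-linear in the first slot). -/
noncomputable def dotc (u w : Fin 2 → ℂ) : ℂ :=
  starRingEnd ℂ (u 0) * w 0 + starRingEnd ℂ (u 1) * w 1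

/-- `α_{η,σ} = ⟨v|P|v⟩`. -/
noncomputable def alphaC (P : Matrix (Fin 2) (Fin 2) ℝ) : ℂ :=
  dotc vplus ((toC P).mulVec vplus)

/-- `β_{η,σ} = ⟨v̄|P|v⟩`. -/
noncomputable def betaC (P : Matrix (Fin 2) (Fin 2) ℝ) : ℂ :=
  dotc vminus ((toC P).mulVec vplus)

/-- `γ_{η,σ} = ⟨v̄| |P|² |v⟩ = ⟨v̄| P*P |v⟩`. -/
noncomputable def gammaC (P : Matrix (Fin 2) (Fin 2) ℝ) : ℂ :=
  dotc vminus (((toC P).conjTranspose * toC P).mulVec vplus)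

/-- `δ_{η_1,η_2,σ} = ½⟨v̄|(P₁+P₁*)P₂ + (P₂+P₂*)P₁|v⟩`. -/
noncomputable def deltaC (P₁ P₂ : Matrix (Fin 2) (Fin 2) ℝ) : ℂ :=
  (1 / 2 : ℂ) * dotc vminus
    (((toC P₁ + (toC P₁).conjTranspose) * toC P₂ +
      (toC P₂ + (toC P₂).conjTranspose) * toC P₁).mulVec vplus)

/-- The Euclidean norm on `ℝ²`. -/
noncomputable def vnorm (w : Fin 2 → ℝ) : ℝ := Real.sqrt ((w 0) ^ 2 + (w 1) ^ 2)

/-- The trigonometric polynomial `p_P(θ) = Im(⟨v|P|e_θ⟩/⟨v|e_θ⟩)`. -/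
noncomputable def polP (P : Matrix (Fin 2) (Fin 2) ℝ) (θ : ℝ) : ℝ :=
  ((((P.mulVec ![Real.cos θ, Real.sin θ]) 0 : ℝ) +
      ((P.mulVec ![Real.cos θ, Real.sin θ]) 1 : ℝ) * Complex.I) *
    Complex.exp (-(θ : ℂ) * Complex.I)).im

/-! ### Scalar estimates -/

/-- The scalar heart of the expansion. If a vector has component `1 + u + (u² + t t') / 2` along a
unit vector and `t` orthogonally to it, up to third-order errors, then the logarithm of its length
is `u + t (t + t') / 2` up to a third-order error: expand `log (1 + x) = x - x² / 2 + O(x³)`. -/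
theorem core (E u t t' r1 r2 : ℝ) (hE : E ≤ 1/100) (hu : |u| ≤ E) (ht : |t| ≤ E)
    (ht' : |t'| ≤ E) (h1 : |r1| ≤ 8 * E ^ 3) (h2 : |r2| ≤ 8 * E ^ 3) :
    |(1/2) * Real.log ((1 + u + (u ^ 2 + t * t') / 2 + r1) ^ 2 + (t + r2) ^ 2)
      - (u + t * (t + t') / 2)| ≤ 30 * E ^ 3 := by
  have hE0 : 0 ≤ E := (abs_nonneg u).trans hu
  have mulb : ∀ {a b A B : ℝ}, |a| ≤ A → |b| ≤ B → |a * b| ≤ A * B := by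
    intro a b A B ha hb
    rw [abs_mul]
    exact mul_le_mul ha hb (abs_nonneg _) ((abs_nonneg _).trans ha)
  have e2 : E ^ 2 ≤ E / 100 := by nlinarith
  have e20 : 0 ≤ E ^ 2 := by positivity
  have e30 : 0 ≤ E ^ 3 := by positivity
  have e3 : E ^ 3 ≤ E ^ 2 / 100 := by nlinarith
  have e4 : E ^ 4 ≤ E ^ 3 / 100 := by nlinarith
  have e40 : 0 ≤ E ^ 4 := by positivity
  have e5 : E ^ 5 ≤ E ^ 4 / 100 := by nlinarith
  have e50 : 0 ≤ E ^ 5 := by positivity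
  have e6 : E ^ 6 ≤ E ^ 5 / 100 := by nlinarith
  obtain ⟨p, hp⟩ : ∃ p, p = (u ^ 2 + t * t') / 2 + r1 := ⟨_, rfl⟩
  have huu := mulb hu hu
  have htt' := mulb ht ht'
  have htt := mulb ht ht
  have hpb : |p| ≤ 2 * E ^ 2 := by
    rw [abs_le] at *
    constructor <;> linarith
  have hup := mulb hu hpb
  have hpp := mulb hpb hpb
  have htr := mulb ht h2
  have hrr := mulb h2 h2
  -- The squared length is `1 + 2u + y`; `z` collects the terms of `y` of order at least three.
  obtain ⟨z, hz⟩ : ∃ z, z = 2 * r1 + 2 * (u * p) + p * p + 2 * (t * r2) + r2 * r2 := ⟨_, rfl⟩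
  have hzb : |z| ≤ 21 * E ^ 3 := by
    have q1 : 2 * E ^ 2 * (2 * E ^ 2) = 4 * E ^ 4 := by ring
    have q2 : 8 * E ^ 3 * (8 * E ^ 3) = 64 * E ^ 6 := by ring
    have q3 : E * (8 * E ^ 3) = 8 * E ^ 4 := by ring
    have q4 : E * (2 * E ^ 2) = 2 * E ^ 3 := by ring
    rw [q1] at hpp
    rw [q2] at hrr
    rw [q3] at htr
    rw [q4] at hup
    rw [abs_le] at *
    constructor <;> linarith
  obtain ⟨y, hy⟩ : ∃ y, y = u * u + (u * u + t * t') + t * t + z := ⟨_, rfl⟩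
  have hyb : |y| ≤ 5 * E ^ 2 := by
    rw [abs_le] at *
    constructor <;> linarith
  have huy := mulb hu hyb
  have hyy := mulb hyb hyb
  have hx : |-(2 * u + y)| ≤ 3 * E := by
    rw [abs_neg]
    rw [abs_le] at *
    constructor <;> linarith
  have hlog := Real.abs_log_sub_add_sum_range_le (x := -(2 * u + y)) (by linarith) 2
  have hN : (1 + u + (u ^ 2 + t * t') / 2 + r1) ^ 2 + (t + r2) ^ 2 = 1 - -(2 * u + y) := by
    rw [hy, hz, hp]; ring
  have hrem : |-(2 * u + y)| ^ (2 + 1) / (1 - |-(2 * u + y)|) ≤ 28 * E ^ 3 := by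
    rw [div_le_iff₀ (by linarith)]
    have h3 : |-(2 * u + y)| ^ (2 + 1) ≤ (3 * E) ^ 3 := by gcongr
    have h4 : E ^ 3 * (27 / 28) ≤ E ^ 3 * (1 - |-(2 * u + y)|) :=
      mul_le_mul_of_nonneg_left (by linarith) e30
    linarith
  have hmain := hlog.trans hrem
  rw [hN]
  rw [Finset.sum_range_succ, Finset.sum_range_one] at hmain
  generalize Real.log (1 - -(2 * u + y)) = L at hmain ⊢
  push_cast at hmain
  have hid : (1/2) * L - (u + t * (t + t') / 2) = (1/2) * ((-(2 * u + y)) ^ 1 / (0 + 1)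
      + (-(2 * u + y)) ^ 2 / (1 + 1) + L) + (1/2) * (z - 2 * (u * y) - y * y / 2) := by
    linear_combination (1/2) * hy
  rw [hid]
  have q1 : 5 * E ^ 2 * (5 * E ^ 2) = 25 * E ^ 4 := by ring
  have q4 : E * (5 * E ^ 2) = 5 * E ^ 3 := by ring
  rw [q1] at hyy
  rw [q4] at huy
  clear hlog hrem hx
  generalize (-(2 * u + y)) ^ 1 / (0 + 1)
      + (-(2 * u + y)) ^ 2 / (1 + 1) + L = X at hmain ⊢
  rw [abs_le] at hmain huy hyy hzb ⊢
  constructor <;> linarith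

/-- The product of two sums over the same index set, split into diagonal and ordered pairs. -/
theorem sum_sq_split (S : Finset ℕ) (w y : ℕ → ℝ) :
    (∑ k ∈ S, w k) * (∑ k ∈ S, y k) = ∑ k ∈ S, w k * y k +
      ∑ kk ∈ (S ×ˢ S).filter (fun kk => kk.1 < kk.2), (w kk.1 * y kk.2 + w kk.2 * y kk.1) := by
  simp only [Finset.sum_filter, Finset.sum_product, Finset.sum_mul_sum,
    Finset.sum_add_distrib]
  have hswap : ∑ k ∈ S, ∑ l ∈ S, (if k < l then w l * y k else 0)
      = ∑ k ∈ S, ∑ l ∈ S, (if l < k then w k * y l else 0) := Finset.sum_comm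
  have hdiag : ∑ k ∈ S, w k * y k = ∑ k ∈ S, ∑ l ∈ S, (if k = l then w k * y l else 0) := by
    refine Finset.sum_congr rfl fun k hk => ?_
    simp [hk]
  rw [hswap, hdiag, ← Finset.sum_add_distrib, ← Finset.sum_add_distrib]
  refine Finset.sum_congr rfl fun k _ => ?_
  rw [← Finset.sum_add_distrib, ← Finset.sum_add_distrib]
  refine Finset.sum_congr rfl fun l _ => ?_
  rcases lt_trichotomy k l with h | h | h
  · simp [h, h.ne, h.not_gt]
  · simp [h]
  · simp [h, h.ne', h.not_gt]

/-! ### Third-order remainder of the matrix exponential -/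

section MatrixNorm

attribute [local instance] Matrix.linftyOpNormedRing Matrix.linftyOpNormedAlgebra

theorem entry_le_norm (A : Matrix (Fin 2) (Fin 2) ℝ) (i j : Fin 2) : |A i j| ≤ ‖A‖ := by
  rw [Matrix.linfty_opNorm_def]
  have h1 := Finset.le_sup (f := fun i => ∑ j, ‖A i j‖₊) (Finset.mem_univ i)
  have h2 : ‖A i j‖₊ ≤ ∑ j, ‖A i j‖₊ :=
    Finset.single_le_sum (f := fun j => ‖A i j‖₊) (fun _ _ => zero_le) (Finset.mem_univ j)
  have h3 := h2.trans h1
  exact_mod_cast h3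

theorem norm_le_of_entry (A : Matrix (Fin 2) (Fin 2) ℝ) (a : ℝ) (h : ∀ i j, |A i j| ≤ a) :
    ‖A‖ ≤ 2 * a := by
  have ha : 0 ≤ a := (abs_nonneg _).trans (h 0 0)
  lift a to NNReal using ha
  rw [Matrix.linfty_opNorm_def]
  have : (Finset.univ.sup fun i => ∑ j, ‖A i j‖₊) ≤ 2 * a := by
    refine Finset.sup_le fun i _ => ?_
    have h0 : ∀ j, ‖A i j‖₊ ≤ a := fun j => by exact_mod_cast h i j
    rw [Fin.sum_univ_two, two_mul]
    exact add_le_add (h0 0) (h0 1)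
  exact_mod_cast this

theorem matExp_rem (A : Matrix (Fin 2) (Fin 2) ℝ) (hA : ‖A‖ ≤ 1 / 2) :
    ‖matExp A - (1 + A + (1 / 2 : ℝ) • A ^ 2)‖ ≤ 2 * ‖A‖ ^ 3 := by
  have hsum : Summable fun n : ℕ => ((n.factorial : ℝ)⁻¹) • A ^ n :=
    (NormedSpace.norm_expSeries_summable' (𝕂 := ℝ) A).of_norm
  have hsplit := hsum.sum_add_tsum_nat_add 3
  have hE : matExp A - (1 + A + (1 / 2 : ℝ) • A ^ 2)
      = ∑' n : ℕ, (((n + 3).factorial : ℝ)⁻¹) • A ^ (n + 3) := by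
    unfold matExp
    rw [← hsplit]
    simp [Finset.sum_range_succ, Nat.factorial]
  rw [hE]
  have hg : HasSum (fun n : ℕ => ‖A‖ ^ 3 * (1 / 2 : ℝ) ^ n) (‖A‖ ^ 3 * 2) :=
    hasSum_geometric_two.mul_left _
  rw [mul_comm]
  refine tsum_of_norm_bounded hg fun n => ?_
  rw [norm_smul, norm_inv, Real.norm_natCast]
  have h1 : ((n + 3).factorial : ℝ)⁻¹ ≤ 1 :=
    inv_le_one_of_one_le₀ (by exact_mod_cast Nat.succ_le_of_lt (Nat.factorial_pos _))
  have h2 : ‖A ^ (n + 3)‖ ≤ ‖A‖ ^ (n + 3) := norm_pow_le' _ (by omega)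
  calc _ ≤ 1 * ‖A‖ ^ (n + 3) := by gcongr
    _ = ‖A‖ ^ 3 * ‖A‖ ^ n := by ring
    _ ≤ _ := by gcongr

theorem mul_entry_le {A B : Matrix (Fin 2) (Fin 2) ℝ} {a b : ℝ} (hA : ∀ i j, |A i j| ≤ a)
    (hB : ∀ i j, |B i j| ≤ b) (i j : Fin 2) : |(A * B) i j| ≤ 2 * (a * b) := by
  have mulb : ∀ i j k l, |A i j * B k l| ≤ a * b := by
    intro i j k l
    rw [abs_mul]
    exact mul_le_mul (hA i j) (hB k l) (abs_nonneg _) ((abs_nonneg _).trans (hA i j))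
  rw [Matrix.mul_apply, Fin.sum_univ_two]
  refine (abs_add_le _ _).trans ?_
  linarith [mulb i 0 0 j, mulb i 1 1 j]

/-- If `Q` is of first and `R` of third order in `ε`, then `R` does not contribute to the
second-order Taylor polynomial of `exp (Q + R)`. -/
theorem matExp_rem_entry (Q R : Matrix (Fin 2) (Fin 2) ℝ) (ε : ℝ)
    (hε : ε ≤ 1 / 400) (hQ : ∀ i j, |Q i j| ≤ ε) (hR : ∀ i j, |R i j| ≤ ε ^ 3) (i j : Fin 2) :
    |(matExp (Q + R) - (1 + Q + (1 / 2 : ℝ) • Q ^ 2) : Matrix (Fin 2) (Fin 2) ℝ) i j|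
      ≤ 64 * ε ^ 3 := by
  have hε0 : 0 ≤ ε := (abs_nonneg _).trans (hQ 0 0)
  have e3 : ε ^ 3 ≤ ε / 100 := by nlinarith [mul_nonneg hε0 hε0]
  have e30 : 0 ≤ ε ^ 3 := by positivity
  have e4 : ε * ε ^ 3 ≤ ε ^ 3 := by nlinarith
  have e6 : ε ^ 3 * ε ^ 3 ≤ ε ^ 3 := by nlinarith
  have hA : ‖Q + R‖ ≤ 3 * ε := by
    refine (norm_le_of_entry _ (ε + ε ^ 3) fun i j => ?_).trans (by linarith)
    rw [Matrix.add_apply]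
    exact (abs_add_le _ _).trans (add_le_add (hQ i j) (hR i j))
  have hrem := (entry_le_norm _ i j).trans (matExp_rem (Q + R) (hA.trans (by linarith)))
  have hA3 : ‖Q + R‖ ^ 3 ≤ (3 * ε) ^ 3 := by gcongr
  have hid : matExp (Q + R) - (1 + Q + (1 / 2 : ℝ) • Q ^ 2)
      = (matExp (Q + R) - (1 + (Q + R) + (1 / 2 : ℝ) • (Q + R) ^ 2))
        + (R + (1 / 2 : ℝ) • (Q * R + R * Q + R * R)) := by
    have : (Q + R) ^ 2 = Q ^ 2 + (Q * R + R * Q + R * R) := by noncomm_ring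
    rw [this, smul_add]
    abel
  rw [hid, Matrix.add_apply]
  have hQR := mul_entry_le hQ hR i j
  have hRQ := mul_entry_le hR hQ i j
  have hRR := mul_entry_le hR hR i j
  have h1 : (R + (1 / 2 : ℝ) • (Q * R + R * Q + R * R)) i j
      = R i j + (1 / 2) * ((Q * R) i j + (R * Q) i j + (R * R) i j) := by
    simp only [Matrix.add_apply, Matrix.smul_apply, smul_eq_mul]
  rw [h1]
  have hRij := hR i j
  rw [abs_le] at *
  constructor <;> linarith

end MatrixNorm

/-! ### Expansion for one traceless matrix -/

/-- The real part of `β e^{2iθ}` for traceless `P`, equivalently `⟨e_θ, P e_θ⟩`. -/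
noncomputable def uF (P : Matrix (Fin 2) (Fin 2) ℝ) (θ : ℝ) : ℝ :=
  P 0 0 * (cos θ ^ 2 - sin θ ^ 2) + (P 0 1 + P 1 0) * (cos θ * sin θ)

/-- The imaginary part of `β e^{2iθ}` for traceless `P`. -/
noncomputable def wF (P : Matrix (Fin 2) (Fin 2) ℝ) (θ : ℝ) : ℝ :=
  2 * P 0 0 * (cos θ * sin θ) - (P 0 1 + P 1 0) / 2 * (cos θ ^ 2 - sin θ ^ 2)

/-- The component `-⟨e_θ^⊥, P e_θ⟩` for traceless `P`, where `e_θ^⊥ = (-sin θ, cos θ)`; it equals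
`wF P θ + (P₀₁ - P₁₀) / 2`. -/
noncomputable def yF (P : Matrix (Fin 2) (Fin 2) ℝ) (θ : ℝ) : ℝ :=
  P 0 1 * sin θ ^ 2 - P 1 0 * cos θ ^ 2 + 2 * P 0 0 * (cos θ * sin θ)

theorem abs_form_le {a c1 c2 c3 : ℝ} {x1 x2 x3 : ℝ} (h1 : |x1| ≤ a) (h2 : |x2| ≤ a)
    (h3 : |x3| ≤ a) (k1 : |c1| ≤ 1) (k2 : |c2| ≤ 1) (k3 : |c3| ≤ 1) :
    |x1 * c1 + x2 * c2 + x3 * c3| ≤ 3 * a := by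
  have mulb : ∀ {x c : ℝ}, |x| ≤ a → |c| ≤ 1 → |x * c| ≤ a := by
    intro x c hx hc
    rw [abs_mul]
    nlinarith [abs_nonneg x, abs_nonneg c]
  have m1 := mulb h1 k1
  have m2 := mulb h2 k2
  have m3 := mulb h3 k3
  refine (abs_add_three _ _ _).trans ?_
  linarith

theorem trig_bounds (θ : ℝ) : |cos θ ^ 2 - sin θ ^ 2| ≤ 1 ∧ |cos θ * sin θ| ≤ 1 ∧
    |2 * (cos θ * sin θ)| ≤ 1 ∧ |cos θ ^ 2| ≤ 1 ∧ |sin θ ^ 2| ≤ 1 := by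
  have h := sin_sq_add_cos_sq θ
  refine ⟨?_, ?_, ?_, ?_, ?_⟩ <;> rw [abs_le] <;> constructor <;>
    nlinarith [sq_nonneg (cos θ - sin θ), sq_nonneg (cos θ + sin θ), sq_nonneg (cos θ),
      sq_nonneg (sin θ)]

theorem uF_le {P : Matrix (Fin 2) (Fin 2) ℝ} {a : ℝ} (h : ∀ i j, |P i j| ≤ a) (θ : ℝ) :
    |uF P θ| ≤ 3 * a := by
  obtain ⟨t1, t2, t3, t4, t5⟩ := trig_bounds θ
  have := abs_form_le (h 0 0) (h 0 1) (h 1 0) t1 t2 t2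
  convert this using 2
  unfold uF; ring

theorem wF_le {P : Matrix (Fin 2) (Fin 2) ℝ} {a : ℝ} (h : ∀ i j, |P i j| ≤ a) (θ : ℝ) :
    |wF P θ| ≤ 3 * a := by
  obtain ⟨t1, t2, t3, t4, t5⟩ := trig_bounds θ
  have t6 : |-((cos θ ^ 2 - sin θ ^ 2) / 2)| ≤ 1 := by
    rw [abs_neg, abs_div, abs_two]; linarith
  have := abs_form_le (h 0 0) (h 0 1) (h 1 0) t3 t6 t6
  convert this using 2
  unfold wF; ring

theorem yF_le {P : Matrix (Fin 2) (Fin 2) ℝ} {a : ℝ} (h : ∀ i j, |P i j| ≤ a) (θ : ℝ) :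
    |yF P θ| ≤ 3 * a := by
  obtain ⟨t1, t2, t3, t4, t5⟩ := trig_bounds θ
  have := abs_form_le (h 0 0) (h 0 1) (h 1 0) t3 t5 ((abs_neg _).trans_le t4)
  convert this using 2
  unfold yF; ring

theorem quad_form_le {F : Matrix (Fin 2) (Fin 2) ℝ} {a : ℝ} (hF : ∀ i j, |F i j| ≤ a)
    {x1 x2 y1 y2 : ℝ} (hx1 : |x1| ≤ 1) (hx2 : |x2| ≤ 1) (hy1 : |y1| ≤ 1) (hy2 : |y2| ≤ 1) :
    |y1 * (F 0 0 * x1 + F 0 1 * x2) + y2 * (F 1 0 * x1 + F 1 1 * x2)| ≤ 4 * a := by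
  have mulb : ∀ {x c b : ℝ}, |x| ≤ b → |c| ≤ 1 → |x * c| ≤ b := by
    intro x c b hx hc
    rw [abs_mul]
    nlinarith [abs_nonneg x, abs_nonneg c]
  have a1 := mulb (mulb (hF 0 0) hx1) hy1
  have a2 := mulb (mulb (hF 0 1) hx2) hy1
  have a3 := mulb (mulb (hF 1 0) hx1) hy2
  have a4 := mulb (mulb (hF 1 1) hx2) hy2
  rw [abs_le] at a1 a2 a3 a4 ⊢
  constructor <;> linarith

/-- Expansion for a single traceless matrix `Q` with a third-order perturbation `R`: in the basis
`(e_θ, e_θ^⊥)` the vector `exp (Q + R) e_θ` has the shape required by `core`, because `Q²` is the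
scalar `-det Q`. -/
theorem log_vnorm_expand (Q R : Matrix (Fin 2) (Fin 2) ℝ) (ε s θ : ℝ) (hs : s = 1 ∨ s = -1)
    (htr : Q.trace = 0)
    (hε : ε ≤ 1 / 400) (hQ : ∀ i j, |Q i j| ≤ ε) (hR : ∀ i j, |R i j| ≤ ε ^ 3) :
    |Real.log (vnorm ((s • matExp (Q + R)).mulVec ![Real.cos θ, Real.sin θ]))
      - (uF Q θ + wF Q θ * yF Q θ)| ≤ 1920 * ε ^ 3 := by
  have hε0 : 0 ≤ ε := (abs_nonneg _).trans (hQ 0 0)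
  have hF := matExp_rem_entry Q R ε hε hQ hR
  obtain ⟨F, hFdef⟩ : ∃ F, F = matExp (Q + R) - (1 + Q + (1 / 2 : ℝ) • Q ^ 2) := ⟨_, rfl⟩
  rw [← hFdef] at hF
  have hexp : matExp (Q + R) = 1 + Q + (1 / 2 : ℝ) • Q ^ 2 + F := by rw [hFdef]; abel
  have hc := abs_cos_le_one θ
  have hsn := abs_sin_le_one θ
  have hcs := sin_sq_add_cos_sq θ
  have htr' : Q 1 1 = - Q 0 0 := by
    rw [Matrix.trace_fin_two] at htr; linarith
  have hu := uF_le hQ θ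
  have hy := yF_le hQ θ
  -- `t'` is the entry `⟨e_θ, Q e_θ^⊥⟩` of `Q` in the rotated basis.
  obtain ⟨t', ht'⟩ : ∃ t', t' = yF Q θ - 2 * wF Q θ := ⟨_, rfl⟩
  have ht'b : |t'| ≤ 3 * ε := by
    have hQT : ∀ i j, |Q.transpose i j| ≤ ε := fun i j => hQ j i
    have h := yF_le hQT θ
    rw [← abs_neg] at h
    convert h using 2
    rw [ht']
    unfold yF wF
    simp only [Matrix.transpose_apply]
    ring
  have key := core (4 * ε) (uF Q θ) (-yF Q θ) t'
    (cos θ * (F 0 0 * cos θ + F 0 1 * sin θ) + sin θ * (F 1 0 * cos θ + F 1 1 * sin θ))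
    (-sin θ * (F 0 0 * cos θ + F 0 1 * sin θ) + cos θ * (F 1 0 * cos θ + F 1 1 * sin θ))
    (by linarith) (by linarith) (by rw [abs_neg]; linarith) (by linarith)
    ((quad_form_le hF hc hsn hc hsn).trans (by nlinarith [pow_nonneg hε0 3]))
    ((quad_form_le hF hc hsn ((abs_neg _).trans_le hsn) hc).trans
      (by nlinarith [pow_nonneg hε0 3]))
  have hG : uF Q θ + -yF Q θ * (-yF Q θ + t') / 2 = uF Q θ + wF Q θ * yF Q θ := by
    rw [ht']; ring
  rw [hG] at key
  have hs2 : s ^ 2 = 1 := by rcases hs with h | h <;> rw [h] <;> norm_num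
  have hN : vnorm ((s • matExp (Q + R)).mulVec ![Real.cos θ, Real.sin θ]) =
      √((1 + uF Q θ + (uF Q θ ^ 2 + -yF Q θ * t') / 2 +
        (cos θ * (F 0 0 * cos θ + F 0 1 * sin θ) + sin θ * (F 1 0 * cos θ + F 1 1 * sin θ))) ^ 2 +
       (-yF Q θ +
        (-sin θ * (F 0 0 * cos θ + F 0 1 * sin θ) +
          cos θ * (F 1 0 * cos θ + F 1 1 * sin θ))) ^ 2) := by
    -- `-det Q` in the rotated basis equals `-det Q` in the standard one.
    have hdet : uF Q θ ^ 2 + -yF Q θ * t' = Q 0 0 ^ 2 + Q 0 1 * Q 1 0 := by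
      rw [ht']
      unfold uF yF wF
      linear_combination (Q 0 0 ^ 2 + Q 0 1 * Q 1 0) * (sin θ ^ 2 + cos θ ^ 2 + 1) * hcs
    rw [hdet]
    obtain ⟨w, hw⟩ : ∃ w, w = (matExp (Q + R)).mulVec ![Real.cos θ, Real.sin θ] := ⟨_, rfl⟩
    have hw0 : w 0 = (1 + (Q 0 0 ^ 2 + Q 0 1 * Q 1 0) / 2) * cos θ
        + (Q 0 0 * cos θ + Q 0 1 * sin θ) + (F 0 0 * cos θ + F 0 1 * sin θ) := by
      rw [hw, hexp]
      simp [Matrix.mulVec, dotProduct, Fin.sum_univ_two, pow_two Q, Matrix.mul_apply, htr']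
      ring
    have hw1 : w 1 = (1 + (Q 0 0 ^ 2 + Q 0 1 * Q 1 0) / 2) * sin θ
        + (Q 1 0 * cos θ - Q 0 0 * sin θ) + (F 1 0 * cos θ + F 1 1 * sin θ) := by
      rw [hw, hexp]
      simp [Matrix.mulVec, dotProduct, Fin.sum_univ_two, pow_two Q, Matrix.mul_apply, htr']
      ring
    have hX : cos θ * w 0 + sin θ * w 1 = 1 + uF Q θ + (Q 0 0 ^ 2 + Q 0 1 * Q 1 0) / 2 +
        (cos θ * (F 0 0 * cos θ + F 0 1 * sin θ)
          + sin θ * (F 1 0 * cos θ + F 1 1 * sin θ)) := by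
      rw [hw0, hw1]
      unfold uF
      linear_combination (1 + (Q 0 0 ^ 2 + Q 0 1 * Q 1 0) / 2) * hcs
    have hY : -sin θ * w 0 + cos θ * w 1 = -yF Q θ +
        (-sin θ * (F 0 0 * cos θ + F 0 1 * sin θ)
          + cos θ * (F 1 0 * cos θ + F 1 1 * sin θ)) := by
      rw [hw0, hw1]
      unfold yF
      ring
    rw [← hX, ← hY, Matrix.smul_mulVec, ← hw]
    unfold vnorm
    congr 1
    simp only [Pi.smul_apply, smul_eq_mul]
    linear_combination (w 0 ^ 2 + w 1 ^ 2) * hs2 - (w 0 ^ 2 + w 1 ^ 2) * hcs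
  rw [hN, Real.log_sqrt (by positivity)]
  refine le_of_eq_of_le ?_ (key.trans (by nlinarith [pow_nonneg hε0 3]))
  congr 1
  ring

/-! ### The complex coefficients in real form -/

theorem exp_two_theta (θ : ℝ) : Complex.exp (2 * θ * Complex.I) =
    ⟨cos θ ^ 2 - sin θ ^ 2, 2 * (cos θ * sin θ)⟩ := by
  have : (2 * θ * Complex.I : ℂ) = ((2 * θ : ℝ) : ℂ) * Complex.I := by push_cast; ring
  rw [this]
  apply Complex.ext
  · rw [Complex.exp_ofReal_mul_I_re, cos_two_mul']
  · rw [Complex.exp_ofReal_mul_I_im, sin_two_mul]; ring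

theorem exp_four_theta (θ : ℝ) : Complex.exp (4 * θ * Complex.I) =
    Complex.exp (2 * θ * Complex.I) ^ 2 := by
  rw [← Complex.exp_nat_mul]; congr 1; push_cast; ring

theorem sqrt_two_inv_mul : ((√2 : ℝ) : ℂ)⁻¹ * ((√2 : ℝ) : ℂ)⁻¹ = 1 / 2 := by
  rw [← mul_inv, ← Complex.ofReal_mul, Real.mul_self_sqrt (by norm_num)]
  norm_num

theorem dotc_vplus (A : Matrix (Fin 2) (Fin 2) ℂ) : dotc vplus (A.mulVec vplus) =
    (1 / 2) * (A 0 0 + A 1 1 + Complex.I * (A 1 0 - A 0 1)) := by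
  rw [← sqrt_two_inv_mul]
  simp only [dotc, vplus, Matrix.mulVec, dotProduct, Fin.sum_univ_two, Matrix.cons_val_zero,
    Matrix.cons_val_one, map_mul, map_inv₀, map_neg, map_one, Complex.conj_I, Complex.conj_ofReal,
    div_eq_mul_inv]
  linear_combination (-((√2 : ℝ) : ℂ)⁻¹ * ((√2 : ℝ) : ℂ)⁻¹ * A 1 1) * Complex.I_mul_I

theorem dotc_vminus (A : Matrix (Fin 2) (Fin 2) ℂ) : dotc vminus (A.mulVec vplus) =
    (1 / 2) * (A 0 0 - A 1 1 - Complex.I * (A 1 0 + A 0 1)) := by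
  rw [← sqrt_two_inv_mul]
  simp only [dotc, vplus, vminus, Matrix.mulVec, dotProduct, Fin.sum_univ_two,
    Matrix.cons_val_zero,
    Matrix.cons_val_one, map_mul, map_inv₀, map_one, Complex.conj_I, Complex.conj_ofReal,
    div_eq_mul_inv]
  linear_combination (((√2 : ℝ) : ℂ)⁻¹ * ((√2 : ℝ) : ℂ)⁻¹ * A 1 1) * Complex.I_mul_I

theorem alphaC_eq (P : Matrix (Fin 2) (Fin 2) ℝ) :
    alphaC P = ⟨(P 0 0 + P 1 1) / 2, (P 1 0 - P 0 1) / 2⟩ := by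
  unfold alphaC
  rw [dotc_vplus]
  apply Complex.ext <;> simp [toC] <;> ring

theorem betaC_eq (P : Matrix (Fin 2) (Fin 2) ℝ) :
    betaC P = ⟨(P 0 0 - P 1 1) / 2, -(P 0 1 + P 1 0) / 2⟩ := by
  unfold betaC
  rw [dotc_vminus]
  apply Complex.ext <;> simp [toC] <;> ring

theorem betaC_eq' {P : Matrix (Fin 2) (Fin 2) ℝ} (h : P.trace = 0) :
    betaC P = ⟨P 0 0, -(P 0 1 + P 1 0) / 2⟩ := by
  rw [Matrix.trace_fin_two] at h
  rw [betaC_eq]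
  apply Complex.ext
  · simp only; linarith
  · rfl

theorem gammaC_eq {P : Matrix (Fin 2) (Fin 2) ℝ} (h : P.trace = 0) :
    gammaC P = ⟨(P 1 0 ^ 2 - P 0 1 ^ 2) / 2, P 0 0 * (P 1 0 - P 0 1)⟩ := by
  rw [Matrix.trace_fin_two] at h
  have h' : P 1 1 = - P 0 0 := by linarith
  unfold gammaC
  rw [dotc_vminus]
  apply Complex.ext <;>
    simp [toC, Matrix.mul_apply, Fin.sum_univ_two, Matrix.conjTranspose_apply, h'] <;> ring

theorem deltaC_eq {P R : Matrix (Fin 2) (Fin 2) ℝ} (h : P.trace = 0) (hR : R.trace = 0) :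
    deltaC P R = ⟨(P 1 0 * R 1 0 - P 0 1 * R 0 1) / 2,
      (P 0 0 * (R 1 0 - R 0 1) + R 0 0 * (P 1 0 - P 0 1)) / 2⟩ := by
  rw [Matrix.trace_fin_two] at h hR
  have h' : P 1 1 = - P 0 0 := by linarith
  have hR' : R 1 1 = - R 0 0 := by linarith
  unfold deltaC
  rw [dotc_vminus]
  apply Complex.ext <;>
    simp [toC, Matrix.mul_apply, Fin.sum_univ_two, Matrix.conjTranspose_apply, h', hR'] <;> ring

theorem polP_eq (P : Matrix (Fin 2) (Fin 2) ℝ) (θ : ℝ) :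
    polP P θ = (alphaC P - betaC P * Complex.exp (2 * θ * Complex.I)).im := by
  rw [alphaC_eq, betaC_eq, exp_two_theta]
  have hcs := sin_sq_add_cos_sq θ
  have : (-(θ : ℂ) * Complex.I : ℂ) = ((-θ : ℝ) : ℂ) * Complex.I := by push_cast; ring
  unfold polP
  rw [this, Complex.mul_im, Complex.exp_ofReal_mul_I_re, Complex.exp_ofReal_mul_I_im]
  simp [Matrix.mulVec, dotProduct, Fin.sum_univ_two, -Complex.ofReal_cos, -Complex.ofReal_sin]
  linear_combination ((P 1 0 - P 0 1) / 2) * hcs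

theorem lin_term {P : Matrix (Fin 2) (Fin 2) ℝ} (h : P.trace = 0) (x θ : ℝ) :
    ((x : ℂ) * (betaC P * Complex.exp (2 * θ * Complex.I))).re = x * uF P θ := by
  rw [betaC_eq' h, exp_two_theta, Complex.re_ofReal_mul, Complex.mul_re]
  unfold uF
  ring

/-- The diagonal second-order coefficient factors as `wF P * yF P`; the underlying reason is
`γ = i (P₁₀ - P₀₁) β` for traceless `P`. -/
theorem diag_term {P : Matrix (Fin 2) (Fin 2) ℝ} (h : P.trace = 0) (x θ : ℝ) :
    (((x / 2 : ℝ) : ℂ) * ((Complex.normSq (betaC P) : ℂ) +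
      gammaC P * Complex.exp (2 * θ * Complex.I) -
      betaC P ^ 2 * Complex.exp (4 * θ * Complex.I))).re = x * (wF P θ * yF P θ) := by
  have hcs := sin_sq_add_cos_sq θ
  rw [exp_four_theta, betaC_eq' h, gammaC_eq h, exp_two_theta, Complex.re_ofReal_mul]
  simp only [Complex.sub_re, Complex.add_re, Complex.mul_re, Complex.mul_im, pow_two,
    Complex.ofReal_re, Complex.normSq_mk]
  unfold wF yF
  -- Powers of `sin² θ + cos² θ` make all terms homogeneous of degree four in `cos θ`, `sin θ`.
  linear_combination (-x / 2 * ((P 0 0 ^ 2 + (P 0 1 + P 1 0) ^ 2 / 4) * (sin θ ^ 2 + cos θ ^ 2 + 1)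
    + ((P 1 0 ^ 2 - P 0 1 ^ 2) / 2 * (cos θ ^ 2 - sin θ ^ 2)
      - P 0 0 * (P 1 0 - P 0 1) * (2 * (cos θ * sin θ))))) * hcs

/-- The mixed coefficient is the polarization of the diagonal one. In `δ` the part `P₁P₂ + P₂P₁` drops
out, being a scalar matrix for traceless `P₁` and `P₂`, while `v̄ ⊥ v`. -/
theorem cross_term {P R : Matrix (Fin 2) (Fin 2) ℝ} (h : P.trace = 0) (hR : R.trace = 0)
    (x θ : ℝ) :
    ((x : ℂ) * (betaC P * starRingEnd ℂ (betaC R) +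
      deltaC P R * Complex.exp (2 * θ * Complex.I) -
      betaC P * betaC R * Complex.exp (4 * θ * Complex.I))).re
    = x * (wF P θ * yF R θ + wF R θ * yF P θ) := by
  have hcs := sin_sq_add_cos_sq θ
  rw [exp_four_theta, betaC_eq' h, betaC_eq' hR, deltaC_eq h hR, exp_two_theta,
    Complex.re_ofReal_mul]
  simp only [Complex.sub_re, Complex.add_re, Complex.mul_re, Complex.mul_im, pow_two,
    Complex.conj_re, Complex.conj_im]
  unfold wF yF
  -- Same homogenization as for the diagonal term.
  linear_combination (-x * ((P 0 0 * R 0 0 + (P 0 1 + P 1 0) * (R 0 1 + R 1 0) / 4)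
      * (sin θ ^ 2 + cos θ ^ 2 + 1)
    + ((P 1 0 * R 1 0 - P 0 1 * R 0 1) / 2 * (cos θ ^ 2 - sin θ ^ 2)
      - (P 0 0 * (R 1 0 - R 0 1) + R 0 0 * (P 1 0 - P 0 1)) / 2
        * (2 * (cos θ * sin θ))))) * hcs

/-! ### Summation over the exponents -/

theorem uF_sum (S : Finset ℕ) (x : ℕ → ℝ) (P : ℕ → Matrix (Fin 2) (Fin 2) ℝ) (θ : ℝ) :
    uF (∑ k ∈ S, x k • P k) θ = ∑ k ∈ S, x k * uF (P k) θ := by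
  simp only [uF, Matrix.sum_apply, Matrix.smul_apply, smul_eq_mul, Finset.sum_mul,
    ← Finset.sum_add_distrib]
  exact Finset.sum_congr rfl fun k _ => by ring

theorem wF_sum (S : Finset ℕ) (x : ℕ → ℝ) (P : ℕ → Matrix (Fin 2) (Fin 2) ℝ) (θ : ℝ) :
    wF (∑ k ∈ S, x k • P k) θ = ∑ k ∈ S, x k * wF (P k) θ := by
  simp only [wF, Matrix.sum_apply, Matrix.smul_apply, smul_eq_mul, Finset.sum_mul,
    Finset.mul_sum, ← Finset.sum_add_distrib, Finset.sum_div, ← Finset.sum_sub_distrib]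
  exact Finset.sum_congr rfl fun k _ => by ring

theorem yF_sum (S : Finset ℕ) (x : ℕ → ℝ) (P : ℕ → Matrix (Fin 2) (Fin 2) ℝ) (θ : ℝ) :
    yF (∑ k ∈ S, x k • P k) θ = ∑ k ∈ S, x k * yF (P k) θ := by
  simp only [yF, Matrix.sum_apply, Matrix.smul_apply, smul_eq_mul, Finset.sum_mul,
    Finset.mul_sum, ← Finset.sum_add_distrib, ← Finset.sum_sub_distrib]
  exact Finset.sum_congr rfl fun k _ => by ring

/-- Dropping from a finite sum the terms that are bounded by `B` changes it by at most `|S| B`. -/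
theorem sum_filter_close {ι : Type*} (S : Finset ι) (p : ι → Prop) [DecidablePred p]
    (f : ι → ℝ) (B : ℝ) (hB : 0 ≤ B) (h : ∀ k ∈ S, ¬ p k → |f k| ≤ B) :
    |∑ k ∈ S, f k - ∑ k ∈ S.filter p, f k| ≤ S.card * B := by
  rw [← Finset.sum_filter_add_sum_filter_not S p f, add_sub_cancel_left]
  refine (Finset.abs_sum_le_sum_abs _ _).trans ?_
  refine (Finset.sum_le_card_nsmul _ _ B fun k hk => ?_).trans ?_
  · rw [Finset.mem_filter] at hk
    exact h k hk.1 hk.2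
  · rw [nsmul_eq_mul]
    have : ((S.filter (fun k => ¬ p k)).card : ℝ) ≤ S.card := by
      exact_mod_cast Finset.card_filter_le _ _
    gcongr

/-- **Lemma 1, part 1.**  (a) `p_{k,σ}(θ) = Im(α_{η_k,σ} - β_{η_k,σ} e^{2iθ})`, and
(b) the uniform expansion of `log‖M T_{λ,σ} M⁻¹ e_θ‖` up to errors `O(λ^{3η_1})`,
the sums running over the finitely many exponents `η_k < 3η_1`, `2η_k < 3η_1`,
respectively `η_{k_1} + η_{k_2} < 3η_1`. -/
theorem log_norm_expansion
    {S : Type*} [MeasurableSpace S] (μ : Measure S) [IsProbabilityMeasure μ]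
    (T : ℝ → S → Matrix (Fin 2) (Fin 2) ℝ)
    (hTdet : ∀ lam σ, (T lam σ).det = 1)
    (M : Matrix (Fin 2) (Fin 2) ℝ) (hM : M.det = 1)
    (η : ℕ → ℝ) (P : ℕ → S → Matrix (Fin 2) (Fin 2) ℝ)
    (hηpos : ∀ k, 1 ≤ k → 0 < η k)
    (hηmono : ∀ j k, 1 ≤ j → j < k → η j < η k)
    (hPtr : ∀ k σ, (P k σ).trace = 0)
    (hPmeas : ∀ k i j, Measurable fun σ => P k σ i j)
    (hPbdd : ∃ Cb : ℝ, ∀ k σ i j, |P k σ i j| ≤ Cb)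
    -- truncation of the expansion: all exponents `≤ 3η_1` are among `η_1,…,η_{K'}`:
    (K' : ℕ) (hK' : 1 ≤ K') (h3η : 3 * η 1 ≤ η (K' + 1))
    (s : S → ℝ) (hs : ∀ σ, s σ = 1 ∨ s σ = -1)
    (hexp : ∃ Cr > (0:ℝ), ∃ lamr > (0:ℝ), ∀ lam : ℝ, 0 < lam → lam ≤ lamr → ∀ σ : S,
      ∃ R : Matrix (Fin 2) (Fin 2) ℝ,
        M * T lam σ * M⁻¹ =
          s σ • matExp ((∑ k ∈ Finset.Icc 1 K', lam ^ (η k) • P k σ) + R) ∧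
        ∀ i j, |R i j| ≤ Cr * lam ^ (η (K' + 1))) :
    -- (a)
    (∀ k : ℕ, ∀ σ : S, ∀ θ : ℝ,
      polP (P k σ) θ =
        (alphaC (P k σ) - betaC (P k σ) * Complex.exp (2 * θ * Complex.I)).im) ∧
    -- (b)
    (∃ C > (0:ℝ), ∃ lam₀ > (0:ℝ), ∀ lam : ℝ, 0 < lam → lam ≤ lam₀ → ∀ σ : S, ∀ θ : ℝ,
      |Real.log (vnorm ((M * T lam σ * M⁻¹).mulVec ![Real.cos θ, Real.sin θ])) -
        ((∑ k ∈ (Finset.Icc 1 K').filter (fun k => η k < 3 * η 1),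
            ((lam ^ (η k) : ℝ) : ℂ) * (betaC (P k σ) * Complex.exp (2 * θ * Complex.I))) +
         (∑ k ∈ (Finset.Icc 1 K').filter (fun k => 2 * η k < 3 * η 1),
            ((lam ^ (2 * η k) / 2 : ℝ) : ℂ) *
              ((Complex.normSq (betaC (P k σ)) : ℂ) +
                gammaC (P k σ) * Complex.exp (2 * θ * Complex.I) -
                betaC (P k σ) ^ 2 * Complex.exp (4 * θ * Complex.I))) +
         (∑ kk ∈ ((Finset.Icc 1 K') ×ˢ (Finset.Icc 1 K')).filter
              (fun kk => kk.1 < kk.2 ∧ η kk.1 + η kk.2 < 3 * η 1),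
            ((lam ^ (η kk.1 + η kk.2) : ℝ) : ℂ) *
              (betaC (P kk.1 σ) * starRingEnd ℂ (betaC (P kk.2 σ)) +
                deltaC (P kk.1 σ) (P kk.2 σ) * Complex.exp (2 * θ * Complex.I) -
                betaC (P kk.1 σ) * betaC (P kk.2 σ) *
                  Complex.exp (4 * θ * Complex.I)))).re|
        ≤ C * lam ^ (3 * η 1)) := by
  refine ⟨fun k σ θ => polP_eq (P k σ) θ, ?_⟩
  obtain ⟨Cb, hCb⟩ := hPbdd
  obtain ⟨Cr, hCr, lamr, hlamr, hexp⟩ := hexp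
  -- `Cb` carries no sign information when `S` is empty, hence the maximum with `1`.
  obtain ⟨B, hB1, hB⟩ : ∃ B : ℝ, 1 ≤ B ∧ ∀ k σ i j, |P k σ i j| ≤ B :=
    ⟨max 1 Cb, le_max_left _ _, fun k σ i j => (hCb k σ i j).trans (le_max_right _ _)⟩
  have hB0 : 0 ≤ B := by linarith
  have hη1 : 0 < η 1 := hηpos 1 le_rfl
  -- With `ε = c * lam ^ η 1`, this `c` bounds the entries of the truncated exponent by `ε`
  -- and those of the remainder `R` by `ε ^ 3`.
  obtain ⟨c, hc⟩ : ∃ c : ℝ, c = K' * B + Cr + 1 := ⟨_, rfl⟩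
  have hc1 : 1 ≤ c := by rw [hc]; nlinarith [(Nat.cast_nonneg K' : (0:ℝ) ≤ K')]
  have hcr : Cr ≤ c := by rw [hc]; nlinarith [(Nat.cast_nonneg K' : (0:ℝ) ≤ K')]
  have hcK : K' * B ≤ c := by rw [hc]; linarith
  have hc3 : Cr ≤ c ^ 3 := hcr.trans (by nlinarith [sq_nonneg c])
  -- One summand for the third-order error and one for each sum that is truncated.
  obtain ⟨D, hD⟩ : ∃ D : ℝ, D = 1920 * c ^ 3 + K' * (3 * B) + K' * (9 * B ^ 2)
    + (K' * K') * (18 * B ^ 2) := ⟨_, rfl⟩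
  have hDpos : 0 < D := by rw [hD]; positivity
  -- The last threshold makes `ε = c * lam ^ η 1 ≤ 1 / 400`, as `log_vnorm_expand` requires.
  refine ⟨D, hDpos, min (min lamr 1) ((1 / (400 * c)) ^ (1 / η 1)), by positivity, ?_⟩
  intro lam hlam hle σ θ
  have hlam1 : lam ≤ 1 := hle.trans ((min_le_left _ _).trans (min_le_right _ _))
  have hlamr' : lam ≤ lamr := hle.trans ((min_le_left _ _).trans (min_le_left _ _))
  have hlam2 : lam ≤ (1 / (400 * c)) ^ (1 / η 1) := hle.trans (min_le_right _ _)
  obtain ⟨R, hR, hRb⟩ := hexp lam hlam hlamr' σ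
  have hmon : ∀ a b : ℝ, a ≤ b → lam ^ b ≤ lam ^ a := fun a b hab =>
    Real.rpow_le_rpow_of_exponent_ge hlam hlam1 hab
  have hpow3 : lam ^ (3 * η 1) = (lam ^ η 1) ^ 3 := by
    rw [mul_comm, Real.rpow_mul hlam.le]; norm_cast
  obtain ⟨ε, hε⟩ : ∃ ε : ℝ, ε = c * lam ^ η 1 := ⟨_, rfl⟩
  have hε3 : ε ^ 3 = c ^ 3 * lam ^ (3 * η 1) := by rw [hε, hpow3]; ring
  have hL0 : 0 ≤ lam ^ (3 * η 1) := by positivity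
  have hεle : ε ≤ 1 / 400 := by
    have h1 : lam ^ η 1 ≤ ((1 / (400 * c)) ^ (1 / η 1)) ^ η 1 :=
      Real.rpow_le_rpow hlam.le hlam2 hη1.le
    rw [← Real.rpow_mul (by positivity), one_div_mul_cancel hη1.ne', Real.rpow_one] at h1
    rw [hε]
    calc c * lam ^ η 1 ≤ c * (1 / (400 * c)) := by gcongr
      _ = 1 / 400 := by field_simp
  obtain ⟨Q, hQ⟩ : ∃ Q, Q = ∑ k ∈ Finset.Icc 1 K', lam ^ (η k) • P k σ := ⟨_, rfl⟩
  have hη1le : ∀ k, 1 ≤ k → η 1 ≤ η k := fun k hk => by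
    rcases hk.eq_or_lt with h | h
    · rw [h]
    · exact (hηmono 1 k le_rfl h).le
  have hcard : ((Finset.Icc 1 K').card : ℝ) = K' := by simp
  have hQb : ∀ i j, |Q i j| ≤ ε := by
    intro i j
    rw [hQ, Matrix.sum_apply]
    refine (Finset.abs_sum_le_sum_abs _ _).trans ?_
    refine (Finset.sum_le_card_nsmul _ _ (lam ^ η 1 * B) fun k hk => ?_).trans ?_
    · rw [Matrix.smul_apply, smul_eq_mul, abs_mul, abs_of_nonneg (by positivity)]
      exact mul_le_mul (hmon _ _ (hη1le k (Finset.mem_Icc.1 hk).1)) (hB k σ i j)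
        (abs_nonneg _) (by positivity)
    · rw [nsmul_eq_mul, hcard, hε]
      calc K' * (lam ^ η 1 * B) = (K' * B) * lam ^ η 1 := by ring
        _ ≤ c * lam ^ η 1 := by gcongr
  have hRb' : ∀ i j, |R i j| ≤ ε ^ 3 := by
    intro i j
    refine (hRb i j).trans ?_
    rw [hε3]
    exact mul_le_mul hc3 (hmon _ _ h3η) (by positivity) (by positivity)
  have hQtr : Q.trace = 0 := by
    rw [hQ, Matrix.trace_sum]
    exact Finset.sum_eq_zero fun k _ => by rw [Matrix.trace_smul, hPtr, smul_zero]
  have key := log_vnorm_expand Q R ε (s σ) θ (hs σ) hQtr hεle hQb hRb'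
  rw [hR, ← hQ]
  have hu := fun k => uF_le (hB k σ) θ
  have hw := fun k => wF_le (hB k σ) θ
  have hy := fun k => yF_le (hB k σ) θ
  have hwy : ∀ k l, |wF (P k σ) θ * yF (P l σ) θ| ≤ 9 * B ^ 2 := by
    intro k l
    rw [abs_mul]
    calc _ ≤ (3 * B) * (3 * B) :=
          mul_le_mul (hw k) (hy l) (abs_nonneg _) (by positivity)
      _ = _ := by ring
  have hsplit : uF Q θ + wF Q θ * yF Q θ =
      ∑ k ∈ Finset.Icc 1 K', lam ^ η k * uF (P k σ) θ
      + ∑ k ∈ Finset.Icc 1 K', lam ^ (2 * η k) * (wF (P k σ) θ * yF (P k σ) θ)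
      + ∑ kk ∈ ((Finset.Icc 1 K') ×ˢ (Finset.Icc 1 K')).filter (fun kk => kk.1 < kk.2),
          lam ^ (η kk.1 + η kk.2) * (wF (P kk.1 σ) θ * yF (P kk.2 σ) θ
            + wF (P kk.2 σ) θ * yF (P kk.1 σ) θ) := by
    rw [hQ, uF_sum, wF_sum, yF_sum, sum_sq_split, add_assoc]
    congr 2
    · refine Finset.sum_congr rfl fun k _ => ?_
      rw [two_mul, Real.rpow_add hlam]; ring
    · refine Finset.sum_congr rfl fun kk _ => ?_
      rw [Real.rpow_add hlam]; ring
  have d1 := sum_filter_close (Finset.Icc 1 K') (fun k => η k < 3 * η 1)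
    (fun k => lam ^ η k * uF (P k σ) θ) (lam ^ (3 * η 1) * (3 * B)) (by positivity) (by
      intro k _ hk
      rw [abs_mul, abs_of_nonneg (by positivity : 0 ≤ lam ^ η k)]
      exact mul_le_mul (hmon _ _ (not_lt.1 hk)) (hu k) (abs_nonneg _) hL0)
  have d2 := sum_filter_close (Finset.Icc 1 K') (fun k => 2 * η k < 3 * η 1)
    (fun k => lam ^ (2 * η k) * (wF (P k σ) θ * yF (P k σ) θ))
    (lam ^ (3 * η 1) * (9 * B ^ 2)) (by positivity) (by
      intro k _ hk
      rw [abs_mul, abs_of_nonneg (by positivity : 0 ≤ lam ^ (2 * η k))]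
      exact mul_le_mul (hmon _ _ (not_lt.1 hk)) (hwy k k) (abs_nonneg _) hL0)
  have d3 := sum_filter_close
    (((Finset.Icc 1 K') ×ˢ (Finset.Icc 1 K')).filter (fun kk => kk.1 < kk.2))
    (fun kk => η kk.1 + η kk.2 < 3 * η 1)
    (fun kk => lam ^ (η kk.1 + η kk.2) * (wF (P kk.1 σ) θ * yF (P kk.2 σ) θ
            + wF (P kk.2 σ) θ * yF (P kk.1 σ) θ))
    (lam ^ (3 * η 1) * (18 * B ^ 2)) (by positivity) (by
      intro kk _ hk
      rw [abs_mul, abs_of_nonneg (by positivity : 0 ≤ lam ^ (η kk.1 + η kk.2))]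
      refine mul_le_mul (hmon _ _ (not_lt.1 hk)) ?_ (abs_nonneg _) hL0
      refine (abs_add_le _ _).trans ?_
      linarith [hwy kk.1 kk.2, hwy kk.2 kk.1])
  rw [Finset.filter_filter] at d3
  have hcard2 : ((((Finset.Icc 1 K') ×ˢ (Finset.Icc 1 K')).filter
      (fun kk : ℕ × ℕ => kk.1 < kk.2)).card : ℝ) ≤ K' * K' := by
    have := Finset.card_filter_le ((Finset.Icc 1 K') ×ˢ (Finset.Icc 1 K'))
      (fun kk : ℕ × ℕ => kk.1 < kk.2)
    rw [Finset.card_product, Nat.card_Icc, Nat.add_sub_cancel] at this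
    exact_mod_cast this
  rw [hcard] at d1 d2
  have d3' := d3.trans (mul_le_mul_of_nonneg_right hcard2
    (by positivity : 0 ≤ lam ^ (3 * η 1) * (18 * B ^ 2)))
  rw [Complex.add_re, Complex.add_re, Complex.re_sum, Complex.re_sum, Complex.re_sum,
    Finset.sum_congr rfl fun k _ => lin_term (hPtr k σ) (lam ^ η k) θ,
    Finset.sum_congr rfl fun k _ => diag_term (hPtr k σ) (lam ^ (2 * η k)) θ,
    Finset.sum_congr rfl fun (kk : ℕ × ℕ) _ =>
      cross_term (hPtr kk.1 σ) (hPtr kk.2 σ) (lam ^ (η kk.1 + η kk.2)) θ]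
  rw [hsplit, hε3] at key
  rw [hD]
  rw [abs_le] at key d1 d2 d3' ⊢
  constructor <;> linarith

end Anomaly10
end

section
/- (Expansion of the projective action at an anomaly.) With the expansion M T_{λ,σ} M^{−1} = ± exp(Σ_{k≥1} λ^{η_k} P_{η_k,σ}), where the exponents satisfy 0 < η_1 < η_2 < ⋯, η_K = 2η_1 and η_{K+1} ≤ η_1+η_2, the projective action satisfies, uniformly in θ and σ: S_{λ,σ}(θ) = θ + Σ_{k=1}^{K} λ^{η_k} p_{k,σ}(θ) + (1/2) λ^{2η_1} p_{1,σ}(θ) ∂_θ p_{1,σ}(θ) + O(λ^{η_{K+1}}), and similarly the inverse action satisfies S_{λ,σ}^{−1}(θ) = θ − Σ_{k=1}^{K} λ^{η_k} p_{k,σ}(θ) + (1/2) λ^{2η_1} p_{1,σ}(θ) ∂_θ p_{1,σ}(θ) + O(λ^{η_{K+1}}). Moreover, if P = [[a,b],[c,−a]], then the associated trigonometric polynomial is Im(⟨v|P|e_θ⟩/⟨v|e_θ⟩) = c cos²θ − b sin²θ − a sin(2θ). -/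
/- Statement 12: expansion of the projective action of the transfer matrices at an
anomaly: S_{λ,σ}(θ) = θ + Σ_{k=1}^K λ^{η_k} p_{k,σ}(θ) + ½λ^{2η_1} p_{1,σ}∂_θp_{1,σ}(θ)
+ O(λ^{η_{K+1}}), and the analogous formula for the inverse action; moreover the
explicit form of the trigonometric polynomials p_{k,σ}. -/

/-!
Write `q(A) = e^{-iθ} ((A e_θ)₀ + i (A e_θ)₁)`, which is linear in `A` with `q(1) = 1` and
`Im q(A) = polP A θ`. If `Re q(A) > 0`, the phase shift of `±A` at `θ` is exactly `arg q(A)`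
(`phaseShift_smul`), i.e. the imaginary part of `log q(A)`.

For `A = Σ_{k ≤ K} λ^{η_k} P_k + R` one has `A = λ^{η_1} P_1 + O(λ^{η_2})`. The assumptions on the
exponents give `O(λ^{3 η_1}) + O(λ^{η_1 + η_2}) = O(λ^{η_{K+1}})`, so the second-order Taylor
expansions of `exp A` and of `log (1 + w)` with `w = q(exp A) - 1` yield, up to that error,
`arg q(exp A) = Σ λ^{η_k} Im q(P_k) + ½ λ^{2 η_1} (Im q(P_1 ^ 2) - Im (q(P_1) ^ 2))`
(`phaseShift_isBigO`). As `P_1` is traceless, the last bracket equals `p_1 ∂_θ p_1`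
(`second_order_term`).

Uniformity in `σ` and `θ` is obtained by stating all estimates as big-O along the filter
`𝓝[>] 0 ×ˢ ⊤` on `ℝ × (S × ℝ)`. The inverse action is the same expansion for `-P_k` and `-R`,
because `(± exp A)⁻¹ = ± exp (-A)`.
-/

open MeasureTheory Filter Real Set

namespace Anomaly12

/-- The exponential of a 2×2 real matrix, `exp A = Σ_n A^n / n!`. -/
noncomputable def matExp (A : Matrix (Fin 2) (Fin 2) ℝ) : Matrix (Fin 2) (Fin 2) ℝ :=
  ∑' n : ℕ, ((n.factorial : ℝ)⁻¹) • A ^ n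

/-- The action of `A ∈ SL(2,ℝ)` on the Prüfer phases: a representative of the angle
`S_A(θ) ∈ ℝ/πℤ` with `e_{S_A(θ)} = ± A e_θ / ‖A e_θ‖`. -/
noncomputable def act (A : Matrix (Fin 2) (Fin 2) ℝ) (θ : ℝ) : ℝ :=
  Complex.arg (((A.mulVec ![Real.cos θ, Real.sin θ]) 0 : ℝ) +
    ((A.mulVec ![Real.cos θ, Real.sin θ]) 1 : ℝ) * Complex.I)

/-- The phase shift `S_A(θ) - θ`, taken as the representative in `(-π/2, π/2]`. -/
noncomputable def phaseShift (A : Matrix (Fin 2) (Fin 2) ℝ) (θ : ℝ) : ℝ :=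
  toIocMod Real.pi_pos (-(π / 2)) (act A θ - θ)

/-- The trigonometric polynomial `p_P(θ) = Im(⟨v|P|e_θ⟩/⟨v|e_θ⟩)`, `v = (1,-i)ᵀ/√2`. -/
noncomputable def polP (P : Matrix (Fin 2) (Fin 2) ℝ) (θ : ℝ) : ℝ :=
  ((((P.mulVec ![Real.cos θ, Real.sin θ]) 0 : ℝ) +
      ((P.mulVec ![Real.cos θ, Real.sin θ]) 1 : ℝ) * Complex.I) *
    Complex.exp (-(θ : ℂ) * Complex.I)).im

section Auxiliary

open Asymptotics Topology
open scoped Matrix.Norms.Operator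

/-! ### The linear map `quot` and the trigonometric polynomials -/

/-- The complex number `e^{-iθ} ((A e_θ)₀ + i (A e_θ)₁)`, that is `⟨v|A|e_θ⟩ / ⟨v|e_θ⟩`, as a
linear function of `A`. Its imaginary part is `polP A θ`. -/
noncomputable def quot (θ : ℝ) : Matrix (Fin 2) (Fin 2) ℝ →ₗ[ℝ] ℂ where
  toFun A := (((A.mulVec ![Real.cos θ, Real.sin θ]) 0 : ℝ) +
      ((A.mulVec ![Real.cos θ, Real.sin θ]) 1 : ℝ) * Complex.I) *
    Complex.exp (-(θ : ℂ) * Complex.I)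
  map_add' A B := by
    simp only [Matrix.add_mulVec, Pi.add_apply]
    push_cast
    ring
  map_smul' c A := by
    simp only [Matrix.smul_mulVec, Pi.smul_apply, smul_eq_mul, RingHom.id_apply,
      Complex.real_smul]
    push_cast
    ring

theorem polP_eq_im (A : Matrix (Fin 2) (Fin 2) ℝ) (θ : ℝ) : polP A θ = (quot θ A).im := rfl

theorem exp_neg_mul_I (θ : ℝ) :
    Complex.exp (-(θ : ℂ) * Complex.I) = (Real.cos θ : ℂ) - (Real.sin θ : ℂ) * Complex.I := by
  rw [Complex.exp_mul_I, Complex.cos_neg, Complex.sin_neg]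
  push_cast
  ring

theorem quot_re (A : Matrix (Fin 2) (Fin 2) ℝ) (θ : ℝ) :
    (quot θ A).re = A 0 0 * Real.cos θ ^ 2 + (A 0 1 + A 1 0) * (Real.sin θ * Real.cos θ)
      + A 1 1 * Real.sin θ ^ 2 := by
  simp only [quot, LinearMap.coe_mk, AddHom.coe_mk, exp_neg_mul_I]
  simp [Matrix.mulVec, dotProduct, Fin.sum_univ_two, -Complex.ofReal_cos, -Complex.ofReal_sin]
  ring

theorem polP_eq (A : Matrix (Fin 2) (Fin 2) ℝ) (θ : ℝ) :
    polP A θ = A 1 0 * Real.cos θ ^ 2 - A 0 1 * Real.sin θ ^ 2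
      + (A 1 1 - A 0 0) * (Real.sin θ * Real.cos θ) := by
  simp only [polP, exp_neg_mul_I]
  simp [Matrix.mulVec, dotProduct, Fin.sum_univ_two, -Complex.ofReal_cos, -Complex.ofReal_sin]
  ring

theorem quot_one (θ : ℝ) : quot θ 1 = 1 := by
  apply Complex.ext
  · rw [quot_re]
    simp
  · rw [← polP_eq_im, polP_eq]
    simp

theorem norm_quot_le (A : Matrix (Fin 2) (Fin 2) ℝ) (θ : ℝ) : ‖quot θ A‖ ≤ 2 * ‖A‖ := by
  have hv : ‖(![Real.cos θ, Real.sin θ] : Fin 2 → ℝ)‖ ≤ 1 := by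
    rw [pi_norm_le_iff_of_nonneg zero_le_one]
    intro i
    fin_cases i
    · exact Real.abs_cos_le_one θ
    · exact Real.abs_sin_le_one θ
  have h : ∀ i, ‖(A.mulVec ![Real.cos θ, Real.sin θ]) i‖ ≤ ‖A‖ := fun i =>
    (norm_le_pi_norm _ i).trans ((Matrix.linfty_opNorm_mulVec _ _).trans
      (mul_le_of_le_one_right (norm_nonneg _) hv))
  have hexp : ‖Complex.exp (-(θ : ℂ) * Complex.I)‖ = 1 := by
    have := Complex.norm_exp_ofReal_mul_I (-θ)
    push_cast at this
    exact this
  simp only [quot, LinearMap.coe_mk, AddHom.coe_mk, norm_mul, hexp, mul_one]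
  refine (norm_add_le _ _).trans ?_
  rw [norm_mul, Complex.norm_I, mul_one, Complex.norm_real, Complex.norm_real, two_mul]
  exact add_le_add (h 0) (h 1)

/-- The second-order term: for traceless `P` the matrix `P ^ 2` is scalar, so `quot θ (P ^ 2)` is
real, while `∂_θ p = -2 Re (quot θ P)`. -/
theorem second_order_term (P : Matrix (Fin 2) (Fin 2) ℝ) (hP : P.trace = 0) (θ : ℝ) :
    (quot θ (P * P)).im - ((quot θ P) ^ 2).im = polP P θ * deriv (polP P) θ := by
  have h11 : P 1 1 = - P 0 0 := by
    rw [Matrix.trace_fin_two] at hP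
    linarith
  have hd : deriv (polP P) θ = -2 * (quot θ P).re := by
    have hfun : polP P = fun t => P 1 0 * Real.cos t ^ 2 - P 0 1 * Real.sin t ^ 2
      + (P 1 1 - P 0 0) * (Real.sin t * Real.cos t) := funext (polP_eq P)
    have hc := Real.hasDerivAt_cos θ
    have hs := Real.hasDerivAt_sin θ
    have hD := (((hc.pow 2).const_mul (P 1 0)).sub ((hs.pow 2).const_mul (P 0 1))).add
      ((hs.mul hc).const_mul (P 1 1 - P 0 0))
    rw [hfun]
    refine hD.deriv.trans ?_
    rw [quot_re, h11]
    push_cast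
    ring
  rw [hd, pow_two, Complex.mul_im, ← polP_eq_im, ← polP_eq_im, polP_eq (P * P)]
  simp only [Matrix.mul_apply, Fin.sum_univ_two, h11]
  ring

/-! ### Taylor expansions of the matrix exponential and of the logarithm -/

theorem matExp_eq : matExp = NormedSpace.exp := by
  rw [NormedSpace.exp_eq_tsum ℝ]
  rfl

theorem matExp_mul_neg (A : Matrix (Fin 2) (Fin 2) ℝ) : matExp A * matExp (-A) = 1 := by
  rw [matExp_eq, Matrix.exp_neg]
  exact Matrix.mul_nonsing_inv _ ((Matrix.isUnit_iff_isUnit_det _).1 (Matrix.isUnit_exp A))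

theorem matExp_taylor :
    (fun A : Matrix (Fin 2) (Fin 2) ℝ => matExp A - (1 + A + (1 / 2 : ℝ) • (A * A)))
      =O[𝓝 0] fun A => ‖A‖ ^ 3 := by
  have h := (NormedSpace.exp_hasFPowerSeriesAt_zero
    (𝕂 := ℝ) (𝔸 := Matrix (Fin 2) (Fin 2) ℝ)).isBigO_sub_partialSum_pow 3
  refine h.congr_left fun A => ?_
  simp [FormalMultilinearSeries.partialSum, Finset.sum_range_succ,
    NormedSpace.expSeries_apply_eq, matExp_eq, pow_two]
  rfl

theorem log_taylor :
    (fun w : ℂ => Complex.log (1 + w) - (w - w ^ 2 / 2)) =O[𝓝 0] fun w => ‖w‖ ^ 3 := by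
  refine IsBigO.of_bound 1 ?_
  filter_upwards [Metric.ball_mem_nhds (0 : ℂ) (by norm_num : (0 : ℝ) < 1 / 2)] with w hw
  rw [mem_ball_zero_iff] at hw
  have h := Complex.norm_log_sub_logTaylor_le 2 (hw.trans (by norm_num))
  have hT : Complex.logTaylor (2 + 1) w = w - w ^ 2 / 2 := by
    simp [Complex.logTaylor_succ, Complex.logTaylor_zero]
    ring
  rw [hT] at h
  refine h.trans ?_
  have hi : (1 - ‖w‖)⁻¹ ≤ 2 := by
    rw [inv_le_comm₀ (by linarith) (by norm_num)]
    linarith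
  have hp : 0 ≤ ‖w‖ ^ 3 := by positivity
  rw [norm_pow, norm_norm]
  push_cast
  norm_num
  nlinarith [mul_le_mul_of_nonneg_left hi hp]

/-! ### The phase shift as an argument, and its expansion -/

/-- Rotating `A e_θ` back by `θ` computes the phase shift. The sign `s` and the `2π`-ambiguity of
`arg` disappear modulo `π`. -/
theorem phaseShift_smul (A : Matrix (Fin 2) (Fin 2) ℝ) (θ s : ℝ) (hs : s = 1 ∨ s = -1)
    (hA : 0 < (quot θ A).re) : phaseShift (s • A) θ = (quot θ A).arg := by
  have hz : quot θ A ≠ 0 := fun h => by simp [h] at hA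
  have habs := Complex.abs_arg_lt_pi_div_two_iff.2 (Or.inl hA)
  rw [abs_lt] at habs
  rw [phaseShift, toIocMod_eq_iff]
  refine ⟨⟨habs.1, by linarith [habs.2]⟩, ?_⟩
  set u : ℂ := ((s • A).mulVec ![Real.cos θ, Real.sin θ] 0 : ℝ) +
    ((s • A).mulVec ![Real.cos θ, Real.sin θ] 1 : ℝ) * Complex.I with hu
  have hact : act (s • A) θ = u.arg := rfl
  have hq : (s : ℂ) * quot θ A = u * Complex.exp (-(θ : ℂ) * Complex.I) := by
    have := (quot θ).map_smul s A
    rw [Complex.real_smul] at this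
    exact this.symm
  have hs0 : (s : ℂ) ≠ 0 := by rcases hs with rfl | rfl <;> simp
  have hexp0 := Complex.exp_ne_zero (-(θ : ℂ) * Complex.I)
  have hu0 : u ≠ 0 := by
    rintro h
    rw [h, zero_mul] at hq
    exact mul_ne_zero hs0 hz hq
  have hang := congrArg (fun z : ℂ => (z.arg : Real.Angle)) hq
  have hrot : ((Complex.exp (-(θ : ℂ) * Complex.I)).arg : Real.Angle) = ((-θ : ℝ) : Real.Angle) := by
    rw [← Complex.arg_cos_add_sin_mul_I_coe_angle ((-θ : ℝ) : Real.Angle), Real.Angle.cos_coe,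
      Real.Angle.sin_coe, exp_neg_mul_I, Real.cos_neg, Real.sin_neg]
    push_cast
    rw [neg_mul, ← sub_eq_add_neg]
  rw [Complex.arg_mul_coe_angle hs0 hz, Complex.arg_mul_coe_angle hu0 hexp0, hrot,
    ← Real.Angle.coe_add, ← Real.Angle.coe_add, Real.Angle.angle_eq_iff_two_pi_dvd_sub] at hang
  obtain ⟨k, hk⟩ := hang
  rw [hact]
  rcases hs with rfl | rfl
  · refine ⟨-2 * k, ?_⟩
    simp at hk
    simp
    linarith
  · refine ⟨1 - 2 * k, ?_⟩
    have : Complex.arg (((-1 : ℝ) : ℝ) : ℂ) = π := by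
      push_cast
      exact Complex.arg_neg_one
    rw [this] at hk
    simp
    linarith

/-- The expansion along an arbitrary filter, which encodes uniformity in all parameters.
Here `x`, `y`, `e` play the roles of `λ^{η_1}`, `λ^{η_2}`, `λ^{η_{K+1}}`, and `L` that of
`Σ_{k ≤ K} λ^{η_k} P_k`. -/
theorem phaseShift_isBigO {ι : Type*} {l : Filter ι} {x y e θ s : ι → ℝ}
    {P L R : ι → Matrix (Fin 2) (Fin 2) ℝ}
    (hs : ∀ i, s i = 1 ∨ s i = -1) (htr : ∀ i, (P i).trace = 0)
    (hx : Tendsto x l (𝓝 0)) (hyx : y =O[l] x) (hey : e =O[l] y)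
    (hxx : (fun i => x i * x i) =O[l] y) (hxy : (fun i => x i * y i) =O[l] e)
    (hP : P =O[l] fun _ => (1 : ℝ)) (hL : (fun i => L i - x i • P i) =O[l] y) (hR : R =O[l] e) :
    (fun i => phaseShift (s i • matExp (L i + R i)) (θ i) -
      (polP (L i) (θ i) +
        1 / 2 * (x i * x i) * (polP (P i) (θ i) * deriv (polP (P i)) (θ i)))) =O[l] e := by
  have hq : ∀ {B : ι → Matrix (Fin 2) (Fin 2) ℝ} {g : ι → ℝ}, B =O[l] g →
      (fun i => quot (θ i) (B i)) =O[l] g := fun {B g} h =>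
    (IsBigO.of_bound 2 (Eventually.of_forall fun i => norm_quot_le _ _)).trans h
  have hx3 : (fun i => x i * (x i * x i)) =O[l] e := ((isBigO_refl x l).mul hxx).trans hxy
  set A : ι → Matrix (Fin 2) (Fin 2) ℝ := fun i => L i + R i with hAdef
  have hxP : (fun i => x i • P i) =O[l] x := by
    simpa using (isBigO_refl x l).smul hP
  have hD : (fun i => A i - x i • P i) =O[l] y :=
    (hL.add (hR.trans hey)).congr_left fun i => by
      simp only [hAdef]
      abel
  have hA : A =O[l] x := ((hD.trans hyx).add hxP).congr_left fun i => by abel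
  have hA0 : Tendsto A l (𝓝 0) := hA.trans_tendsto hx
  have hAA : (fun i => A i * A i) =O[l] y := (hA.mul hA).trans hxx
  have hAA' : (fun i => A i * A i - (x i * x i) • (P i * P i)) =O[l] e := by
    have h1 := ((hA.mul hD).trans hxy)
    have h2 := (hD.mul hxP).trans ((hxy.congr_left fun i => mul_comm _ _))
    refine (h1.add h2).congr_left fun i => ?_
    simp only [mul_sub, sub_mul, smul_mul_smul_comm]
    abel
  have hE : (fun i => matExp (A i) - (1 + A i + (1 / 2 : ℝ) • (A i * A i))) =O[l] e := by
    have h1 := matExp_taylor.comp_tendsto hA0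
    have h2 : (fun i => ‖A i‖ ^ 3) =O[l] fun i => x i * (x i * x i) :=
      (hA.norm_left.pow 3).congr_right fun i => by ring
    exact (h1.trans h2).trans hx3
  -- `w` is the deviation from `1` of the rotated vector `e^{-iθ} (exp A) e_θ`.
  set w : ι → ℂ := fun i => quot (θ i) (matExp (A i) - 1) with hwdef
  have hw1 : (fun i => w i - (quot (θ i) (L i) +
      (1 / 2 * (x i * x i) : ℝ) • quot (θ i) (P i * P i))) =O[l] e := by
    have h := hq ((hE.add hR).add (hAA'.const_smul_left (1 / 2 : ℝ)))
    refine h.congr_left fun i => ?_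
    simp only [hwdef, ← map_smul, ← map_add, ← map_sub]
    congr 1
    simp only [Pi.smul_apply, smul_sub, smul_smul, hAdef]
    abel
  have hw2 : (fun i => w i - (x i : ℂ) * quot (θ i) (P i)) =O[l] y := by
    have h := hq (((hE.trans hey).add hD).add (hAA.const_smul_left (1 / 2 : ℝ)))
    refine h.congr_left fun i => ?_
    rw [← Complex.real_smul]
    simp only [hwdef, ← map_smul, ← map_sub]
    congr 1
    simp only [Pi.smul_apply]
    abel
  have hxq : (fun i => (x i : ℂ) * quot (θ i) (P i)) =O[l] x :=
    (hq hxP).congr_left fun i => by rw [map_smul, Complex.real_smul]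
  have hw : w =O[l] x := ((hw2.trans hyx).add hxq).congr_left fun i => by ring
  have hw0 : Tendsto w l (𝓝 0) := hw.trans_tendsto hx
  have hww : (fun i => w i ^ 2 - ((x i * x i : ℝ) : ℂ) * quot (θ i) (P i) ^ 2) =O[l] e := by
    have h1 := (hw.mul hw2).trans hxy
    have h2 := (hxq.mul hw2).trans hxy
    refine (h1.add h2).congr_left fun i => ?_
    push_cast
    ring
  have hlog : (fun i => Complex.log (1 + w i) - (w i - w i ^ 2 / 2)) =O[l] e := by
    have h1 := log_taylor.comp_tendsto hw0
    have h2 : (fun i => ‖w i‖ ^ 3) =O[l] fun i => x i * (x i * x i) :=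
      (hw.norm_left.pow 3).congr_right fun i => by ring
    exact (h1.trans h2).trans hx3
  have htot : (fun i => Complex.log (1 + w i) - (quot (θ i) (L i) +
      ((1 / 2 * (x i * x i) : ℝ) : ℂ) * (quot (θ i) (P i * P i) - quot (θ i) (P i) ^ 2)))
      =O[l] e := by
    refine ((hlog.add hw1).sub (hww.const_mul_left (1 / 2))).congr_left fun i => ?_
    rw [Complex.real_smul]
    push_cast
    ring
  have him := (IsBigO.of_bound 1 (Eventually.of_forall fun i => by
    rw [one_mul]
    exact Complex.abs_im_le_norm _) : (fun i => (Complex.log (1 + w i) - (quot (θ i) (L i) +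
      ((1 / 2 * (x i * x i) : ℝ) : ℂ) *
        (quot (θ i) (P i * P i) - quot (θ i) (P i) ^ 2))).im) =O[l] _).trans htot
  refine him.congr' ?_ EventuallyEq.rfl
  have hre : ∀ᶠ i in l, 0 < (1 + w i).re := by
    have : Tendsto (fun i => (1 + w i).re) l (𝓝 1) := by
      have h := (Complex.continuous_re.tendsto _).comp (hw0.const_add 1)
      rw [add_zero, Complex.one_re] at h
      exact h
    exact this.eventually (lt_mem_nhds one_pos)
  filter_upwards [hre] with i hi
  have hquot : quot (θ i) (matExp (A i)) = 1 + w i := by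
    simp only [hwdef, map_sub, quot_one]
    ring
  rw [phaseShift_smul _ _ _ (hs i) (by rw [hquot]; exact hi), hquot, Complex.sub_im,
    Complex.add_im, Complex.log_im, Complex.im_ofReal_mul, Complex.sub_im,
    second_order_term _ (htr i), ← polP_eq_im]

/-! ### Uniform bounds in the parameters -/

theorem rpow_isBigO_rpow {a b : ℝ} (hab : a ≤ b) :
    (fun t : ℝ => t ^ b) =O[𝓝[>] 0] fun t : ℝ => t ^ a := by
  refine IsBigO.of_bound 1 ?_
  filter_upwards [Ioo_mem_nhdsGT (zero_lt_one (α := ℝ))] with t ht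
  rw [one_mul, Real.norm_of_nonneg (rpow_nonneg ht.1.le _),
    Real.norm_of_nonneg (rpow_nonneg ht.1.le _)]
  exact rpow_le_rpow_of_exponent_ge ht.1 ht.2.le hab

theorem norm_le_of_entries {A : Matrix (Fin 2) (Fin 2) ℝ} {c : ℝ} (h : ∀ i j, |A i j| ≤ c) :
    ‖A‖ ≤ 2 * c := by
  have hc : 0 ≤ c := (abs_nonneg _).trans (h 0 0)
  have h2c : 0 ≤ 2 * c := by positivity
  rw [Matrix.linfty_opNorm_def, ← Real.coe_toNNReal _ h2c, NNReal.coe_le_coe]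
  refine Finset.sup_le fun i _ => ?_
  rw [← NNReal.coe_le_coe, Real.coe_toNNReal _ h2c, Fin.sum_univ_two, two_mul]
  push_cast
  exact add_le_add (h i 0) (h i 1)

/-- Big-O bounds along `𝓝[>] 0 ×ˢ ⊤` are bounds for small `λ` that are uniform in the second
variable. -/
theorem exists_uniform_bound {β : Type*} {f : ℝ × β → ℝ} {a : ℝ}
    (h : f =O[(𝓝[>] (0 : ℝ)) ×ˢ (⊤ : Filter β)] fun i => i.1 ^ a) :
    ∃ C > (0 : ℝ), ∃ t₀ > (0 : ℝ), ∀ t : ℝ, 0 < t → t ≤ t₀ → ∀ b, |f (t, b)| ≤ C * t ^ a := by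
  obtain ⟨C, hC, hb⟩ := h.exists_pos
  have hmem := mem_prod_top.1 hb.bound
  obtain ⟨u, hu, hsub⟩ := mem_nhdsGT_iff_exists_Ioc_subset.1 hmem
  refine ⟨C, hC, u, hu, fun t ht htu b => ?_⟩
  have := hsub ⟨ht, htu⟩ b
  simpa [abs_of_nonneg (rpow_nonneg ht.le a)] using this

/-- The forward expansion, with the pair `(σ, θ)` bundled as `b` and the remainder `R` given as a
function of `λ` and `σ`. It also yields the inverse action when applied to `-P` and `-R`. -/
theorem expansion_aux {S : Type*} (η : ℕ → ℝ) (P : ℕ → S → Matrix (Fin 2) (Fin 2) ℝ)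
    (hηpos : ∀ k, 1 ≤ k → 0 < η k)
    (hηmono : ∀ j k, 1 ≤ j → j < k → η j < η k)
    (hPtr : ∀ k σ, (P k σ).trace = 0)
    (hPbdd : ∃ Cb : ℝ, ∀ k σ i j, |P k σ i j| ≤ Cb)
    (K : ℕ) (hK : 1 < K) (hηK : η K = 2 * η 1) (hηK1 : η (K + 1) ≤ η 1 + η 2)
    (s : S → ℝ) (hs : ∀ σ, s σ = 1 ∨ s σ = -1)
    (R : ℝ → S → Matrix (Fin 2) (Fin 2) ℝ) (Cr lamr : ℝ) (hlamr : 0 < lamr)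
    (hR : ∀ lam : ℝ, 0 < lam → lam ≤ lamr → ∀ σ i j, |R lam σ i j| ≤ Cr * lam ^ (η (K + 1))) :
    ∃ C > (0:ℝ), ∃ lam₀ > (0:ℝ), ∀ lam : ℝ, 0 < lam → lam ≤ lam₀ → ∀ b : S × ℝ,
      |phaseShift (s b.1 • matExp ((∑ k ∈ Finset.Icc 1 K, lam ^ (η k) • P k b.1) + R lam b.1)) b.2 -
          ((∑ k ∈ Finset.Icc 1 K, lam ^ (η k) * polP (P k b.1) b.2) +
            1 / 2 * lam ^ (2 * η 1) * (polP (P 1 b.1) b.2 * deriv (polP (P 1 b.1)) b.2))|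
        ≤ C * lam ^ (η (K + 1)) := by
  obtain ⟨Cb, hCb⟩ := hPbdd
  set l : Filter (ℝ × (S × ℝ)) := (𝓝[>] (0 : ℝ)) ×ˢ (⊤ : Filter (S × ℝ)) with hl
  have hfst : Tendsto Prod.fst l (𝓝[>] (0 : ℝ)) := tendsto_fst
  have hpos : ∀ᶠ i in l, 0 < i.1 := hfst.eventually self_mem_nhdsWithin
  have hle : ∀ᶠ i in l, i.1 ≤ lamr :=
    hfst.eventually (mem_nhdsWithin_of_mem_nhds (Iic_mem_nhds hlamr))
  have hpow : ∀ {a b : ℝ}, a ≤ b →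
      (fun i : ℝ × (S × ℝ) => i.1 ^ b) =O[l] fun i => i.1 ^ a := fun h =>
    (rpow_isBigO_rpow h).comp_tendsto hfst
  have hmul : ∀ a b : ℝ, (fun i : ℝ × (S × ℝ) => i.1 ^ (a + b)) =ᶠ[l]
      fun i => i.1 ^ a * i.1 ^ b := fun a b => by
    filter_upwards [hpos] with i hi using rpow_add hi a b
  have hPk : ∀ k, (fun i : ℝ × (S × ℝ) => P k i.2.1) =O[l] fun _ => (1 : ℝ) := fun k =>
    IsBigO.of_bound (2 * Cb) (Eventually.of_forall fun i => by
      simpa using norm_le_of_entries (hCb k i.2.1))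
  have h12 : η 1 < η 2 := hηmono 1 2 le_rfl one_lt_two
  have h2K : η 2 ≤ η K := by
    rcases (show 2 ≤ K from hK).eq_or_lt with h | h
    · rw [h]
    · exact (hηmono 2 K one_le_two h).le
  have key := phaseShift_isBigO (l := l) (x := fun i => i.1 ^ η 1) (y := fun i => i.1 ^ η 2)
    (e := fun i => i.1 ^ η (K + 1)) (θ := fun i => i.2.2) (s := fun i => s i.2.1)
    (P := fun i => P 1 i.2.1) (L := fun i => ∑ k ∈ Finset.Icc 1 K, i.1 ^ (η k) • P k i.2.1)
    (R := fun i => R i.1 i.2.1) (fun i => hs _) (fun i => hPtr _ _) ?_ (hpow h12.le)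
    (hpow (hηmono 2 (K + 1) one_le_two (by omega)).le)
    ((hpow (show η 2 ≤ η 1 + η 1 by linarith)).congr' (hmul _ _) EventuallyEq.rfl)
    ((hpow hηK1).congr' (hmul _ _) EventuallyEq.rfl) (hPk 1) ?_ ?_
  · have h2 := exists_uniform_bound (key.congr' (f₂ := fun i =>
      phaseShift (s i.2.1 • matExp ((∑ k ∈ Finset.Icc 1 K, i.1 ^ (η k) • P k i.2.1)
        + R i.1 i.2.1)) i.2.2 -
          ((∑ k ∈ Finset.Icc 1 K, i.1 ^ (η k) * polP (P k i.2.1) i.2.2) +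
            1 / 2 * i.1 ^ (2 * η 1) *
              (polP (P 1 i.2.1) i.2.2 * deriv (polP (P 1 i.2.1)) i.2.2))) ?_ EventuallyEq.rfl)
    · exact h2
    filter_upwards [hmul (η 1) (η 1)] with i hi
    rw [← hi, ← two_mul]
    congr 2
    simp only [polP_eq_im, map_sum, map_smul, Complex.im_sum, Complex.smul_im, smul_eq_mul]
  · have h : Tendsto (fun t : ℝ => t ^ η 1) (𝓝[>] 0) (𝓝 0) := by
      have := (Real.continuousAt_rpow_const 0 (η 1) (Or.inr (hηpos 1 le_rfl).le)).tendsto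
      rw [zero_rpow (hηpos 1 le_rfl).ne'] at this
      exact this.mono_left nhdsWithin_le_nhds
    exact h.comp hfst
  · have h : (fun i : ℝ × (S × ℝ) => ∑ k ∈ Finset.Icc 2 K, i.1 ^ (η k) • P k i.2.1)
        =O[l] fun i => i.1 ^ η 2 := by
      refine IsBigO.fun_sum fun k hk => ?_
      have h2k : η 2 ≤ η k := by
        rcases (Finset.mem_Icc.1 hk).1.eq_or_lt with h | h
        · rw [h]
        · exact (hηmono 2 k one_le_two h).le
      exact ((hpow h2k).smul (hPk k)).congr_right fun i => by rw [smul_eq_mul, mul_one]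
    refine h.congr_left fun i => ?_
    rw [← Finset.add_sum_Ioc_eq_sum_Icc hK.le, add_sub_cancel_left]
    rfl
  · refine IsBigO.of_bound (2 * Cr) ?_
    filter_upwards [hpos, hle] with i h1 h2
    rw [Real.norm_of_nonneg (rpow_nonneg h1.le _), mul_assoc]
    exact norm_le_of_entries (hR i.1 h1 h2 i.2.1)

end Auxiliary

/-- **Expansion of the projective action at an anomaly.**  Uniformly in `θ` and `σ`,
`S_{λ,σ}(θ) = θ + Σ_{k=1}^K λ^{η_k} p_{k,σ}(θ) + ½λ^{2η_1} p_{1,σ}∂_θ p_{1,σ}(θ) +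
O(λ^{η_{K+1}})`, and similarly for the inverse action with the sign of the sum
reversed; moreover for `P = [[a,b],[c,-a]]` one has
`Im(⟨v|P|e_θ⟩/⟨v|e_θ⟩) = c cos²θ - b sin²θ - a sin 2θ`. -/
theorem projective_action_expansion
    {S : Type*} [MeasurableSpace S] (μ : Measure S) [IsProbabilityMeasure μ]
    (T : ℝ → S → Matrix (Fin 2) (Fin 2) ℝ)
    (hTdet : ∀ lam σ, (T lam σ).det = 1)
    (M : Matrix (Fin 2) (Fin 2) ℝ) (hM : M.det = 1)
    (η : ℕ → ℝ) (P : ℕ → S → Matrix (Fin 2) (Fin 2) ℝ)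
    (hηpos : ∀ k, 1 ≤ k → 0 < η k)
    (hηmono : ∀ j k, 1 ≤ j → j < k → η j < η k)
    (hPtr : ∀ k σ, (P k σ).trace = 0)
    (hPmeas : ∀ k i j, Measurable fun σ => P k σ i j)
    (hPbdd : ∃ Cb : ℝ, ∀ k σ i j, |P k σ i j| ≤ Cb)
    (K : ℕ) (hK : 1 < K) (hηK : η K = 2 * η 1) (hηK1 : η (K + 1) ≤ η 1 + η 2)
    (s : S → ℝ) (hs : ∀ σ, s σ = 1 ∨ s σ = -1)
    (hexp : ∃ Cr > (0:ℝ), ∃ lamr > (0:ℝ), ∀ lam : ℝ, 0 < lam → lam ≤ lamr → ∀ σ : S,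
      ∃ R : Matrix (Fin 2) (Fin 2) ℝ,
        M * T lam σ * M⁻¹ =
          s σ • matExp ((∑ k ∈ Finset.Icc 1 K, lam ^ (η k) • P k σ) + R) ∧
        ∀ i j, |R i j| ≤ Cr * lam ^ (η (K + 1))) :
    -- expansion of the action and of the inverse action:
    (∃ C > (0:ℝ), ∃ lam₀ > (0:ℝ), ∀ lam : ℝ, 0 < lam → lam ≤ lam₀ → ∀ σ : S, ∀ θ : ℝ,
      |phaseShift (M * T lam σ * M⁻¹) θ -
          ((∑ k ∈ Finset.Icc 1 K, lam ^ (η k) * polP (P k σ) θ) +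
            1 / 2 * lam ^ (2 * η 1) * (polP (P 1 σ) θ * deriv (polP (P 1 σ)) θ))|
        ≤ C * lam ^ (η (K + 1)) ∧
      |phaseShift ((M * T lam σ * M⁻¹)⁻¹) θ -
          (-(∑ k ∈ Finset.Icc 1 K, lam ^ (η k) * polP (P k σ) θ) +
            1 / 2 * lam ^ (2 * η 1) * (polP (P 1 σ) θ * deriv (polP (P 1 σ)) θ))|
        ≤ C * lam ^ (η (K + 1))) ∧
    -- explicit form of the trigonometric polynomials:
    (∀ a b c θ : ℝ,
      polP !![a, b; c, -a] θ =
        c * Real.cos θ ^ 2 - b * Real.sin θ ^ 2 - a * Real.sin (2 * θ)) := by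
  refine ⟨?_, fun a b c θ => ?_⟩
  · obtain ⟨Cr, hCr, lamr, hlamr, h⟩ := hexp
    choose! R hR using h
    obtain ⟨C₁, hC₁, t₁, ht₁, h₁⟩ := expansion_aux η P hηpos hηmono hPtr hPbdd K hK hηK hηK1 s hs
      R Cr lamr hlamr fun lam h1 h2 σ => (hR lam h1 h2 σ).2
    obtain ⟨C₂, hC₂, t₂, ht₂, h₂⟩ := expansion_aux η (fun k σ => -P k σ) hηpos hηmono
      (fun k σ => by rw [Matrix.trace_neg, hPtr, neg_zero])
      (by simpa using hPbdd) K hK hηK hηK1 s hs (fun lam σ => -R lam σ) Cr lamr hlamr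
      fun lam h1 h2 σ => by simpa using (hR lam h1 h2 σ).2
    refine ⟨max C₁ C₂, lt_max_of_lt_left hC₁, min lamr (min t₁ t₂),
      lt_min hlamr (lt_min ht₁ ht₂), fun lam h0 hle σ θ => ?_⟩
    have hlr := hle.trans (min_le_left _ _)
    have hl₁ := hle.trans ((min_le_right _ _).trans (min_le_left _ _))
    have hl₂ := hle.trans ((min_le_right _ _).trans (min_le_right _ _))
    have hpow : 0 ≤ lam ^ η (K + 1) := rpow_nonneg h0.le _
    rw [(hR lam h0 hlr σ).1]
    refine ⟨(h₁ lam h0 hl₁ (σ, θ)).trans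
      (mul_le_mul_of_nonneg_right (le_max_left _ _) hpow), ?_⟩
    refine le_trans (le_of_eq ?_) ((h₂ lam h0 hl₂ (σ, θ)).trans
      (mul_le_mul_of_nonneg_right (le_max_right _ _) hpow))
    have hneg : ∀ A : Matrix (Fin 2) (Fin 2) ℝ, polP (-A) = -polP A := fun A => by
      funext t
      rw [polP_eq_im, map_neg, Complex.neg_im, Pi.neg_apply, polP_eq_im]
    have hinv : ∀ A : Matrix (Fin 2) (Fin 2) ℝ, (s σ • matExp A)⁻¹ = s σ • matExp (-A) := by
      intro A
      have hss : s σ * s σ = 1 := by rcases hs σ with h | h <;> rw [h] <;> norm_num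
      refine Matrix.inv_eq_right_inv ?_
      rw [smul_mul_smul_comm, hss, one_smul, matExp_mul_neg]
    have hsum : -((∑ k ∈ Finset.Icc 1 K, lam ^ η k • P k σ) + R lam σ) =
        (∑ k ∈ Finset.Icc 1 K, lam ^ η k • -P k σ) + -R lam σ := by
      simp only [smul_neg, Finset.sum_neg_distrib]
      abel
    rw [hinv, hsum]
    simp only [hneg, Pi.neg_apply, mul_neg, Finset.sum_neg_distrib, deriv.neg, neg_mul, neg_neg]
  · rw [polP_eq, Real.sin_two_mul]
    simp
    ring

end Anomaly12
end

section
/- (Appendix A: the transfer matrix at a band edge is a nontrivial Jordan block.) Let E ↦ T^E be a map from ℝ to SL(2,ℝ) which is differentiable at E = 0 (it suffices that T^E = T^0 + E·T' + o(E) entrywise with det T^E = 1 for all E near 0), and suppose Tr(T^0) = 2 and (d/dE)Tr(T^E)|_{E=0} ≠ 0. Then T^0 ≠ 𝟙; consequently, since Tr(T^0) = 2 and det(T^0) = 1, the eigenvalue 1 of T^0 has geometric multiplicity 1 and T^0 is not diagonalizable (its Jordan normal form is a nontrivial Jordan block). The analogous statement holds when Tr(T^0) = −2: then T^0 ≠ −𝟙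 and the eigenvalue −1 has geometric multiplicity 1. -/
/-!
If `T 0 = c • 1`, then differentiating `det (T E) = 1` at `0` gives `c * tr T'(0) = 0`, and
`c ≠ 0` because `c ^ 2 = det (T 0) = 1`; this contradicts `tr T'(0) ≠ 0`. Hence `T 0` is not
scalar (`ne_smul_one`). The remaining claims concern a single non-scalar `2 × 2` matrix `A` with
`det A = 1` and `tr A = 2 * c`, `c ^ 2 = 1`: its characteristic polynomial is `(X - c) ^ 2`, so
`A - c` is singular but nonzero, which makes the eigenspace a line, and any diagonal matrix
similar to `A` would have both diagonal entries equal to `c`, forcing `A = c • 1`.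
-/

open Matrix

namespace JordanBlock

/-- By Jacobi's formula at a scalar matrix, a curve of determinant `1` passing through `c • 1`
has traceless velocity there. -/
lemma ne_smul_one
    (T : ℝ → Matrix (Fin 2) (Fin 2) ℝ)
    (hdiff : ∀ i j, DifferentiableAt ℝ (fun E => T E i j) 0)
    (hdet : ∀ᶠ E in nhds (0:ℝ), (T E).det = 1)
    (hderiv : deriv (fun E => (T E).trace) 0 ≠ 0) (c : ℝ) :
    T 0 ≠ c • (1 : Matrix (Fin 2) (Fin 2) ℝ) := by
  intro h
  have h00 : T 0 0 0 = c := by simp [h]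
  have h01 : T 0 0 1 = 0 := by simp [h]
  have h10 : T 0 1 0 = 0 := by simp [h]
  have h11 : T 0 1 1 = c := by simp [h]
  have hd0 := hdet.self_of_nhds
  rw [det_fin_two, h00, h01, h10, h11] at hd0
  have hD := (((hdiff 0 0).hasDerivAt.mul (hdiff 1 1).hasDerivAt).sub
    ((hdiff 0 1).hasDerivAt.mul (hdiff 1 0).hasDerivAt))
  have hconst : HasDerivAt (fun E => T E 0 0 * T E 1 1 - T E 0 1 * T E 1 0) 0 0 := by
    refine (hasDerivAt_const (0 : ℝ) (1 : ℝ)).congr_of_eventuallyEq ?_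
    filter_upwards [hdet] with E hE
    rw [← hE, det_fin_two]
  have key := hD.unique hconst
  rw [h00, h01, h10, h11] at key
  have htr : deriv (fun E => (T E).trace) 0
      = deriv (fun E => T E 0 0) 0 + deriv (fun E => T E 1 1) 0 := by
    simp only [trace_fin_two]
    exact ((hdiff 0 0).hasDerivAt.add (hdiff 1 1).hasDerivAt).deriv
  have hc : c ≠ 0 := by
    rintro rfl
    simp at hd0
  apply hderiv
  rw [htr]
  apply mul_left_cancel₀ hc
  linarith

lemma finrank_eigenspace_eq_one (A : Matrix (Fin 2) (Fin 2) ℝ) (c : ℝ)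
    (hdet : A.det = 1) (htr : A.trace = 2 * c) (hc : c ^ 2 = 1)
    (hA : A ≠ c • (1 : Matrix (Fin 2) (Fin 2) ℝ)) :
    Module.finrank ℝ ↥(Module.End.eigenspace (Matrix.toLin' A) c) = 1 := by
  set V := Module.End.eigenspace (Matrix.toLin' A) c with hV
  have hle : Module.finrank ℝ V ≤ 2 := by
    simpa using V.finrank_le
  have hne2 : Module.finrank ℝ V ≠ 2 := by
    intro h2
    have htop : V = ⊤ := Submodule.eq_top_of_finrank_eq (by simpa using h2)
    apply hA
    apply Matrix.toLin'.injective
    ext1 i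
    ext1
    have hmem : Pi.single i (1 : ℝ) ∈ V := htop ▸ Submodule.mem_top
    have := Module.End.mem_eigenspace_iff.1 hmem
    simpa using this
  have hne0 : Module.finrank ℝ V ≠ 0 := by
    intro h0
    have hbot : V = ⊥ := Submodule.finrank_eq_zero.1 h0
    have hN : (A - c • (1 : Matrix (Fin 2) (Fin 2) ℝ)).det = 0 := by
      rw [det_fin_two] at hdet ⊢
      rw [trace_fin_two] at htr
      simp
      linear_combination hdet - c * htr - hc
    obtain ⟨v, hv0, hv⟩ := Matrix.exists_mulVec_eq_zero_iff.2 hN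
    have hmem : v ∈ V := by
      rw [hV, Module.End.mem_eigenspace_iff, Matrix.toLin'_apply]
      rw [Matrix.sub_mulVec, Matrix.smul_mulVec, Matrix.one_mulVec] at hv
      exact sub_eq_zero.1 hv
    rw [hbot] at hmem
    exact hv0 (by simpa using hmem)
  omega

lemma not_diagonalizable (A : Matrix (Fin 2) (Fin 2) ℝ) (c : ℝ)
    (hdet : A.det = 1) (htr : A.trace = 2 * c) (hc : c ^ 2 = 1)
    (hA : A ≠ c • (1 : Matrix (Fin 2) (Fin 2) ℝ)) :
    ¬ ∃ P : Matrix (Fin 2) (Fin 2) ℝ, IsUnit P.det ∧ (P⁻¹ * A * P).IsDiag := by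
  rintro ⟨P, hP, hD⟩
  have hPP : P * P⁻¹ = 1 := Matrix.mul_nonsing_inv P hP
  have hconj : P * (P⁻¹ * A * P) * P⁻¹ = A := by
    calc P * (P⁻¹ * A * P) * P⁻¹ = (P * P⁻¹) * A * (P * P⁻¹) := by simp only [Matrix.mul_assoc]
      _ = A := by rw [hPP]; simp
  have htrD : (P⁻¹ * A * P).trace = 2 * c := by
    rw [Matrix.trace_mul_comm, ← Matrix.mul_assoc, hPP, Matrix.one_mul, htr]
  have hdetD : (P⁻¹ * A * P).det = 1 := by
    have h1 : P.det * (P⁻¹).det = 1 := by rw [← det_mul, hPP, det_one]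
    rw [det_mul, det_mul, hdet]
    linarith
  generalize P⁻¹ * A * P = D at hD hconj htrD hdetD
  have h01 : D 0 1 = 0 := hD (by decide)
  have h10 : D 1 0 = 0 := hD (by decide)
  rw [det_fin_two, h01, h10] at hdetD
  rw [trace_fin_two] at htrD
  -- `D 0 0` is a root of `X ^ 2 - 2 * c * X + 1 = (X - c) ^ 2`.
  have h00 : D 0 0 = c := by
    have : (D 0 0 - c) ^ 2 = 0 := by linear_combination D 0 0 * htrD - hdetD + hc
    exact sub_eq_zero.1 (pow_eq_zero_iff two_ne_zero |>.1 this)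
  have h11 : D 1 1 = c := by linarith
  have hDc : D = c • (1 : Matrix (Fin 2) (Fin 2) ℝ) := by
    ext i j
    fin_cases i <;> fin_cases j <;> simp [h00, h01, h10, h11]
  apply hA
  rw [← hconj, hDc, Matrix.mul_smul, Matrix.smul_mul, Matrix.mul_one, hPP]

/-- **Appendix A.**  Let `E ↦ T^E ∈ SL(2,ℝ)` be differentiable (entrywise) at `E = 0`
with `Tr(T⁰) = ±2` and `∂_E Tr(T^E)|₀ ≠ 0`.  Then `T⁰ ≠ ±𝟙`, the eigenvalue
`Tr(T⁰)/2 = ±1` of `T⁰` has geometric multiplicity `1`, and `T⁰` is not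
diagonalizable. -/
theorem transfer_matrix_band_edge_jordan
    (T : ℝ → Matrix (Fin 2) (Fin 2) ℝ)
    (hdiff : ∀ i j, DifferentiableAt ℝ (fun E => T E i j) 0)
    (hdet : ∀ᶠ E in nhds (0:ℝ), (T E).det = 1)
    (htr : (T 0).trace = 2 ∨ (T 0).trace = -2)
    (hderiv : deriv (fun E => (T E).trace) 0 ≠ 0) :
    T 0 ≠ 1 ∧ T 0 ≠ -1 ∧
    Module.finrank ℝ
      ↥(Module.End.eigenspace (Matrix.toLin' (T 0)) ((T 0).trace / 2)) = 1 ∧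
    ¬ ∃ Pm : Matrix (Fin 2) (Fin 2) ℝ, IsUnit Pm.det ∧ (Pm⁻¹ * T 0 * Pm).IsDiag := by
  have hns := ne_smul_one T hdiff hdet hderiv
  have hd0 : (T 0).det = 1 := hdet.self_of_nhds
  have htr' : (T 0).trace = 2 * ((T 0).trace / 2) := by ring
  have hc : ((T 0).trace / 2) ^ 2 = 1 := by
    rcases htr with h | h <;> rw [h] <;> norm_num
  exact ⟨by simpa using hns 1, by simpa using hns (-1),
    finrank_eigenspace_eq_one _ _ hd0 htr' hc (hns _),
    not_diagonalizable _ _ hd0 htr' hc (hns _)⟩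

end JordanBlock
end

section
/- (Appendix B, nonexistence.) Consider the ODE p y′ + q y = r on U = (a,b), where p, q, r ∈ C^m(U), p has a zero of order l_p at x̂ ∈ U, q has a zero of order l_q at x̂ (with l_p, l_q < m), p and q have no other zeros in U, and r has a zero of order l_r at x̂. If l_r < min{l_p, l_q}, then there is no solution y ∈ C¹(U) of p y′ + q y = r on U. -/
/- Statement 14 (Appendix B, nonexistence): if in the singular ODE p y' + q y = r the
inhomogeneity r vanishes at xh to strictly lower order than both p and q, then there
is no C¹ solution on U = (a,b). -/

/-!
Put `n = l_r`. Taylor's formula of order `n` at `xh` gives `g x = c (x - xh)^n + o((x - xh)^n)`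
with `c = g⁽ⁿ⁾(xh) / n!` as soon as the derivatives of `g` of order below `n` vanish at `xh`
(`isLittleO_of_vanishing`). Since `n < l_p` and `n < l_q`, this makes `p` and `q` both
`o((x - xh)^n)`. If `y` is a `C¹` solution, then `y` and `y'` are bounded near `xh`, so
`r = p y' + q y` is `o((x - xh)^n)` too, which forces `r⁽ⁿ⁾(xh) = 0`, contradicting that the
zero of `r` has order exactly `n`.
-/

open Set

namespace SingularODE14

/-- `g` has a zero of order `l` at `xh`: the first `l-1` derivatives vanish at `xh` and
the `l`-th does not (order `0` meaning `g xh ≠ 0`). -/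
def HasZeroOfOrder (g : ℝ → ℝ) (xh : ℝ) (l : ℕ) : Prop :=
  (∀ k < l, iteratedDeriv k g xh = 0) ∧ iteratedDeriv l g xh ≠ 0

open Filter Topology Asymptotics

/-- Taylor's formula of order `n` for a function whose derivatives of order below `n` vanish:
only the leading term survives. -/
theorem isLittleO_of_vanishing {a b xh : ℝ} (hx : xh ∈ Ioo a b) {g : ℝ → ℝ} {n : ℕ}
    (hg : ContDiffOn ℝ n g (Ioo a b)) (h0 : ∀ k < n, iteratedDeriv k g xh = 0) :
    (fun x => g x - (n.factorial : ℝ)⁻¹ * iteratedDeriv n g xh * (x - xh) ^ n)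
      =o[𝓝 xh] fun x => (x - xh) ^ n := by
  have h := taylor_isLittleO (convex_Ioo a b) hx hg
  rw [isOpen_Ioo.nhdsWithin_eq hx] at h
  refine h.congr_left fun x => ?_
  rw [taylor_within_apply, Finset.sum_range_succ, Finset.sum_eq_zero]
  · rw [iteratedDerivWithin_of_isOpen isOpen_Ioo hx, smul_eq_mul]
    ring
  · intro k hk
    rw [iteratedDerivWithin_of_isOpen isOpen_Ioo hx, h0 k (Finset.mem_range.1 hk), smul_zero]

/-- **Appendix B, nonexistence.**  If `p, q, r ∈ C^m((a,b))` have zeros of orders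
`l_p, l_q, l_r` at `xh ∈ (a,b)`, `p` and `q` have no further zeros, and
`l_r < min{l_p, l_q}`, then `p y' + q y = r` has no solution `y ∈ C¹((a,b))`. -/
theorem no_solution
    (a b xh : ℝ) (hx : xh ∈ Ioo a b) (m : ℕ∞)
    (p q r : ℝ → ℝ) (lp lq lr : ℕ)
    (hpC : ContDiffOn ℝ m p (Ioo a b))
    (hqC : ContDiffOn ℝ m q (Ioo a b))
    (hrC : ContDiffOn ℝ m r (Ioo a b))
    (hlpm : (lp : ℕ∞) < m) (hlqm : (lq : ℕ∞) < m)
    (hzp : HasZeroOfOrder p xh lp)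
    (hzq : HasZeroOfOrder q xh lq)
    (hzr : HasZeroOfOrder r xh lr)
    (hnop : ∀ x ∈ Ioo a b, x ≠ xh → p x ≠ 0)
    (hnoq : ∀ x ∈ Ioo a b, x ≠ xh → q x ≠ 0)
    (hlt : lr < min lp lq) :
    ¬ ∃ y : ℝ → ℝ, ContDiffOn ℝ 1 y (Ioo a b) ∧
        ∀ x ∈ Ioo a b, p x * deriv y x + q x * y x = r x := by
  rintro ⟨y, hy, hode⟩
  have hlrp : lr < lp := hlt.trans_le (min_le_left _ _)
  have hlrq : lr < lq := hlt.trans_le (min_le_right _ _)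
  have hle : ((lr : ℕ∞) : WithTop ℕ∞) ≤ (m : WithTop ℕ∞) := by
    have : (lr : ℕ∞) ≤ m := (Nat.cast_le.2 hlrp.le).trans hlpm.le
    exact_mod_cast this
  have hU : Ioo a b ∈ 𝓝 xh := isOpen_Ioo.mem_nhds hx
  have hp : p =o[𝓝 xh] fun x => (x - xh) ^ lr := by
    simpa [hzp.1 lr hlrp] using
      isLittleO_of_vanishing hx (hpC.of_le hle) fun k hk => hzp.1 k (hk.trans hlrp)
  have hq : q =o[𝓝 xh] fun x => (x - xh) ^ lr := by
    simpa [hzq.1 lr hlrq] using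
      isLittleO_of_vanishing hx (hqC.of_le hle) fun k hk => hzq.1 k (hk.trans hlrq)
  have hr := isLittleO_of_vanishing hx (hrC.of_le hle) hzr.1
  have hyO : y =O[𝓝 xh] fun _ => (1 : ℝ) :=
    (hy.continuousOn.continuousAt hU).isBigO_one ℝ
  have hyO' : deriv y =O[𝓝 xh] fun _ => (1 : ℝ) :=
    ((hy.continuousOn_deriv_of_isOpen isOpen_Ioo le_rfl).continuousAt hU).isBigO_one ℝ
  have hr' : r =o[𝓝 xh] fun x => (x - xh) ^ lr := by
    have h1 := (hp.mul_isBigO hyO').add (hq.mul_isBigO hyO)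
    simp only [mul_one] at h1
    exact h1.congr' (eventually_of_mem hU hode) EventuallyEq.rfl
  -- The leading term of `r` is then negligible against `(x - xh) ^ lr`, so its coefficient is 0.
  have hc := hr'.sub hr
  simp only [sub_sub_cancel] at hc
  have hc0 : (lr.factorial : ℝ)⁻¹ * iteratedDeriv lr r xh ≠ 0 :=
    mul_ne_zero (inv_ne_zero (Nat.cast_ne_zero.2 lr.factorial_ne_zero)) hzr.2
  rw [isLittleO_const_mul_left_iff hc0] at hc
  -- `(x - xh) ^ lr` does not vanish off `xh`, hence is not negligible against itself.
  refine isLittleO_irrefl ?_ hc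
  have hne : ∃ᶠ x in 𝓝 xh, x ≠ xh :=
    (eventually_mem_nhdsWithin (s := {xh}ᶜ)).frequently.filter_mono nhdsWithin_le_nhds
  exact hne.mono fun x hxx => pow_ne_zero _ (sub_ne_zero.2 hxx)

end SingularODE14
end

section
/- (Appendix B, boundary condition at the singular point.) Consider the ODE p y′ + q y = r on U = (a,b), where p, q, r ∈ C^m(U), p has a zero of order l_p at x̂ ∈ U and q a zero of order l_q at x̂ with l_q < l_p and l_q ≤ l_r (l_r being the order of the zero of r at x̂), and p, q have no other zeros in U. Then the limit lim_{x→x̂} r(x)/q(x) exists (it equals r^{(l_q)}(x̂)/q^{(l_q)}(x̂), and equals 0 when l_r > l_q), and every solution y ∈ C¹(U) of p y′ + q y = r satisfies y(x̂) = lim_{x→x̂} r(x)/q(x). -/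
/-!
By Taylor's theorem with Peano remainder, a function whose derivatives of order `< n` vanish at
`xh` satisfies `g x / (x - xh) ^ n → g⁽ⁿ⁾(xh) / n!` (`tendsto_div_pow`). Dividing two such limits
with `n = lq` shows that `f / q → f^{(lq)}(xh) / q^{(lq)}(xh)` for every `f` vanishing to order at
least `lq` (`tendsto_div`). For `f = r` this is the asserted limit; for `f = p` the limit is `0`
because `lq < lp`. Away from `xh` the equation reads `y = r / q - (p / q) * y'`, and `y'` is
continuous at `xh`, so letting `x → xh` gives the value of `y xh`.
-/

/- Statement 15 (Appendix B, boundary condition at the singular point): in the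
singular case l_q < l_p, l_q ≤ l_r, the limit of r/q at x̂ exists and every C¹
solution y of p y' + q y = r satisfies y(x̂) = lim_{x→x̂} r(x)/q(x). -/

open Set Filter

namespace SingularODE15

/-- `g` has a zero of order `l` at `xh`. -/
def HasZeroOfOrder (g : ℝ → ℝ) (xh : ℝ) (l : ℕ) : Prop :=
  (∀ k < l, iteratedDeriv k g xh = 0) ∧ iteratedDeriv l g xh ≠ 0

open scoped Nat in
theorem tendsto_div_pow {a b xh : ℝ} (hx : xh ∈ Ioo a b) {n : ℕ} {g : ℝ → ℝ}
    (hg : ContDiffOn ℝ n g (Ioo a b)) (h0 : ∀ k < n, iteratedDeriv k g xh = 0) :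
    Tendsto (fun x => g x / (x - xh) ^ n) (nhdsWithin xh (Ioo a b \ {xh}))
      (nhds (iteratedDeriv n g xh / n !)) := by
  have hT := (Real.taylor_tendsto (convex_Ioo a b) hx hg).mono_left
    (nhdsWithin_mono xh (sdiff_subset (t := {xh})))
  have hE : ∀ x, taylorWithinEval g n (Ioo a b) xh x
      = (x - xh) ^ n * (iteratedDeriv n g xh / n !) := by
    intro x
    rw [taylor_within_apply, Finset.sum_range_succ, Finset.sum_eq_zero, zero_add,
      iteratedDerivWithin_of_isOpen isOpen_Ioo hx, smul_eq_mul]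
    · ring
    · intro k hk
      rw [iteratedDerivWithin_of_isOpen isOpen_Ioo hx, h0 k (Finset.mem_range.mp hk), smul_zero]
  have hS := hT.add_const (iteratedDeriv n g xh / n !)
  rw [zero_add] at hS
  refine hS.congr' ?_
  filter_upwards [self_mem_nhdsWithin] with x hxm
  have hne : (x - xh) ^ n ≠ 0 := pow_ne_zero _ (sub_ne_zero.mpr hxm.2)
  rw [hE, sub_div, mul_div_cancel_left₀ _ hne, sub_add_cancel]

/-- L'Hôpital's rule of order `n`, obtained from the Taylor expansions. -/
theorem tendsto_div {a b xh : ℝ} (hx : xh ∈ Ioo a b) {n : ℕ} {f g : ℝ → ℝ}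
    (hf : ContDiffOn ℝ n f (Ioo a b)) (hg : ContDiffOn ℝ n g (Ioo a b))
    (hf0 : ∀ k < n, iteratedDeriv k f xh = 0) (hg0 : HasZeroOfOrder g xh n) :
    Tendsto (fun x => f x / g x) (nhdsWithin xh (Ioo a b \ {xh}))
      (nhds (iteratedDeriv n f xh / iteratedDeriv n g xh)) := by
  have hn : (n.factorial : ℝ) ≠ 0 := Nat.cast_ne_zero.mpr n.factorial_ne_zero
  have hQ := (tendsto_div_pow hx hf hf0).div (tendsto_div_pow hx hg hg0.1)
    (div_ne_zero hg0.2 hn)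
  rw [div_div_div_cancel_right₀ hn] at hQ
  refine hQ.congr' ?_
  filter_upwards [self_mem_nhdsWithin] with x hxm
  exact div_div_div_cancel_right₀ (pow_ne_zero _ (sub_ne_zero.mpr hxm.2)) _ _

/-- **Appendix B, boundary condition.**  If `p` has a zero of order `l_p` at `xh` and
`q` a zero of order `l_q < l_p` with `l_q ≤ l_r`, then `r/q` converges at `xh` to
`r^{(l_q)}(xh)/q^{(l_q)}(xh)` (which is `0` when `l_q < l_r`), and every `C¹` solution
of `p y' + q y = r` on `(a,b)` takes this value at `xh`. -/
theorem boundary_condition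
    (a b xh : ℝ) (hx : xh ∈ Ioo a b) (m : ℕ∞)
    (p q r : ℝ → ℝ) (lp lq lr : ℕ)
    (hpC : ContDiffOn ℝ m p (Ioo a b))
    (hqC : ContDiffOn ℝ m q (Ioo a b))
    (hrC : ContDiffOn ℝ m r (Ioo a b))
    (hlpm : (lp : ℕ∞) < m) (hlqm : (lq : ℕ∞) < m)
    (hzp : HasZeroOfOrder p xh lp)
    (hzq : HasZeroOfOrder q xh lq)
    (hzr : HasZeroOfOrder r xh lr)
    (hnop : ∀ x ∈ Ioo a b, x ≠ xh → p x ≠ 0)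
    (hnoq : ∀ x ∈ Ioo a b, x ≠ xh → q x ≠ 0)
    (hqp : lq < lp) (hqr : lq ≤ lr) :
    Tendsto (fun x => r x / q x) (nhdsWithin xh (Ioo a b \ {xh}))
      (nhds (iteratedDeriv lq r xh / iteratedDeriv lq q xh)) ∧
    (lq < lr → iteratedDeriv lq r xh / iteratedDeriv lq q xh = 0) ∧
    ∀ y : ℝ → ℝ, ContDiffOn ℝ 1 y (Ioo a b) →
      (∀ x ∈ Ioo a b, p x * deriv y x + q x * y x = r x) →
      y xh = iteratedDeriv lq r xh / iteratedDeriv lq q xh := by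
  have hle : ((lq : ℕ) : WithTop ℕ∞) ≤ (m : WithTop ℕ∞) := by exact_mod_cast hlqm.le
  have hR := tendsto_div hx (hrC.of_le hle) (hqC.of_le hle)
    (fun k hk => hzr.1 k (hk.trans_le hqr)) hzq
  have hP := tendsto_div hx (hpC.of_le hle) (hqC.of_le hle)
    (fun k hk => hzp.1 k (hk.trans hqp)) hzq
  rw [hzp.1 lq hqp, zero_div] at hP
  refine ⟨hR, fun h => by rw [hzr.1 lq h, zero_div], fun y hy hode => ?_⟩
  have hnhds : Ioo a b ∈ nhds xh := isOpen_Ioo.mem_nhds hx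
  have hY : Tendsto y (nhdsWithin xh (Ioo a b \ {xh})) (nhds (y xh)) :=
    (hy.continuousOn.continuousAt hnhds).tendsto.mono_left nhdsWithin_le_nhds
  have hY' : Tendsto (deriv y) (nhdsWithin xh (Ioo a b \ {xh})) (nhds (deriv y xh)) :=
    ((hy.continuousOn_deriv_of_isOpen isOpen_Ioo le_rfl).continuousAt hnhds).tendsto.mono_left
      nhdsWithin_le_nhds
  have hL := hR.sub (hP.mul hY')
  rw [zero_mul, sub_zero] at hL
  have hbot : (nhdsWithin xh (Ioo a b \ {xh})).NeBot := by
    rw [sdiff_eq, nhdsWithin_inter_of_mem (mem_nhdsWithin_of_mem_nhds hnhds)]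
    infer_instance
  refine tendsto_nhds_unique hY (hL.congr' ?_)
  filter_upwards [self_mem_nhdsWithin] with x hxm
  have hq := hnoq x hxm.1 hxm.2
  have := hode x hxm.1
  field_simp
  linarith

end SingularODE15
end
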